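/- arXiv:1110.4622 — 8 statements merged into one kernel-verified Lean document; each statement's English description precedes it below -/
import Mathlib

section
/- The Neumann kernel is a probability kernel on the interval: for every u ∈ [-1,1], ∫_{-1}^{1} J^neum(u,v) dv = 1. -/
open MeasureTheory Set

noncomputable section

/-- The Neumann (reflected) Kac kernel:
`J^neum(u,v) = j(v-u) + j(2-v-u) + j(-2-v-u)`. -/
def Jneum (j : ℝ → ℝ) (u v : ℝ) : ℝ := j (v - u) + j (2 - v - u) + j (-2 - v - u)

/-- the Neumann kernel is a probability kernel on `[-1,1]`:
for every `u ∈ [-1,1]`, `∫_{-1}^{1} J^neum(u,v) dv = 1`. -/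
theorem jneum_prob_kernel
    (j : ℝ → ℝ)
    (hj_smooth : ContDiff ℝ 1 j)
    (hj_nonneg : ∀ u, 0 ≤ j u)
    (hj_even : ∀ u, j (-u) = j u)
    (hj_supp : ∀ u : ℝ, 1 < |u| → j u = 0)
    (hj_int : (∫ u : ℝ, j u) = 1) :
    ∀ u ∈ Icc (-1:ℝ) 1, (∫ v in (-1:ℝ)..1, Jneum j u v) = 1 := by
  intro u hu
  obtain ⟨h1, h2⟩ := hu
  have hc : Continuous j := hj_smooth.continuous
  have hi : ∀ a b : ℝ, IntervalIntegrable j volume a b := fun a b => hc.intervalIntegrable a b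
  have e1 : (∫ v in (-1:ℝ)..1, j (v - u)) = ∫ x in (-1 - u)..(1 - u), j x :=
    intervalIntegral.integral_comp_sub_right j u
  have e2 : (∫ v in (-1:ℝ)..1, j (2 - v - u)) = ∫ x in (1 - u)..(3 - u), j x := by
    have h := intervalIntegral.integral_comp_sub_left (a := (-1:ℝ)) (b := 1) j (2 - u)
    rw [show (2 - u - 1 : ℝ) = 1 - u by ring, show (2 - u - -1 : ℝ) = 3 - u by ring] at h
    rw [← h]
    congr 1
    funext v
    congr 1
    ring
  have e3 : (∫ v in (-1:ℝ)..1, j (-2 - v - u)) = ∫ x in (-3 - u)..(-1 - u), j x := by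
    have h := intervalIntegral.integral_comp_sub_left (a := (-1:ℝ)) (b := 1) j (-2 - u)
    rw [show (-2 - u - 1 : ℝ) = -3 - u by ring, show (-2 - u - -1 : ℝ) = -1 - u by ring] at h
    rw [← h]
    congr 1
    funext v
    congr 1
    ring
  have e4 : (∫ x in (-3 - u)..(3 - u), j x) = ∫ x, j x := by
    apply intervalIntegral.integral_eq_integral_of_support_subset
    intro x hx
    have hx1 : |x| ≤ 1 := by
      by_contra hcon
      exact hx (hj_supp x (not_le.mp hcon))
    have := abs_le.mp hx1
    constructor <;> linarith [this.1, this.2]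
  unfold Jneum
  rw [intervalIntegral.integral_add, intervalIntegral.integral_add, e1, e2, e3, ← hj_int, ← e4,
    intervalIntegral.integral_add_adjacent_intervals (hi _ _) (hi _ _), add_comm,
    intervalIntegral.integral_add_adjacent_intervals (hi _ _) (hi _ _)]
  all_goals
    apply Continuous.intervalIntegrable
    fun_prop

end
end

section
/- For every continuously differentiable function G : [-1,1] → ℝ and every u ∈ (-1,1), the function u ↦ ∫_{-1}^{1} J^neum(u,v) G(v) dv is differentiable at u and |d/du ∫_{-1}^{1} J^neum(u,v) G(v) dv| ≤ ∫_{-1}^{1} J^neum(u,v) |G'(v)| dv. -/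
open MeasureTheory Set

noncomputable section

/-- for every `C¹` function `G` and every `u ∈ (-1,1)`, the map
`u ↦ ∫_{-1}^{1} J^neum(u,v) G(v) dv` is differentiable at `u` and its derivative
is bounded in absolute value by `∫_{-1}^{1} J^neum(u,v) |G'(v)| dv`. -/
theorem jneum_conv_deriv_bound
    (j : ℝ → ℝ)
    (hj_smooth : ContDiff ℝ 1 j)
    (hj_nonneg : ∀ u, 0 ≤ j u)
    (hj_even : ∀ u, j (-u) = j u)
    (hj_supp : ∀ u : ℝ, 1 < |u| → j u = 0)
    (hj_int : (∫ u : ℝ, j u) = 1)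
    (G : ℝ → ℝ) (hG : ContDiff ℝ 1 G) :
    ∀ u ∈ Ioo (-1:ℝ) 1,
      DifferentiableAt ℝ (fun w => ∫ v in (-1:ℝ)..1, Jneum j w v * G v) u ∧
      |deriv (fun w => ∫ v in (-1:ℝ)..1, Jneum j w v * G v) u| ≤
        ∫ v in (-1:ℝ)..1, Jneum j u v * |deriv G v| := by
  intro u hu
  have hjc : Continuous j := hj_smooth.continuous
  have hGc : Continuous G := hG.continuous
  have hj'c : Continuous (deriv j) := hj_smooth.continuous_deriv le_rfl
  have hG'c : Continuous (deriv G) := hG.continuous_deriv le_rfl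
  have hjd : ∀ x, HasDerivAt j (deriv j x) x := fun x =>
    (hj_smooth.differentiable one_ne_zero x).hasDerivAt
  have hGd : ∀ x, HasDerivAt G (deriv G x) x := fun x =>
    (hG.differentiable one_ne_zero x).hasDerivAt
  have hcs : HasCompactSupport j := by
    refine HasCompactSupport.intro (isCompact_Icc (a := (-1:ℝ)) (b := 1)) ?_
    intro x hx
    apply hj_supp
    by_contra h
    exact hx (abs_le.mp (not_lt.mp h))
  obtain ⟨C, hC⟩ := hcs.deriv.exists_bound_of_continuous hj'c
  have key : HasDerivAt (fun w => ∫ v in (-1:ℝ)..1, Jneum j w v * G v)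
      (∫ v in (-1:ℝ)..1,
        (-deriv j (v - u) - deriv j (2 - v - u) - deriv j (-2 - v - u)) * G v) u := by
    refine (intervalIntegral.hasDerivAt_integral_of_dominated_loc_of_deriv_le
      (F := fun w v => Jneum j w v * G v)
      (F' := fun w v => (-deriv j (v - w) - deriv j (2 - v - w) - deriv j (-2 - v - w)) * G v)
      (bound := fun v => (C + C + C) * |G v|) Filter.univ_mem ?_ ?_ ?_ ?_ ?_ ?_).2
    · refine Filter.Eventually.of_forall fun w => Continuous.aestronglyMeasurable ?_
      unfold Jneum; fun_prop
    · apply Continuous.intervalIntegrable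
      unfold Jneum; fun_prop
    · apply Continuous.aestronglyMeasurable
      fun_prop
    · refine Filter.Eventually.of_forall fun v _ w _ => ?_
      rw [norm_mul, Real.norm_eq_abs (G v)]
      gcongr
      have h1 := hC (v - w)
      have h2 := hC (2 - v - w)
      have h3 := hC (-2 - v - w)
      rw [Real.norm_eq_abs, abs_le] at *
      constructor <;> linarith
    · apply Continuous.intervalIntegrable
      fun_prop
    · refine Filter.Eventually.of_forall fun v _ w _ => ?_
      have e : ∀ c : ℝ, HasDerivAt (fun w => j (c - w)) (-deriv j (c - w)) w := fun c => by
        simpa [Function.comp_def] using (hjd (c - w)).comp w ((hasDerivAt_id w).const_sub c)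
      have := (((e v).add (e (2 - v))).add (e (-2 - v))).mul_const (G v)
      simpa [Jneum, sub_eq_add_neg] using this
  refine ⟨key.differentiableAt, ?_⟩
  rw [key.deriv]
  set K : ℝ → ℝ := fun v => -j (v - u) + j (2 - v - u) + j (-2 - v - u) with hK
  have hKd : ∀ v, HasDerivAt K
      (-deriv j (v - u) - deriv j (2 - v - u) - deriv j (-2 - v - u)) v := by
    intro v
    have e : ∀ c : ℝ, HasDerivAt (fun v => j (c - v - u)) (-deriv j (c - v - u)) v := fun c => by
      simpa [Function.comp_def] using (hjd (c - v - u)).comp v (((hasDerivAt_id v).const_sub c).sub_const u)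
    have e0 : HasDerivAt (fun v => j (v - u)) (deriv j (v - u)) v := by
      simpa [Function.comp_def] using (hjd (v - u)).comp v ((hasDerivAt_id v).sub_const u)
    have := ((e0.neg).add (e 2)).add (e (-2))
    refine HasDerivAt.congr_deriv (f := K) this ?_
    ring
  have hKc : Continuous K := by rw [hK]; fun_prop
  have hJc : Continuous (fun v => Jneum j u v) := by unfold Jneum; fun_prop
  have hparts := intervalIntegral.integral_mul_deriv_eq_deriv_mul (a := -1) (b := 1)
    (u := K) (v := G) (fun x _ => hKd x) (fun x _ => hGd x)
    (Continuous.intervalIntegrable (by fun_prop) _ _)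
    (Continuous.intervalIntegrable (by fun_prop) _ _)
  have hK1 : K 1 = 0 := by
    have h : j (-2 - 1 - u) = 0 := hj_supp _ (by
      rw [lt_abs]; right; linarith [hu.1])
    simp only [hK, h]
    rw [show (2:ℝ) - 1 - u = 1 - u by ring]; ring
  have hK2 : K (-1) = 0 := by
    have h : j (2 - -1 - u) = 0 := hj_supp _ (by
      rw [lt_abs]; left; linarith [hu.2])
    simp only [hK, h]
    rw [show (-2:ℝ) - -1 - u = -1 - u by ring]; ring
  rw [hK1, hK2] at hparts
  have hI : (∫ v in (-1:ℝ)..1,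
        (-deriv j (v - u) - deriv j (2 - v - u) - deriv j (-2 - v - u)) * G v)
      = -∫ v in (-1:ℝ)..1, K v * deriv G v := by
    rw [hparts]; ring
  rw [hI, abs_neg]
  refine (intervalIntegral.abs_integral_le_integral_abs (by norm_num)).trans ?_
  refine intervalIntegral.integral_mono_on (by norm_num)
    (Continuous.intervalIntegrable (by fun_prop) _ _)
    (Continuous.intervalIntegrable (by fun_prop) _ _) ?_
  intro v _
  rw [abs_mul]
  gcongr
  have h1 := hj_nonneg (v - u)
  have h2 := hj_nonneg (2 - v - u)
  have h3 := hj_nonneg (-2 - v - u)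
  simp only [hK, Jneum]
  rw [abs_le]
  constructor <;> linarith

end
end

section
/- Let θ : [-1,1] → (0,1) be a C^1 function with θ(-1) = ρ_- and θ(1) = ρ_+. Then there exists a constant C_0 > 0, depending only on θ, β and j, such that for every integer N ≥ 1, every a > 0 and every f : S_N → ℝ, ∫ f(η) (L_{β,N} f)(η) dν_N^θ(η) ≤ -(1 - a) D_{0,N}(f, ν_N^θ) + (C_0 / (a N)) ‖f‖²_{L²(ν_N^θ)}. -/
open MeasureTheory Set

noncomputable section

/-- The sites of the finite lattice `Λ_N = {-N, …, N}`. -/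
abbrev Site (N : ℕ) := {x : ℤ // x ∈ Finset.Icc (-(N:ℤ)) (N:ℤ)}

/-- The configuration space `S_N = {0,1}^{Λ_N}`. -/
abbrev Conf (N : ℕ) := Site N → Bool

/-- Occupation number of a site, as a real number. -/
def val (b : Bool) : ℝ := if b then 1 else 0

/-- The value of the configuration `η` at the integer site `x` (false outside `Λ_N`). -/
def getC (N : ℕ) (η : Conf N) (x : ℤ) : Bool :=
  if h : x ∈ Finset.Icc (-(N:ℤ)) (N:ℤ) then η ⟨x, h⟩ else false

/-- The configuration obtained from `η` by exchanging the values at `x` and `y`. -/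
def exchC (N : ℕ) (η : Conf N) (x y : ℤ) : Conf N :=
  fun z => if (z:ℤ) = x then getC N η y else if (z:ℤ) = y then getC N η x else η z

/-- The Hamiltonian `H_N(η) = -(1/2) Σ_{x,y ∈ Λ_N} N⁻¹ J^neum(x/N, y/N) η(x) η(y)`. -/
def hamC (j : ℝ → ℝ) (N : ℕ) (η : Conf N) : ℝ :=
  -(1/2) * ∑ x : Site N, ∑ y : Site N,
    (N:ℝ)⁻¹ * Jneum j (((x:ℤ):ℝ)/(N:ℝ)) (((y:ℤ):ℝ)/(N:ℝ)) * val (η x) * val (η y)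

/-- The exchange rate `C_N^β(x,y;η) = exp(-(β/2)[H_N(η^{x,y}) - H_N(η)])`. -/
def rateC (β : ℝ) (j : ℝ → ℝ) (N : ℕ) (x y : ℤ) (η : Conf N) : ℝ :=
  Real.exp (-(β/2) * (hamC j N (exchC N η x y) - hamC j N η))

/-- The bulk (Kawasaki) generator
`(L_{β,N} f)(η) = Σ_{x,y ∈ Λ_N, |x-y|=1} C_N^β(x,y;η) [f(η^{x,y}) - f(η)]`. -/
def Lkaw (β : ℝ) (j : ℝ → ℝ) (N : ℕ) (f : Conf N → ℝ) (η : Conf N) : ℝ :=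
  ∑ x : Site N, ∑ y : Site N,
    if |(x:ℤ) - (y:ℤ)| = 1 then
      rateC β j N (x:ℤ) (y:ℤ) η * (f (exchC N η (x:ℤ) (y:ℤ)) - f η)
    else 0

/-- The Bernoulli product measure on `S_N` with slowly varying profile `θ`. -/
def bernProf (N : ℕ) (θ : ℝ → ℝ) (η : Conf N) : ℝ :=
  ∏ x : Site N, (if η x then θ (((x:ℤ):ℝ)/(N:ℝ)) else 1 - θ (((x:ℤ):ℝ)/(N:ℝ)))

/-- The Dirichlet form `D_{0,N}(h,ν) = Σ_{x=-N}^{N-1} ∫ (h(η^{x,x+1}) - h(η))² dν`. -/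
def D0 (N : ℕ) (h : Conf N → ℝ) (ν : Conf N → ℝ) : ℝ :=
  ∑ x ∈ Finset.Icc (-(N:ℤ)) ((N:ℤ) - 1), ∑ η : Conf N,
    ν η * (h (exchC N η x (x+1)) - h η)^2

lemma abs_bond {Ω : Type*} [Fintype Ω] (σ : Equiv.Perm Ω) (hσ : ∀ η, σ (σ η) = η)
    (ν c f : Ω → ℝ) (k1 k2 a : ℝ) (hν : ∀ η, 0 ≤ ν η) (hk2 : 0 ≤ k2) (ha : 0 < a)
    (hc : ∀ η, |c η - 1| ≤ k1) (hr : ∀ η, |ν (σ η) - ν η| ≤ k2 * ν η) :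
    2 * ∑ η, ν η * (f η * (c η * (f (σ η) - f η))) ≤
      -(1 - a) * ∑ η, ν η * (f (σ η) - f η)^2
        + ((2 * k1^2 + k2^2 * (2 + k2) / 4) / a) * ∑ η, ν η * (f η)^2 := by
  have swap : ∀ g : Ω → ℝ, ∑ η, g (σ η) = ∑ η, g η := fun g => Equiv.sum_comp σ g
  have h1 : ∀ η, 2 * (ν η * (f η * (c η * (f (σ η) - f η)))) ≤
      (-(1 - a/2)) * (ν η * (f (σ η) - f η)^2) + ν η * (f (σ η)^2 - f η^2)
        + (2 * k1^2 / a) * (ν η * f η^2) := by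
    intro η
    set d := f (σ η) - f η with hd
    have hf : f (σ η) = f η + d := by rw [hd]; ring
    rw [hf]
    have key : 2 * f η * (c η - 1) * d ≤ a/2 * d^2 + 2 * k1^2 / a * f η^2 := by
      have e : a/2 * d^2 + 2 * (c η - 1)^2 / a * f η^2 - 2 * f η * (c η - 1) * d
          = (a * d - 2 * (c η - 1) * f η)^2 / (2 * a) := by
        field_simp; ring
      have e2 : 0 ≤ (a * d - 2 * (c η - 1) * f η)^2 / (2 * a) := by positivity
      have e3 : (c η - 1)^2 ≤ k1^2 := sq_le_sq' (by linarith [abs_le.1 (hc η)]) (abs_le.1 (hc η)).2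
      have e4 : 2 * (c η - 1)^2 / a * f η^2 ≤ 2 * k1^2 / a * f η^2 := by gcongr
      linarith
    have := mul_le_mul_of_nonneg_left key (hν η)
    nlinarith [this]
  have h2 : ∑ η, ν η * (f (σ η)^2 - f η^2) =
      ∑ η, (1/2) * ((ν η - ν (σ η)) * (f (σ η)^2 - f η^2)) := by
    have := swap (fun η => ν η * (f (σ η)^2 - f η^2))
    simp only [hσ] at this
    rw [← Finset.mul_sum]
    have e : ∑ η, (ν η - ν (σ η)) * (f (σ η)^2 - f η^2)
      = ∑ η, ν η * (f (σ η)^2 - f η^2) + ∑ η, ν (σ η) * (f η ^2 - f (σ η)^2) := by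
      rw [← Finset.sum_add_distrib]; apply Finset.sum_congr rfl; intros; ring
    rw [e, this]; ring
  have h3 : ∀ η, (1/2) * ((ν η - ν (σ η)) * (f (σ η)^2 - f η^2)) ≤
      (a/2) * (ν η * (f (σ η) - f η)^2) + (k2^2 / (4*a)) * (ν η * f η^2)
        + (k2^2 / (4*a)) * (ν η * f (σ η)^2) := by
    intro η
    set d := f (σ η) - f η with hd
    set s := f (σ η) + f η with hs
    have e0 : f (σ η)^2 - f η^2 = d * s := by rw [hd, hs]; ring
    have e1 : (ν η - ν (σ η)) * (d * s) ≤ k2 * ν η * (|d| * |s|) := by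
      calc _ ≤ |(ν η - ν (σ η)) * (d * s)| := le_abs_self _
        _ = |ν (σ η) - ν η| * (|d| * |s|) := by rw [abs_mul, abs_mul, abs_sub_comm]
        _ ≤ _ := by gcongr; exact hr η
    have e2 : k2 * (|d| * |s|) ≤ a * d^2 + k2^2 / (4*a) * s^2 := by
      have e : a * |d|^2 + k2^2 / (4*a) * |s|^2 - k2 * (|d| * |s|)
          = (2 * a * |d| - k2 * |s|)^2 / (4 * a) := by
        field_simp; ring
      have : 0 ≤ (2 * a * |d| - k2 * |s|)^2 / (4 * a) := by positivity
      rw [sq_abs, sq_abs] at e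
      linarith
    have e3 : s^2 ≤ 2 * f η^2 + 2 * f (σ η)^2 := by
      rw [hs]; nlinarith [sq_nonneg (f (σ η) - f η)]
    have e4 : k2^2 / (4*a) * s^2 ≤ k2^2 / (4*a) * (2 * f η^2 + 2 * f (σ η)^2) := by gcongr
    have e5 := mul_le_mul_of_nonneg_left (e2.trans (add_le_add_right e4 _)) (hν η)
    rw [e0]
    nlinarith [e5, e1]
  have h4 : ∑ η, ν η * f (σ η)^2 ≤ (1 + k2) * ∑ η, ν η * f η^2 := by
    rw [← swap (fun η => ν η * f (σ η)^2), Finset.mul_sum]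
    apply Finset.sum_le_sum
    intro η _
    simp only [hσ]
    have := (abs_le.1 (hr η)).2
    have h : ν (σ η) ≤ (1 + k2) * ν η := by linarith
    calc _ ≤ (1 + k2) * ν η * f η^2 := by gcongr
      _ = _ := by ring
  have H1 := Finset.sum_le_sum (fun η (_ : η ∈ Finset.univ) => h1 η)
  have H3 := Finset.sum_le_sum (fun η (_ : η ∈ Finset.univ) => h3 η)
  simp only [Finset.sum_add_distrib] at H1 H3
  rw [h2] at H1
  simp only [← Finset.mul_sum] at H1 H3
  have H4 : k2^2 / (4*a) * ∑ η, ν η * f (σ η)^2 ≤ k2^2 / (4*a) * ((1 + k2) * ∑ η, ν η * f η^2) := by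
    gcongr
  have e : ((2 * k1^2 + k2^2 * (2 + k2) / 4) / a) * ∑ η, ν η * (f η)^2 =
    2 * k1^2 / a * ∑ η, ν η * (f η)^2 + k2^2 / (4*a) * ∑ η, ν η * (f η)^2 +
      k2^2 / (4*a) * ((1 + k2) * ∑ η, ν η * f η^2) := by
    field_simp; ring
  rw [e]
  linarith

lemma exch_eq (N : ℕ) (η : Conf N) (X Y : Site N) :
    exchC N η X Y = η ∘ Equiv.swap X Y := by
  funext z
  simp only [exchC, getC, Function.comp, Equiv.swap_apply_def, Subtype.ext_iff, X.2, Y.2, dif_pos]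
  split_ifs <;> rfl

lemma sum_pairs (N : ℕ) (g : ℤ → ℤ → ℝ)
    (hg : ∀ x ∈ Finset.Icc (-(N:ℤ)) (N:ℤ), ∀ y ∈ Finset.Icc (-(N:ℤ)) (N:ℤ), g x y = g y x) :
    (∑ x : Site N, ∑ y : Site N, if |(x:ℤ) - (y:ℤ)| = 1 then g x y else 0) =
      2 * ∑ x ∈ Finset.Icc (-(N:ℤ)) ((N:ℤ) - 1), g x (x+1) := by
  have A : (∑ x : Site N, ∑ y : Site N, if (y:ℤ) = x + 1 then g x y else 0) =
      ∑ x ∈ Finset.Icc (-(N:ℤ)) ((N:ℤ) - 1), g x (x+1) := by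
    have e1 : ∀ x : ℤ, (∑ y : Site N, if (y:ℤ) = x + 1 then g x y else 0) =
        ∑ y ∈ Finset.Icc (-(N:ℤ)) (N:ℤ), if y = x + 1 then g x y else 0 := fun x =>
      Finset.sum_coe_sort (Finset.Icc (-(N:ℤ)) (N:ℤ)) (fun y => if y = x + 1 then g x y else 0)
    simp only [e1, Finset.sum_ite_eq']
    rw [Finset.sum_coe_sort (Finset.Icc (-(N:ℤ)) (N:ℤ))
      (fun x => if x + 1 ∈ Finset.Icc (-(N:ℤ)) (N:ℤ) then g x (x+1) else 0), ← Finset.sum_filter]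
    apply Finset.sum_congr _ (fun _ _ => rfl)
    ext x; simp only [Finset.mem_filter, Finset.mem_Icc]; omega
  have B : ∀ x y : Site N, (if |(x:ℤ) - (y:ℤ)| = 1 then g x y else 0) =
      (if (y:ℤ) = x + 1 then g x y else 0) + (if (x:ℤ) = y + 1 then g y x else 0) := by
    intro x y
    rw [← hg x x.2 y y.2]
    rcases abs_cases ((x:ℤ) - (y:ℤ)) with h | h <;> split_ifs <;> first | omega | simp
  simp only [B, Finset.sum_add_distrib]
  rw [Finset.sum_comm (f := fun (x y : Site N) => if (x:ℤ) = y + 1 then g y x else 0), A]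
  ring

lemma swap_disp (N : ℕ) (X Y : Site N) (h : (Y:ℤ) = X + 1) :
    ∑ z : Site N, |(((Equiv.swap X Y z : Site N):ℤ):ℝ) - ((z:ℤ):ℝ)| = 2 := by
  have hne : X ≠ Y := by intro e; rw [e] at h; omega
  have hR : ((Y:ℤ):ℝ) = ((X:ℤ):ℝ) + 1 := by exact_mod_cast h
  rw [← Finset.sum_subset (Finset.subset_univ {X, Y})]
  · rw [Finset.sum_pair hne]
    simp [hR]; norm_num
  · intro z _ hz
    simp only [Finset.mem_insert, Finset.mem_singleton, not_or] at hz
    rw [Equiv.swap_apply_of_ne_of_ne hz.1 hz.2]; simp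

lemma val_abs (b : Bool) : 0 ≤ val b ∧ val b ≤ 1 := by
  cases b <;> simp [val]

lemma ham_bound (j : ℝ → ℝ) (L : ℝ) (hL : 0 ≤ L) (hj : ∀ u v, |j u - j v| ≤ L * |u - v|)
    (N : ℕ) (hN : 1 ≤ N) (η : Conf N) (X Y : Site N) (h : (Y:ℤ) = X + 1) :
    |hamC j N (exchC N η X Y) - hamC j N η| ≤ 18 * L / N := by
  have hNR : (1:ℝ) ≤ N := by exact_mod_cast hN
  have hN0 : (0:ℝ) < N := by linarith
  rw [exch_eq]
  set s := Equiv.swap X Y with hs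
  have hss : ∀ z, s (s z) = z := fun z => Equiv.swap_apply_self X Y z
  have e1 : hamC j N (η ∘ s) = -(1/2) * ∑ x : Site N, ∑ y : Site N,
    (N:ℝ)⁻¹ * Jneum j (((s x:ℤ):ℝ)/(N:ℝ)) (((s y:ℤ):ℝ)/(N:ℝ)) * val (η x) * val (η y) := by
    unfold hamC
    congr 1
    rw [← Equiv.sum_comp s]
    apply Finset.sum_congr rfl; intro x _
    rw [← Equiv.sum_comp s]
    apply Finset.sum_congr rfl; intro y _
    simp only [Function.comp, hss]
  have hJ : ∀ u v u' v' : ℝ, |Jneum j u' v' - Jneum j u v| ≤ 3 * L * (|u' - u| + |v' - v|) := by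
    intro u v u' v'
    unfold Jneum
    have a1 := hj (v' - u') (v - u)
    have a2 := hj (2 - v' - u') (2 - v - u)
    have a3 := hj (-2 - v' - u') (-2 - v - u)
    have b1 : |(v' - u') - (v - u)| ≤ |u' - u| + |v' - v| := by
      rw [show (v' - u') - (v - u) = (v' - v) - (u' - u) by ring]
      linarith [abs_sub (v' - v) (u' - u)]
    have b2 : |(2 - v' - u') - (2 - v - u)| ≤ |u' - u| + |v' - v| := by
      rw [show (2 - v' - u') - (2 - v - u) = -((u' - u) + (v' - v)) by ring, abs_neg]
      exact abs_add_le _ _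
    have b3 : |(-2 - v' - u') - (-2 - v - u)| ≤ |u' - u| + |v' - v| := by
      rw [show (-2 - v' - u') - (-2 - v - u) = -((u' - u) + (v' - v)) by ring, abs_neg]
      exact abs_add_le _ _
    have c1 := a1.trans (mul_le_mul_of_nonneg_left b1 hL)
    have c2 := a2.trans (mul_le_mul_of_nonneg_left b2 hL)
    have c3 := a3.trans (mul_le_mul_of_nonneg_left b3 hL)
    rw [abs_le] at *
    constructor <;> linarith [c1.1, c1.2, c2.1, c2.2, c3.1, c3.2]
  set D : Site N → ℝ := fun z => |(((s z : Site N):ℤ):ℝ) - ((z:ℤ):ℝ)| with hD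
  have hDs : ∑ z, D z = 2 := swap_disp N X Y h
  have hT : ∀ x y : Site N,
      |(N:ℝ)⁻¹ * Jneum j (((s x:ℤ):ℝ)/(N:ℝ)) (((s y:ℤ):ℝ)/(N:ℝ)) * val (η x) * val (η y) -
       (N:ℝ)⁻¹ * Jneum j (((x:ℤ):ℝ)/(N:ℝ)) (((y:ℤ):ℝ)/(N:ℝ)) * val (η x) * val (η y)| ≤
      (3 * L / N^2) * (D x + D y) := by
    intro x y
    have h1 := hJ (((x:ℤ):ℝ)/(N:ℝ)) (((y:ℤ):ℝ)/(N:ℝ)) (((s x:ℤ):ℝ)/(N:ℝ)) (((s y:ℤ):ℝ)/(N:ℝ))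
    rw [← sub_div, ← sub_div, abs_div, abs_div, abs_of_pos hN0] at h1
    rw [show ∀ A B p q r : ℝ, p * A * q * r - p * B * q * r = (p * (q * r)) * (A - B) by
      intros; ring, abs_mul]
    obtain ⟨p1, p2⟩ := val_abs (η x)
    obtain ⟨q1, q2⟩ := val_abs (η y)
    have h2 : |(N:ℝ)⁻¹ * (val (η x) * val (η y))| ≤ (N:ℝ)⁻¹ := by
      rw [abs_of_nonneg (by positivity)]
      exact mul_le_of_le_one_right (by positivity) (mul_le_one₀ p2 q1 q2)
    calc _ ≤ (N:ℝ)⁻¹ * (3 * L * (D x / N + D y / N)) := by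
            apply mul_le_mul h2 h1 (abs_nonneg _) (by positivity)
      _ = _ := by field_simp
  have hcard : (Fintype.card (Site N) : ℝ) = 2 * N + 1 := by
    rw [Fintype.card_coe, Int.card_Icc]
    have : ((N:ℤ) + 1 - -(N:ℤ)).toNat = 2 * N + 1 := by omega
    rw [this]; push_cast; ring
  rw [e1]; unfold hamC
  rw [← mul_sub, ← Finset.sum_sub_distrib, abs_mul]
  simp only [← Finset.sum_sub_distrib]
  have hS : |∑ x : Site N, ∑ y : Site N,
      ((N:ℝ)⁻¹ * Jneum j (((s x:ℤ):ℝ)/(N:ℝ)) (((s y:ℤ):ℝ)/(N:ℝ)) * val (η x) * val (η y) -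
       (N:ℝ)⁻¹ * Jneum j (((x:ℤ):ℝ)/(N:ℝ)) (((y:ℤ):ℝ)/(N:ℝ)) * val (η x) * val (η y))| ≤
      (3 * L / N^2) * (4 * (2 * N + 1)) := by
    calc _ ≤ ∑ x : Site N, ∑ y : Site N, (3 * L / N^2) * (D x + D y) := by
            refine (Finset.abs_sum_le_sum_abs _ _).trans (Finset.sum_le_sum fun x _ => ?_)
            exact (Finset.abs_sum_le_sum_abs _ _).trans (Finset.sum_le_sum fun y _ => hT x y)
      _ = _ := by
        simp only [← Finset.mul_sum, Finset.sum_add_distrib, Finset.sum_const, hDs,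
          Finset.card_univ, nsmul_eq_mul, hcard]
        ring
  have e : |(-(1/2):ℝ)| = 1/2 := by norm_num
  rw [e]
  have : (3 * L / N^2) * (4 * (2 * N + 1)) ≤ 36 * L / N := by
    rw [div_mul_eq_mul_div, div_le_div_iff₀ (by positivity) hN0]
    have : 0 ≤ L * N * (N - 1) := mul_nonneg (by positivity) (by linarith)
    nlinarith
  have e2 : 36 * L / N = 2 * (18 * L / N) := by ring
  linarith

lemma rate_bound (j : ℝ → ℝ) (L : ℝ) (hL : 0 ≤ L) (hj : ∀ u v, |j u - j v| ≤ L * |u - v|)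
    (β : ℝ) (hβ : 0 ≤ β)
    (N : ℕ) (hN : 1 ≤ N) (η : Conf N) (X Y : Site N) (h : (Y:ℤ) = X + 1) :
    |rateC β j N X Y η - 1| ≤ (9 * β * L * Real.exp (9 * β * L)) / N := by
  have hNR : (1:ℝ) ≤ N := by exact_mod_cast hN
  have hN0 : (0:ℝ) < N := by linarith
  have hb := ham_bound j L hL hj N hN η X Y h
  unfold rateC
  set t := -(β/2) * (hamC j N (exchC N η X Y) - hamC j N η) with ht
  have h1 : |t| ≤ 9 * β * L / N := by
    rw [ht, abs_mul, abs_neg, abs_of_nonneg (by positivity : 0 ≤ β/2)]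
    calc _ ≤ β/2 * (18 * L / N) := by gcongr
      _ = _ := by ring
  have h2 : 9 * β * L / N ≤ 9 * β * L := div_le_self (by positivity) hNR
  have h3 : |Real.exp t - 1| ≤ |t| * Real.exp |t| := by
    have l1 := Real.add_one_le_exp t
    have l2 := Real.add_one_le_exp (-t)
    have l3 : Real.exp t - 1 ≤ t * Real.exp t := by
      have : Real.exp (-t) * Real.exp t = 1 := by rw [← Real.exp_add]; simp
      nlinarith [Real.exp_pos t]
    have l4 : t * Real.exp t ≤ |t| * Real.exp |t| := by
      gcongr
      · exact le_abs_self t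
      · exact le_abs_self t
    have l5 : |t| ≤ |t| * Real.exp |t| := le_mul_of_one_le_right (abs_nonneg _) (Real.one_le_exp (abs_nonneg _))
    rw [abs_le]; constructor <;> linarith [neg_abs_le t]
  calc _ ≤ |t| * Real.exp |t| := h3
    _ ≤ (9 * β * L / N) * Real.exp (9 * β * L) := by
      gcongr; exact h1.trans h2
    _ = _ := by ring

lemma site_mem (N : ℕ) (hN : 1 ≤ N) (x : Site N) : ((x:ℤ):ℝ)/(N:ℝ) ∈ Icc (-1:ℝ) 1 := by
  have hN0 : (0:ℝ) < N := by exact_mod_cast hN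
  have := Finset.mem_Icc.1 x.2
  have h1 : (-(N:ℝ)) ≤ ((x:ℤ):ℝ) := by exact_mod_cast this.1
  have h2 : ((x:ℤ):ℝ) ≤ N := by exact_mod_cast this.2
  constructor
  · rw [le_div_iff₀ hN0]; linarith
  · rw [div_le_iff₀ hN0]; linarith

lemma bern_nonneg (N : ℕ) (hN : 1 ≤ N) (θ : ℝ → ℝ)
    (hθ_range : ∀ u ∈ Icc (-1:ℝ) 1, θ u ∈ Ioo (0:ℝ) 1) (η : Conf N) : 0 ≤ bernProf N θ η := by
  apply Finset.prod_nonneg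
  intro x _
  have := hθ_range _ (site_mem N hN x)
  split_ifs <;> linarith [this.1, this.2]

lemma bern_bound (θ : ℝ → ℝ) (M δ : ℝ) (hM : 0 ≤ M) (hδ : 0 < δ)
    (hθ_range : ∀ u ∈ Icc (-1:ℝ) 1, θ u ∈ Ioo (0:ℝ) 1)
    (hlip : ∀ u ∈ Icc (-1:ℝ) 1, ∀ v ∈ Icc (-1:ℝ) 1, |θ u - θ v| ≤ M * |u - v|)
    (hlow : ∀ u ∈ Icc (-1:ℝ) 1, δ ≤ θ u ∧ δ ≤ 1 - θ u)
    (N : ℕ) (hN : 1 ≤ N) (η : Conf N) (X Y : Site N) (h : (Y:ℤ) = X + 1) :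
    |bernProf N θ (exchC N η X Y) - bernProf N θ η| ≤ (M / δ^2 / N) * bernProf N θ η := by
  have hN0 : (0:ℝ) < N := by exact_mod_cast hN
  have hne : X ≠ Y := by intro e; rw [e] at h; omega
  have hR : ((Y:ℤ):ℝ) = ((X:ℤ):ℝ) + 1 := by exact_mod_cast h
  rw [exch_eq]
  set w : Site N → Bool → ℝ := fun x b =>
    if b then θ (((x:ℤ):ℝ)/(N:ℝ)) else 1 - θ (((x:ℤ):ℝ)/(N:ℝ)) with hw
  have split : ∀ ζ : Conf N, bernProf N θ ζ =
      (w X (ζ X) * w Y (ζ Y)) * ∏ z ∈ ({X, Y} : Finset (Site N))ᶜ, w z (ζ z) := by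
    intro ζ
    rw [← Finset.prod_pair (f := fun z => w z (ζ z)) hne, Finset.prod_mul_prod_compl]
    rfl
  rw [split, split]
  have hP : ∏ z ∈ ({X, Y} : Finset (Site N))ᶜ, w z ((η ∘ Equiv.swap X Y) z) =
      ∏ z ∈ ({X, Y} : Finset (Site N))ᶜ, w z (η z) := by
    apply Finset.prod_congr rfl
    intro z hz
    simp only [Finset.mem_compl, Finset.mem_insert, Finset.mem_singleton, not_or] at hz
    simp only [Function.comp, Equiv.swap_apply_of_ne_of_ne hz.1 hz.2]
  have hwl : ∀ x b, δ ≤ w x b := by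
    intro x b
    have := hlow _ (site_mem N hN x)
    cases b <;> simp [hw] <;> linarith [this.1, this.2]
  have hPn : 0 ≤ ∏ z ∈ ({X, Y} : Finset (Site N))ᶜ, w z (η z) :=
    Finset.prod_nonneg fun z _ => hδ.le.trans (hwl _ _)
  rw [hP]
  simp only [Function.comp, Equiv.swap_apply_left, Equiv.swap_apply_right]
  rw [← sub_mul, abs_mul, abs_of_nonneg hPn, ← mul_assoc]
  apply mul_le_mul_of_nonneg_right _ hPn
  have hl : |θ (((X:ℤ):ℝ)/(N:ℝ)) - θ (((Y:ℤ):ℝ)/(N:ℝ))| ≤ M / N := by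
    refine (hlip _ (site_mem N hN X) _ (site_mem N hN Y)).trans (le_of_eq ?_)
    rw [← sub_div, hR, abs_div, abs_of_pos hN0]
    simp [div_eq_mul_inv]
  have hd : |w X (η Y) * w Y (η X) - w X (η X) * w Y (η Y)| ≤ M / N := by
    generalize η X = b
    generalize η Y = c
    have h0 : 0 ≤ M / N := by positivity
    cases b <;> cases c <;> simp only [hw, if_true, Bool.false_eq_true, if_false]
    · simpa using h0
    · convert hl using 2; ring
    · rw [abs_sub_comm] at hl; convert hl using 2; ring
    · simpa using h0
  have hww : δ^2 ≤ w X (η X) * w Y (η Y) := by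
    rw [sq]; exact mul_le_mul (hwl _ _) (hwl _ _) hδ.le (hδ.le.trans (hwl _ _))
  calc _ ≤ M / N := hd
    _ = (M / δ^2 / N) * δ^2 := by field_simp
    _ ≤ _ := by gcongr

lemma theta_consts (θ : ℝ → ℝ) (hθ : ContDiff ℝ 1 θ)
    (hθ_range : ∀ u ∈ Icc (-1:ℝ) 1, θ u ∈ Ioo (0:ℝ) 1) :
    ∃ M δ : ℝ, 0 ≤ M ∧ 0 < δ ∧
    (∀ u ∈ Icc (-1:ℝ) 1, ∀ v ∈ Icc (-1:ℝ) 1, |θ u - θ v| ≤ M * |u - v|) ∧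
    (∀ u ∈ Icc (-1:ℝ) 1, δ ≤ θ u ∧ δ ≤ 1 - θ u) := by
  have hne : (Icc (-1:ℝ) 1).Nonempty := ⟨0, by norm_num⟩
  obtain ⟨u0, hu0, hmin⟩ := isCompact_Icc.exists_isMinOn hne
    (f := fun u => min (θ u) (1 - θ u))
    ((hθ.continuous.min (continuous_const.sub hθ.continuous)).continuousOn)
  obtain ⟨M, hM⟩ := isCompact_Icc.exists_bound_of_continuousOn (s := Icc (-1:ℝ) 1)
    (hθ.continuous_deriv le_rfl).continuousOn
  refine ⟨M, min (θ u0) (1 - θ u0), ?_, ?_, ?_, ?_⟩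
  · exact (norm_nonneg _).trans (hM 0 (by norm_num))
  · have := hθ_range u0 hu0
    exact lt_min this.1 (by linarith [this.2])
  · intro u hu v hv
    have := (convex_Icc (-1:ℝ) 1).norm_image_sub_le_of_norm_deriv_le (f := θ)
      (fun x _ => (hθ.differentiable one_ne_zero) x) hM hv hu
    simpa [Real.norm_eq_abs] using this
  · intro u hu
    have := hmin hu
    simp only [mem_setOf_eq] at this
    exact le_min_iff.1 this

lemma j_const (j : ℝ → ℝ) (hj : ContDiff ℝ 1 j) (hs : ∀ u : ℝ, 1 < |u| → j u = 0) :
    ∃ L : ℝ, 0 ≤ L ∧ ∀ u v, |j u - j v| ≤ L * |u - v| := by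
  have hc : HasCompactSupport j := by
    apply HasCompactSupport.intro (isCompact_Icc (a := (-1:ℝ)) (b := 1))
    intro x hx
    apply hs
    by_contra hh
    exact hx (abs_le.1 (not_lt.1 hh))
  obtain ⟨C, hC⟩ := hj.lipschitzWith_of_hasCompactSupport hc one_ne_zero
  refine ⟨C, C.2, fun u v => ?_⟩
  simpa [Real.dist_eq] using hC.dist_le_mul u v

/-- Dirichlet form estimate for the Kawasaki generator with respect to
a product measure with smooth profile `θ` matching the boundary densities. -/
theorem kawasaki_dirichlet_estimate
    (j : ℝ → ℝ)
    (hj_smooth : ContDiff ℝ 1 j)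
    (hj_nonneg : ∀ u, 0 ≤ j u)
    (hj_even : ∀ u, j (-u) = j u)
    (hj_supp : ∀ u : ℝ, 1 < |u| → j u = 0)
    (hj_int : (∫ u : ℝ, j u) = 1)
    (β : ℝ) (hβ : 0 ≤ β)
    (ρm ρp : ℝ) (hρm : ρm ∈ Ioo (0:ℝ) 1) (hρp : ρp ∈ Ioo (0:ℝ) 1)
    (θ : ℝ → ℝ) (hθ : ContDiff ℝ 1 θ)
    (hθ_range : ∀ u ∈ Icc (-1:ℝ) 1, θ u ∈ Ioo (0:ℝ) 1)
    (hθm : θ (-1) = ρm) (hθp : θ 1 = ρp) :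
    ∃ C > 0, ∀ N : ℕ, 1 ≤ N → ∀ a > 0, ∀ f : Conf N → ℝ,
      ∑ η : Conf N, bernProf N θ η * (f η * Lkaw β j N f η) ≤
        -(1 - a) * D0 N f (bernProf N θ)
          + (C / (a * N)) * ∑ η : Conf N, bernProf N θ η * (f η)^2 := by
  obtain ⟨L, hL, hjL⟩ := j_const j hj_smooth hj_supp
  obtain ⟨M, δ, hM, hδ, hlip, hlow⟩ := theta_consts θ hθ hθ_range
  set K1 := 9 * β * L * Real.exp (9 * β * L) with hK1
  set K2 := M / δ^2 with hK2
  have hK2n : 0 ≤ K2 := by positivity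
  refine ⟨4 * K1^2 + K2^2 * (2 + K2) / 2 + 1, by positivity, ?_⟩
  intro N hN a ha f
  have hNR : (1:ℝ) ≤ N := by exact_mod_cast hN
  have hN0 : (0:ℝ) < N := by linarith
  set ν := bernProf N θ with hν
  have hνn : ∀ η, 0 ≤ ν η := bern_nonneg N hN θ hθ_range
  set S := ∑ η : Conf N, ν η * (f η)^2 with hS
  have hSn : 0 ≤ S := Finset.sum_nonneg fun η _ => mul_nonneg (hνn η) (sq_nonneg _)
  set G : ℤ → ℤ → ℝ := fun x y =>
    ∑ η : Conf N, ν η * (f η * (rateC β j N x y η * (f (exchC N η x y) - f η))) with hG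
  have hL1 : ∑ η : Conf N, ν η * (f η * Lkaw β j N f η) =
      2 * ∑ x ∈ Finset.Icc (-(N:ℤ)) ((N:ℤ) - 1), G x (x+1) := by
    rw [← sum_pairs N G]
    · simp only [Lkaw, Finset.mul_sum]
      rw [Finset.sum_comm]
      apply Finset.sum_congr rfl; intro x _
      rw [Finset.sum_comm]
      apply Finset.sum_congr rfl; intro y _
      split_ifs
      · rfl
      · simp
    · intro x hx y hy
      have e : ∀ η, exchC N η x y = exchC N η y x := fun η => by
        have e1 := exch_eq N η ⟨x, hx⟩ ⟨y, hy⟩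
        have e2 := exch_eq N η ⟨y, hy⟩ ⟨x, hx⟩
        rw [Equiv.swap_comm, ← e1] at e2
        exact e2.symm
      simp only [hG, rateC, e]
  have hbond : ∀ x ∈ Finset.Icc (-(N:ℤ)) ((N:ℤ) - 1), 2 * G x (x+1) ≤
      -(1 - a) * ∑ η : Conf N, ν η * (f (exchC N η x (x+1)) - f η)^2
        + ((2 * (K1/N)^2 + (K2/N)^2 * (2 + K2/N) / 4) / a) * S := by
    intro x hx
    have hx' := Finset.mem_Icc.1 hx
    let X : Site N := ⟨x, Finset.mem_Icc.2 (by omega)⟩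
    let Y : Site N := ⟨x+1, Finset.mem_Icc.2 (by omega)⟩
    have hXY : (Y:ℤ) = X + 1 := rfl
    have hinv : ∀ η : Conf N, exchC N (exchC N η x (x+1)) x (x+1) = η := by
      intro η
      change exchC N (exchC N η X Y) X Y = η
      rw [exch_eq, exch_eq]
      funext z; simp [Function.comp]
    let σ : Equiv.Perm (Conf N) :=
      ⟨fun η => exchC N η x (x+1), fun η => exchC N η x (x+1), hinv, hinv⟩
    exact abs_bond σ hinv ν (fun η => rateC β j N x (x+1) η) f (K1/N) (K2/N) a hνn
      (by positivity) ha (fun η => rate_bound j L hL hjL β hβ N hN η X Y hXY)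
      (fun η => bern_bound θ M δ hM hδ hθ_range hlip hlow N hN η X Y hXY)
  have hsum := Finset.sum_le_sum hbond
  rw [Finset.sum_add_distrib, ← Finset.mul_sum, ← Finset.mul_sum, Finset.sum_const, Int.card_Icc,
    show ((N:ℤ) - 1 + 1 - -(N:ℤ)).toNat = 2 * N by omega, nsmul_eq_mul] at hsum
  rw [hL1]
  unfold D0
  refine hsum.trans (add_le_add_right ?_ _)
  rw [← mul_assoc]
  apply mul_le_mul_of_nonneg_right _ hSn
  have hk : K2 / N ≤ K2 := div_le_self hK2n hNR
  calc ((2 * N : ℕ) : ℝ) * ((2 * (K1/N)^2 + (K2/N)^2 * (2 + K2/N) / 4) / a)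
      ≤ ((2 * N : ℕ) : ℝ) * ((2 * (K1/N)^2 + (K2/N)^2 * (2 + K2) / 4) / a) := by gcongr
    _ = (4 * K1^2 + K2^2 * (2 + K2) / 2) / (a * N) := by push_cast; field_simp; ring
    _ ≤ _ := div_le_div_of_nonneg_right (by linarith) (by positivity)

end
end

section
/- Let ρ, ρ_0 : [-1,1] → (0,1) be C^1 functions. There exists a constant C_0' > 0, depending only on ρ and ρ_0, such that for every integer N ≥ 1 and every probability measure μ on S_N, D_{0,N}( √(dμ/dν_N^ρ), ν_N^ρ ) ≤ 2 D_{0,N}( √(dμ/dν_N^{ρ_0}), ν_N^{ρ_0} ) + C_0' / N, where for a probability measure ν with ν(η) > 0 for all η, dμ/dν denotes the function η ↦ μ(η)/ν(η). -/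
open MeasureTheory Set

noncomputable section

lemma aux_exch (N : ℕ) (η : Conf N) (x : ℤ) (a b : Site N) (ha : (a:ℤ) = x) (hb : (b:ℤ) = x + 1) :
    exchC N η x (x+1) = fun z => η (Equiv.swap a b z) := by
  obtain ⟨a, ha'⟩ := a
  obtain ⟨b, hb'⟩ := b
  simp only at ha hb
  subst ha
  subst hb
  funext z
  unfold exchC getC
  rw [dif_pos ha', dif_pos hb']
  by_cases h1 : (z:ℤ) = a
  · have : z = ⟨a, ha'⟩ := Subtype.ext h1
    subst this
    simp
  · by_cases h2 : (z:ℤ) = a + 1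
    · have : z = ⟨a+1, hb'⟩ := Subtype.ext h2
      subst this
      simp
    · rw [if_neg h1, if_neg h2, Equiv.swap_apply_of_ne_of_ne]
      · intro h; exact h1 (by rw [h])
      · intro h; exact h2 (by rw [h])

lemma aux_prod {ι : Type*} [Fintype ι] [DecidableEq ι] (f : ι → Bool → ℝ) (a b : ι) (hab : a ≠ b)
    (η : ι → Bool) :
    ∏ z, f z (η z) = f a (η a) * (f b (η b) * ∏ z ∈ (Finset.univ.erase a).erase b, f z (η z)) := by
  rw [Finset.mul_prod_erase _ (fun z => f z (η z)) (by simp [hab.symm]),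
    Finset.mul_prod_erase _ (fun z => f z (η z)) (by simp)]

lemma aux_prod' {ι : Type*} [Fintype ι] [DecidableEq ι] (f : ι → Bool → ℝ) (a b : ι) (hab : a ≠ b)
    (η : ι → Bool) :
    ∏ z, f z (η (Equiv.swap a b z)) =
      f a (η b) * (f b (η a) * ∏ z ∈ (Finset.univ.erase a).erase b, f z (η z)) := by
  have := aux_prod f a b hab (fun z => η (Equiv.swap a b z))
  simp only [Equiv.swap_apply_left, Equiv.swap_apply_right] at this
  rw [this]
  congr 2
  apply Finset.prod_congr rfl
  intro z hz
  simp only [Finset.mem_erase] at hz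
  rw [Equiv.swap_apply_of_ne_of_ne hz.2.1 hz.1]

lemma aux_sqrt (r : ℝ) (hr : 0 ≤ r) : |Real.sqrt r - 1| ≤ |r - 1| := by
  have h : r - 1 = (Real.sqrt r - 1) * (Real.sqrt r + 1) := by
    have := Real.mul_self_sqrt hr
    linarith
  have h0 := Real.sqrt_nonneg r
  rw [h, abs_mul, abs_of_nonneg (by linarith : 0 ≤ Real.sqrt r + 1)]
  have := abs_nonneg (Real.sqrt r - 1)
  nlinarith

/-- regularity constants -/
lemma aux_const (ρ : ℝ → ℝ) (hρ : ContDiff ℝ 1 ρ)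
    (hr : ∀ u ∈ Icc (-1:ℝ) 1, ρ u ∈ Ioo (0:ℝ) 1) :
    ∃ m > 0, ∃ L ≥ 0, (∀ u ∈ Icc (-1:ℝ) 1, m ≤ ρ u ∧ m ≤ 1 - ρ u) ∧
      ∀ u ∈ Icc (-1:ℝ) 1, ∀ v ∈ Icc (-1:ℝ) 1, |ρ v - ρ u| ≤ L * |v - u| := by
  have hne : (Icc (-1:ℝ) 1).Nonempty := ⟨0, by norm_num, by norm_num⟩
  have hc : ContinuousOn (fun u => min (ρ u) (1 - ρ u)) (Icc (-1:ℝ) 1) :=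
    (hρ.continuous.min (continuous_const.sub hρ.continuous)).continuousOn
  obtain ⟨u0, hu0, hmin⟩ := isCompact_Icc.exists_isMinOn hne hc
  have hd : ContinuousOn (fun u => |deriv ρ u|) (Icc (-1:ℝ) 1) :=
    (hρ.continuous_deriv le_rfl).abs.continuousOn
  obtain ⟨u1, hu1, hmax⟩ := isCompact_Icc.exists_isMaxOn hne hd
  refine ⟨min (ρ u0) (1 - ρ u0), ?_, |deriv ρ u1|, abs_nonneg _, ?_, ?_⟩
  · have := hr u0 hu0
    exact lt_min this.1 (by linarith [this.2])
  · intro u hu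
    have := hmin hu
    exact le_min_iff.1 this
  · intro u hu v hv
    exact (convex_Icc (-1:ℝ) 1).norm_image_sub_le_of_norm_deriv_le (𝕜 := ℝ) (f := ρ)
      (fun x _ => (hρ.differentiable one_ne_zero) x) (fun x hx => hmax hx) hu hv

lemma aux_site (N : ℕ) (hN : 1 ≤ N) (z : Site N) : ((z:ℤ):ℝ)/(N:ℝ) ∈ Icc (-1:ℝ) 1 := by
  have hz := Finset.mem_Icc.1 z.2
  have hN' : (0:ℝ) < N := by exact_mod_cast hN
  have h1 : (-(N:ℝ)) ≤ ((z:ℤ):ℝ) := by exact_mod_cast hz.1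
  have h2 : ((z:ℤ):ℝ) ≤ (N:ℝ) := by exact_mod_cast hz.2
  constructor
  · rw [le_div_iff₀ hN']; linarith
  · rw [div_le_iff₀ hN']; linarith

lemma aux_pos (N : ℕ) (hN : 1 ≤ N) (ρ : ℝ → ℝ)
    (hr : ∀ u ∈ Icc (-1:ℝ) 1, ρ u ∈ Ioo (0:ℝ) 1) (η : Conf N) : 0 < bernProf N ρ η := by
  unfold bernProf
  apply Finset.prod_pos
  intro z _
  have := hr _ (aux_site N hN z)
  split_ifs
  · exact this.1
  · linarith [this.2]

lemma aux_frac (p q m d : ℝ) (hm : 0 < m) (hp : m ≤ p ∧ m ≤ 1 - p) (hq : m ≤ q ∧ m ≤ 1 - q)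
    (hd : |p - q| ≤ d) : |p * (1 - q) / ((1 - p) * q) - 1| ≤ d / m ^ 2 := by
  have hden : m ^ 2 ≤ (1 - p) * q := by nlinarith
  have hpos : 0 < (1 - p) * q := lt_of_lt_of_le (by positivity) hden
  rw [div_sub_one hpos.ne', abs_div, abs_of_pos hpos]
  have : p * (1 - q) - (1 - p) * q = p - q := by ring
  rw [this]
  have h0 := (abs_nonneg _).trans hd
  gcongr

lemma aux_ratio (N : ℕ) (hN : 1 ≤ N) (ρ : ℝ → ℝ) (m L : ℝ) (hm : 0 < m) (hL : 0 ≤ L)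
    (hr : ∀ u ∈ Icc (-1:ℝ) 1, m ≤ ρ u ∧ m ≤ 1 - ρ u)
    (hl : ∀ u ∈ Icc (-1:ℝ) 1, ∀ v ∈ Icc (-1:ℝ) 1, |ρ v - ρ u| ≤ L * |v - u|)
    (a b : Site N) (hab : (b:ℤ) = a + 1) (η : Conf N) :
    |Real.sqrt (bernProf N ρ η / bernProf N ρ (fun z => η (Equiv.swap a b z))) - 1|
      ≤ L / m ^ 2 / N := by
  have hN' : (0:ℝ) < N := by exact_mod_cast hN
  have hr' : ∀ u ∈ Icc (-1:ℝ) 1, ρ u ∈ Ioo (0:ℝ) 1 := fun u hu =>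
    ⟨by linarith [(hr u hu).1], by linarith [(hr u hu).2]⟩
  have hne : a ≠ b := by
    intro h; rw [h] at hab; omega
  refine (aux_sqrt _ (div_nonneg (aux_pos N hN ρ hr' _).le (aux_pos N hN ρ hr' _).le)).trans ?_
  have e1 := aux_prod (fun (z : Site N) (c : Bool) =>
    if c then ρ (((z:ℤ):ℝ)/(N:ℝ)) else 1 - ρ (((z:ℤ):ℝ)/(N:ℝ))) a b hne η
  have e2 := aux_prod' (fun (z : Site N) (c : Bool) =>
    if c then ρ (((z:ℤ):ℝ)/(N:ℝ)) else 1 - ρ (((z:ℤ):ℝ)/(N:ℝ))) a b hne η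
  have hp1 := aux_pos N hN ρ hr' η
  unfold bernProf at hp1 ⊢
  rw [e1] at hp1
  rw [e1, e2]
  set R := ∏ z ∈ (Finset.univ.erase a).erase b,
    (fun (z : Site N) (c : Bool) =>
      if c then ρ (((z:ℤ):ℝ)/(N:ℝ)) else 1 - ρ (((z:ℤ):ℝ)/(N:ℝ))) z (η z) with hR
  have hR0 : R ≠ 0 := by
    intro h; rw [h] at hp1; simp at hp1
  clear_value R
  have ha := hr _ (aux_site N hN a)
  have hb := hr _ (aux_site N hN b)
  have hd := hl _ (aux_site N hN a) _ (aux_site N hN b)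
  have hdist : |((b:ℤ):ℝ)/(N:ℝ) - ((a:ℤ):ℝ)/(N:ℝ)| = 1 / N := by
    rw [hab, ← sub_div]
    push_cast
    rw [add_sub_cancel_left, abs_of_pos (by positivity)]
  rw [hdist] at hd
  have hd' := hd
  rw [abs_sub_comm] at hd'
  set p := ρ (((a:ℤ):ℝ)/(N:ℝ))
  set q := ρ (((b:ℤ):ℝ)/(N:ℝ))
  have hfin : L * (1 / N) / m ^ 2 = L / m ^ 2 / N := by field_simp
  have hnn : 0 ≤ L / m ^ 2 / N := by positivity
  rw [← mul_assoc, ← mul_assoc, mul_div_mul_right _ _ hR0]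
  have hp0 : p ≠ 0 := by linarith [ha.1] |> fun (h : 0 < p) => h.ne'
  have hq0 : q ≠ 0 := by linarith [hb.1] |> fun (h : 0 < q) => h.ne'
  have hp0' : 1 - p ≠ 0 := by linarith [ha.2] |> fun (h : 0 < 1 - p) => h.ne'
  have hq0' : 1 - q ≠ 0 := by linarith [hb.2] |> fun (h : 0 < 1 - q) => h.ne'
  cases h1 : η a <;> cases h2 : η b
  · simp [hp0', hq0', div_self, hnn]
  · simp only [Bool.false_eq_true, if_true, if_false]
    rw [← hfin, mul_comm (1 - p), mul_comm p]
    exact aux_frac q p m _ hm hb ha hd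
  · simp only [Bool.false_eq_true, if_true, if_false]
    rw [← hfin]
    exact aux_frac p q m _ hm ha hb hd'
  · simp [hp0, hq0, div_self, hnn]

lemma aux_term (A B p q : ℝ) (hA : 0 ≤ A) (hB : 0 ≤ B) (hp : 0 < p) (hq : 0 < q) :
    p * (Real.sqrt (A / q) - Real.sqrt (B / p)) ^ 2
      = (Real.sqrt A * Real.sqrt (p / q) - Real.sqrt B) ^ 2 := by
  rw [Real.sqrt_div hA, Real.sqrt_div hB, Real.sqrt_div hp.le]
  have hsp := Real.sqrt_pos.2 hp
  have hsq := Real.sqrt_pos.2 hq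
  nth_rewrite 1 [← Real.sq_sqrt hp.le]
  rw [← mul_pow]
  congr 1
  field_simp

lemma aux_ineq (x y s t e : ℝ) (h1 : |s - t| ≤ e) :
    (x * s - y) ^ 2 ≤ 2 * (x * t - y) ^ 2 + 2 * e ^ 2 * x ^ 2 := by
  have h2 : (s - t) ^ 2 ≤ e ^ 2 := sq_le_sq' (by linarith [(abs_le.1 h1).1]) (abs_le.1 h1).2
  have h3 : x ^ 2 * (s - t) ^ 2 ≤ x ^ 2 * e ^ 2 := by gcongr
  nlinarith [sq_nonneg ((x * t - y) - x * (s - t))]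

/-- change of reference measure in the Dirichlet form:
`D_{0,N}(√(dμ/dν^ρ), ν^ρ) ≤ 2 D_{0,N}(√(dμ/dν^{ρ₀}), ν^{ρ₀}) + C₀'/N`. -/
theorem dirichlet_change_of_reference
    (ρ ρ₀ : ℝ → ℝ)
    (hρ : ContDiff ℝ 1 ρ) (hρ₀ : ContDiff ℝ 1 ρ₀)
    (hρ_range : ∀ u ∈ Icc (-1:ℝ) 1, ρ u ∈ Ioo (0:ℝ) 1)
    (hρ₀_range : ∀ u ∈ Icc (-1:ℝ) 1, ρ₀ u ∈ Ioo (0:ℝ) 1) :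
    ∃ C > 0, ∀ N : ℕ, 1 ≤ N →
      ∀ μ : Conf N → ℝ, (∀ η, 0 ≤ μ η) → (∑ η : Conf N, μ η) = 1 →
        D0 N (fun η => Real.sqrt (μ η / bernProf N ρ η)) (bernProf N ρ) ≤
          2 * D0 N (fun η => Real.sqrt (μ η / bernProf N ρ₀ η)) (bernProf N ρ₀)
            + C / (N:ℝ) := by
  obtain ⟨m, hm, L, hL, hmr, hLr⟩ := aux_const ρ hρ hρ_range
  obtain ⟨m₀, hm₀, L₀, hL₀, hmr₀, hLr₀⟩ := aux_const ρ₀ hρ₀ hρ₀_range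
  have hK : 0 ≤ L / m ^ 2 + L₀ / m₀ ^ 2 := by positivity
  set K := L / m ^ 2 + L₀ / m₀ ^ 2 with hKdef
  refine ⟨4 * K ^ 2 + 1, by positivity, ?_⟩
  intro N hN μ hμ hμ1
  have hN' : (0:ℝ) < N := by exact_mod_cast hN
  have key : ∀ x ∈ Finset.Icc (-(N:ℤ)) ((N:ℤ) - 1),
      ∑ η : Conf N, bernProf N ρ η * (Real.sqrt (μ (exchC N η x (x+1)) / bernProf N ρ (exchC N η x (x+1)))
        - Real.sqrt (μ η / bernProf N ρ η)) ^ 2 ≤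
      2 * ∑ η : Conf N, bernProf N ρ₀ η * (Real.sqrt (μ (exchC N η x (x+1)) / bernProf N ρ₀ (exchC N η x (x+1)))
        - Real.sqrt (μ η / bernProf N ρ₀ η)) ^ 2 + 2 * (K / N) ^ 2 := by
    intro x hx
    rw [Finset.mem_Icc] at hx
    let a : Site N := ⟨x, Finset.mem_Icc.2 ⟨hx.1, by omega⟩⟩
    let b : Site N := ⟨x + 1, Finset.mem_Icc.2 ⟨by omega, by omega⟩⟩
    have hsum : ∑ η : Conf N, μ (fun z => η (Equiv.swap a b z)) = 1 := by
      rw [← hμ1]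
      exact Equiv.sum_comp (Equiv.arrowCongr (Equiv.swap a b) (Equiv.refl Bool)) μ
    have hlast : 2 * (K / N) ^ 2 =
        ∑ η : Conf N, 2 * (K / N) ^ 2 * μ (fun z => η (Equiv.swap a b z)) := by
      rw [← Finset.mul_sum, hsum, mul_one]
    rw [hlast, Finset.mul_sum, ← Finset.sum_add_distrib]
    apply Finset.sum_le_sum
    intro η _
    rw [aux_exch N η x a b rfl rfl]
    rw [aux_term _ _ _ _ (hμ _) (hμ _) (aux_pos N hN ρ hρ_range _) (aux_pos N hN ρ hρ_range _),
      aux_term _ _ _ _ (hμ _) (hμ _) (aux_pos N hN ρ₀ hρ₀_range _) (aux_pos N hN ρ₀ hρ₀_range _)]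
    have r1 := aux_ratio N hN ρ m L hm hL hmr hLr a b rfl η
    have r2 := aux_ratio N hN ρ₀ m₀ L₀ hm₀ hL₀ hmr₀ hLr₀ a b rfl η
    have hKN : K / N = L / m ^ 2 / N + L₀ / m₀ ^ 2 / N := by rw [hKdef, add_div]
    have := aux_ineq (Real.sqrt (μ (fun z => η (Equiv.swap a b z)))) (Real.sqrt (μ η)) _ _ (K / N)
      (show |Real.sqrt (bernProf N ρ η / bernProf N ρ (fun z => η (Equiv.swap a b z)))
        - Real.sqrt (bernProf N ρ₀ η / bernProf N ρ₀ (fun z => η (Equiv.swap a b z)))| ≤ K / N by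
        rw [hKN]
        rw [abs_le] at r1 r2 ⊢
        constructor <;> linarith [r1.1, r1.2, r2.1, r2.2])
    rwa [Real.sq_sqrt (hμ _)] at this
  have := Finset.sum_le_sum key
  rw [Finset.sum_add_distrib, ← Finset.mul_sum, Finset.sum_const, nsmul_eq_mul, Int.card_Icc] at this
  have hc : (((N:ℤ) - 1 + 1 - -(N:ℤ)).toNat : ℝ) = 2 * N := by
    have : ((N:ℤ) - 1 + 1 - -(N:ℤ)).toNat = 2 * N := by omega
    rw [this]; push_cast; ring
  rw [hc] at this
  have e : 2 * (N:ℝ) * (2 * (K / N) ^ 2) = 4 * K ^ 2 / N := by field_simp; ring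
  rw [e] at this
  unfold D0
  refine this.trans ?_
  have : 4 * K ^ 2 / N ≤ (4 * K ^ 2 + 1) / N := by gcongr; linarith
  linarith

end
end

section
/- Let π : [0,T] × [-1,1] → ℝ be C^1 with 0 < π(t,u) < 1 for all (t,u). Then for every smooth G : [0,T] × [-1,1] → ℝ whose support in the space variable is a compact subset of (-1,1), ∫_0^T ∫_{-1}^{1} π ∂_u G du dt - (1/2) ∫_0^T ∫_{-1}^{1} σ(π) G² du dt ≤ (1/2) ∫_0^T ∫_{-1}^{1} (∂_u π)² / σ(π) du dt; consequently Q(π) ≤ (1/2) ∫_0^T ∫_{-1}^{1} (∂_u π)² / σ(π) du dt. -/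
open MeasureTheory Set
open scoped ENNReal

noncomputable section

/-- Mobility `σ(ρ) = 2ρ(1-ρ)`. -/
def sigmaMob (ρ : ℝ) : ℝ := 2 * ρ * (1 - ρ)

/-- Admissible test functions for the energy functional: smooth functions on
`[0,T] × [-1,1]` with support, in the space variable, a compact subset of `(-1,1)`. -/
def EnergyTest (G : ℝ → ℝ → ℝ) : Prop :=
  ContDiff ℝ (⊤ : ℕ∞) (Function.uncurry G) ∧
  ∃ K : Set ℝ, IsCompact K ∧ K ⊆ Ioo (-1:ℝ) 1 ∧ ∀ t u, u ∉ K → G t u = 0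

/-- The energy functional
`Q(π) = sup_G { ∫∫ π ∂_u G - (1/2) ∫∫ σ(π) G² }`, valued in `[0,+∞]`. -/
def Qen (T : ℝ) (π : ℝ → ℝ → ℝ) : ℝ≥0∞ :=
  ⨆ (G : ℝ → ℝ → ℝ) (_ : EnergyTest G),
    ENNReal.ofReal
      ((∫ t in (0:ℝ)..T, ∫ u in (-1:ℝ)..1, π t u * deriv (fun w => G t w) u) -
        (1/2) * ∫ t in (0:ℝ)..T, ∫ u in (-1:ℝ)..1, sigmaMob (π t u) * (G t u)^2)

theorem aux_cont (T : ℝ) (hT : 0 < T) (F : ℝ → ℝ → ℝ)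
    (hF : ContinuousOn (Function.uncurry F) (Icc (0:ℝ) T ×ˢ Icc (-1:ℝ) 1)) :
    IntervalIntegrable (fun t => ∫ u in (-1:ℝ)..1, F t u) volume 0 T := by
  have hc : Continuous (Function.uncurry
      (fun t u : ℝ => F (max 0 (min T t)) (max (-1) (min 1 u)))) := by
    have : Continuous (fun p : ℝ × ℝ =>
        ((max 0 (min T p.1), max (-1) (min 1 p.2)) : ℝ × ℝ)) := by fun_prop
    refine hF.comp_continuous this ?_
    intro p
    refine ⟨⟨le_max_left _ _, max_le hT.le (min_le_left _ _)⟩,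
      ⟨le_max_left _ _, max_le (by norm_num) (min_le_left _ _)⟩⟩
  have h2 := intervalIntegral.continuous_parametric_intervalIntegral_of_continuous'
    (μ := volume) hc (-1) 1
  refine ContinuousOn.intervalIntegrable ?_
  rw [uIcc_of_le hT.le]
  refine h2.continuousOn.congr ?_
  intro t ht
  refine intervalIntegral.integral_congr ?_
  intro u hu
  rw [uIcc_of_le (by norm_num)] at hu
  simp [ht.1, ht.2, hu.1, hu.2]

theorem aux_deriv (f : ℝ → ℝ → ℝ) (hf : ContDiff ℝ 1 (Function.uncurry f)) (t u : ℝ) :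
    HasDerivAt (fun w => f t w) (fderiv ℝ (Function.uncurry f) (t, u) (0, 1)) u := by
  have h1 : HasFDerivAt (Function.uncurry f) (fderiv ℝ (Function.uncurry f) (t, u)) (t, u) :=
    ((hf.differentiable (by norm_num)) (t, u)).hasFDerivAt
  have h2 : HasDerivAt (fun w : ℝ => ((t, w) : ℝ × ℝ)) (0, 1) u :=
    (hasDerivAt_const u t).prodMk (hasDerivAt_id u)
  exact h1.comp_hasDerivAt u h2

theorem aux_deriv_cont (f : ℝ → ℝ → ℝ) (hf : ContDiff ℝ 1 (Function.uncurry f)) :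
    Continuous (fun p : ℝ × ℝ => deriv (fun w => f p.1 w) p.2) := by
  have h : (fun p : ℝ × ℝ => deriv (fun w => f p.1 w) p.2) =
      fun p => fderiv ℝ (Function.uncurry f) p (0, 1) := by
    funext p
    exact (aux_deriv f hf p.1 p.2).deriv
  rw [h]
  exact (hf.continuous_fderiv (by norm_num)).clm_apply continuous_const

theorem aux_main (T : ℝ) (hT : 0 < T)
    (π : ℝ → ℝ → ℝ)
    (hπ : ContDiff ℝ 1 (Function.uncurry π))
    (hπ_range : ∀ t ∈ Icc (0:ℝ) T, ∀ u ∈ Icc (-1:ℝ) 1, π t u ∈ Ioo (0:ℝ) 1)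
    (G : ℝ → ℝ → ℝ) (hG : EnergyTest G) :
      (∫ t in (0:ℝ)..T, ∫ u in (-1:ℝ)..1, π t u * deriv (fun w => G t w) u) -
          (1/2) * (∫ t in (0:ℝ)..T, ∫ u in (-1:ℝ)..1, sigmaMob (π t u) * (G t u)^2) ≤
        (1/2) * ∫ t in (0:ℝ)..T, ∫ u in (-1:ℝ)..1,
          (deriv (fun w => π t w) u)^2 / sigmaMob (π t u) := by
  obtain ⟨hGs, K, -, hK, hGK⟩ := hG
  have hG1 : ContDiff ℝ 1 (Function.uncurry G) := hGs.of_le (by exact_mod_cast le_top)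
  have cG := hG1.continuous
  have cπ := hπ.continuous
  have cdG := aux_deriv_cont G hG1
  have cdπ := aux_deriv_cont π hπ
  have cσ : Continuous (fun p : ℝ × ℝ => sigmaMob (π p.1 p.2)) := by
    unfold sigmaMob
    exact (continuous_const.mul cπ).mul (continuous_const.sub cπ)
  have σpos : ∀ t ∈ Icc (0:ℝ) T, ∀ u ∈ Icc (-1:ℝ) 1, 0 < sigmaMob (π t u) := by
    intro t ht u hu
    obtain ⟨h0, h1⟩ := hπ_range t ht u hu
    unfold sigmaMob
    have : 0 < 1 - π t u := by linarith
    positivity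
  have c1 : Continuous (fun p : ℝ × ℝ => π p.1 p.2 * deriv (fun w => G p.1 w) p.2) :=
    cπ.mul cdG
  have c2 : Continuous (fun p : ℝ × ℝ => sigmaMob (π p.1 p.2) * (G p.1 p.2)^2) :=
    cσ.mul (cG.pow 2)
  have c3 : ContinuousOn (fun p : ℝ × ℝ => (deriv (fun w => π p.1 w) p.2)^2
      / sigmaMob (π p.1 p.2)) (Icc (0:ℝ) T ×ˢ Icc (-1:ℝ) 1) :=
    (cdπ.pow 2).continuousOn.div cσ.continuousOn
      (fun p hp => (σpos p.1 hp.1 p.2 hp.2).ne')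
  have i1 := aux_cont T hT (fun t u => π t u * deriv (fun w => G t w) u) c1.continuousOn
  have i2 := aux_cont T hT (fun t u => sigmaMob (π t u) * (G t u)^2) c2.continuousOn
  have i3 := aux_cont T hT (fun t u => (deriv (fun w => π t w) u)^2 / sigmaMob (π t u)) c3
  rw [← intervalIntegral.integral_const_mul, ← intervalIntegral.integral_const_mul,
    ← intervalIntegral.integral_sub i1 (i2.const_mul _)]
  refine intervalIntegral.integral_mono_on hT.le (i1.sub (i2.const_mul _)) (i3.const_mul _) ?_
  intro t ht
  have ct : Continuous (fun u : ℝ => ((t, u) : ℝ × ℝ)) := by fun_prop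
  have j0 : IntervalIntegrable (fun u => deriv (fun w => π t w) u * G t u) volume (-1) 1 :=
    ((cdπ.mul cG).comp ct).intervalIntegrable _ _
  have j2 : IntervalIntegrable (fun u => sigmaMob (π t u) * (G t u)^2) volume (-1) 1 :=
    (c2.comp ct).intervalIntegrable _ _
  have j3 : IntervalIntegrable (fun u => (deriv (fun w => π t w) u)^2 / sigmaMob (π t u))
      volume (-1) 1 := by
    refine ContinuousOn.intervalIntegrable ?_
    rw [uIcc_of_le (by norm_num)]
    have c4 := c3.comp (s := Icc (-1:ℝ) 1) ct.continuousOn (fun u hu => mk_mem_prod ht hu)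
    exact c4
  have hparts : ∫ u in (-1:ℝ)..1, π t u * deriv (fun w => G t w) u =
      - ∫ u in (-1:ℝ)..1, deriv (fun w => π t w) u * G t u := by
    have := intervalIntegral.integral_mul_deriv_eq_deriv_mul (a := (-1:ℝ)) (b := 1)
      (u := fun w => π t w) (v := fun w => G t w)
      (u' := fun u => deriv (fun w => π t w) u) (v' := fun u => deriv (fun w => G t w) u)
      (fun x _ => (aux_deriv π hπ t x).differentiableAt.hasDerivAt)
      (fun x _ => (aux_deriv G hG1 t x).differentiableAt.hasDerivAt)
      ((cdπ.comp ct).intervalIntegrable _ _) ((cdG.comp ct).intervalIntegrable _ _)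
    have e1 : G t 1 = 0 := hGK t 1 (fun h => lt_irrefl _ (hK h).2)
    have e2 : G t (-1) = 0 := hGK t (-1) (fun h => lt_irrefl _ (hK h).1)
    rw [this, e1, e2]
    ring
  have jn : IntervalIntegrable (fun u => -(deriv (fun w => π t w) u * G t u)) volume (-1) 1 :=
    j0.neg
  rw [hparts, ← intervalIntegral.integral_neg, ← intervalIntegral.integral_const_mul,
    ← intervalIntegral.integral_const_mul,
    ← intervalIntegral.integral_sub jn (j2.const_mul _)]
  refine intervalIntegral.integral_mono_on (by norm_num) (jn.sub (j2.const_mul _))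
    (j3.const_mul _) ?_
  intro u hu
  have hs := σpos t ht u hu
  generalize sigmaMob (π t u) = s at hs
  generalize deriv (fun w => π t w) u = d
  generalize G t u = g
  have : (1/2) * (d^2 / s) - (-(d * g) - 1/2 * (s * g^2)) = (d + s * g)^2 / (2 * s) := by
    field_simp
    ring
  have h2 : 0 ≤ (d + s * g)^2 / (2 * s) := by positivity
  linarith

/-- for a `C¹` density `π` with `0 < π < 1`, the energy functional is
bounded by `(1/2) ∫∫ (∂_u π)² / σ(π)`. -/
theorem energy_upper_bound
    (T : ℝ) (hT : 0 < T)
    (π : ℝ → ℝ → ℝ)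
    (hπ : ContDiff ℝ 1 (Function.uncurry π))
    (hπ_range : ∀ t ∈ Icc (0:ℝ) T, ∀ u ∈ Icc (-1:ℝ) 1, π t u ∈ Ioo (0:ℝ) 1) :
    (∀ G : ℝ → ℝ → ℝ, EnergyTest G →
      (∫ t in (0:ℝ)..T, ∫ u in (-1:ℝ)..1, π t u * deriv (fun w => G t w) u) -
          (1/2) * (∫ t in (0:ℝ)..T, ∫ u in (-1:ℝ)..1, sigmaMob (π t u) * (G t u)^2) ≤
        (1/2) * ∫ t in (0:ℝ)..T, ∫ u in (-1:ℝ)..1,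
          (deriv (fun w => π t w) u)^2 / sigmaMob (π t u)) ∧
    Qen T π ≤
      ENNReal.ofReal ((1/2) * ∫ t in (0:ℝ)..T, ∫ u in (-1:ℝ)..1,
        (deriv (fun w => π t w) u)^2 / sigmaMob (π t u)) := by
  refine ⟨fun G hG => aux_main T hT π hπ hπ_range G hG, ?_⟩
  unfold Qen
  exact iSup₂_le fun G hG => ENNReal.ofReal_le_ofReal (aux_main T hT π hπ hπ_range G hG)

end
end

section
/- For every C^1 function π : [-1,1] → [0,1], ∫_{-1}^{1} σ(π(u)) ( d/du (J^neum ⋆ π)(u) )² du ≤ (1/2) ∫_{-1}^{1} (π'(v))² dv. -/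
open MeasureTheory Set

noncomputable section

/-- Convolution with the Neumann kernel: `(J^neum ⋆ m)(u) = ∫_{-1}^1 J^neum(u,v) m(v) dv`. -/
def convJ (j m : ℝ → ℝ) (u : ℝ) : ℝ := ∫ v in (-1:ℝ)..1, Jneum j u v * m v

lemma aux_mass (j : ℝ → ℝ) (hc : Continuous j) (hj_nonneg : ∀ u, 0 ≤ j u)
    (hj_int : (∫ u : ℝ, j u) = 1) (u : ℝ) :
    ∫ v in (-1:ℝ)..1, Jneum j u v ≤ 1 := by
  have hint : Integrable j := by
    by_contra h
    rw [integral_undef h] at hj_int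
    norm_num at hj_int
  have ii : ∀ a b : ℝ, IntervalIntegrable j volume a b := fun a b => hc.intervalIntegrable a b
  have e1 : ∫ v in (-1:ℝ)..1, j (v - u) = ∫ x in (-1 - u)..(1 - u), j x := by
    simp
  have e2 : ∫ v in (-1:ℝ)..1, j (2 - v - u) = ∫ x in (1 - u)..(3 - u), j x := by
    have : ∀ v, j (2 - v - u) = j ((2 - u) - v) := fun v => by congr 1; ring
    simp_rw [this]
    rw [intervalIntegral.integral_comp_sub_left]
    congr 1 <;> ring
  have e3 : ∫ v in (-1:ℝ)..1, j (-2 - v - u) = ∫ x in (-3 - u)..(-1 - u), j x := by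
    have : ∀ v, j (-2 - v - u) = j ((-2 - u) - v) := fun v => by congr 1; ring
    simp_rw [this]
    rw [intervalIntegral.integral_comp_sub_left]
    congr 1 <;> ring
  have c1 : Continuous fun v => j (v - u) := by fun_prop
  have c2 : Continuous fun v => j (2 - v - u) := by fun_prop
  have c3 : Continuous fun v => j (-2 - v - u) := by fun_prop
  have c12 : Continuous fun v => j (v - u) + j (2 - v - u) := by fun_prop
  have : ∫ v in (-1:ℝ)..1, Jneum j u v = ∫ x in (-3 - u)..(3 - u), j x := by
    unfold Jneum
    rw [intervalIntegral.integral_add (c12.intervalIntegrable _ _)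
      (c3.intervalIntegrable _ _),
      intervalIntegral.integral_add (c1.intervalIntegrable _ _) (c2.intervalIntegrable _ _),
      e1, e2, e3, intervalIntegral.integral_add_adjacent_intervals (ii _ _) (ii _ _), add_comm,
      intervalIntegral.integral_add_adjacent_intervals (ii _ _) (ii _ _)]
  rw [this, intervalIntegral.integral_of_le (by linarith), ← hj_int]
  exact setIntegral_le_integral hint (Filter.Eventually.of_forall hj_nonneg)

lemma aux_deriv_s12 (j : ℝ → ℝ) (hj_smooth : ContDiff ℝ 1 j)
    (hj_supp : ∀ u : ℝ, 1 < |u| → j u = 0)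
    (π : ℝ → ℝ) (hπ : ContDiff ℝ 1 π) (u : ℝ) (hu : u ∈ Icc (-1:ℝ) 1) :
    deriv (convJ j π) u =
      ∫ v in (-1:ℝ)..1, (j (v - u) - j (2 - v - u) - j (-2 - v - u)) * deriv π v := by
  have hc : Continuous j := hj_smooth.continuous
  have hpc : Continuous π := hπ.continuous
  have hdc : Continuous (deriv j) := hj_smooth.continuous_deriv le_rfl
  have hpdc : Continuous (deriv π) := hπ.continuous_deriv le_rfl
  have hd : ∀ x, HasDerivAt j (deriv j x) x := fun x =>
    (hj_smooth.differentiable one_ne_zero x).hasDerivAt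
  have hpd : ∀ x, HasDerivAt π (deriv π x) x := fun x =>
    (hπ.differentiable one_ne_zero x).hasDerivAt
  have hcs : HasCompactSupport j := by
    refine HasCompactSupport.intro (isCompact_Icc (a := (-1:ℝ)) (b := 1)) fun x hx => ?_
    apply hj_supp
    by_contra h
    exact hx (abs_le.mp (not_lt.mp h))
  obtain ⟨C, hC⟩ := hcs.deriv.exists_bound_of_continuous hdc
  have key : HasDerivAt (convJ j π)
      (∫ v in (-1:ℝ)..1, (-deriv j (v - u) - deriv j (2 - v - u) - deriv j (-2 - v - u)) * π v)
      u := by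
    refine (intervalIntegral.hasDerivAt_integral_of_dominated_loc_of_deriv_le
      (F := fun u v => Jneum j u v * π v)
      (F' := fun u v => (-deriv j (v - u) - deriv j (2 - v - u) - deriv j (-2 - v - u)) * π v)
      (s := univ) (bound := fun v => (C + C + C) * ‖π v‖) Filter.univ_mem ?_ ?_ ?_ ?_ ?_ ?_).2
    · refine Filter.Eventually.of_forall fun x => Continuous.aestronglyMeasurable ?_
      unfold Jneum; fun_prop
    · apply Continuous.intervalIntegrable
      unfold Jneum; fun_prop
    · apply Continuous.aestronglyMeasurable
      fun_prop
    · refine Filter.Eventually.of_forall fun v _ x _ => ?_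
      rw [norm_mul]
      gcongr
      refine (norm_sub_le _ _).trans (add_le_add ((norm_sub_le _ _).trans (add_le_add ?_ (hC _)))
        (hC _))
      rw [norm_neg]; exact hC _
    · apply Continuous.intervalIntegrable
      fun_prop
    · refine Filter.Eventually.of_forall fun v _ x _ => ?_
      unfold Jneum
      have h1 := (hd (v - x)).comp x ((hasDerivAt_id x).const_sub v)
      have h2 := (hd (2 - v - x)).comp x ((hasDerivAt_id x).const_sub (2 - v))
      have h3 := (hd (-2 - v - x)).comp x ((hasDerivAt_id x).const_sub (-2 - v))
      exact (((h1.add h2).add h3).mul_const (π v)).congr_deriv (by ring)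
  rw [key.deriv]
  have ibp := intervalIntegral.integral_mul_deriv_eq_deriv_mul (a := (-1:ℝ)) (b := 1)
    (u := fun v => j (v - u) - j (2 - v - u) - j (-2 - v - u))
    (u' := fun v => deriv j (v - u) + deriv j (2 - v - u) + deriv j (-2 - v - u))
    (v := π) (v' := deriv π) (fun v _ => by
      have h1 := (hd (v - u)).comp v ((hasDerivAt_id v).sub_const u)
      have h2 := (hd (2 - v - u)).comp v (((hasDerivAt_id v).const_sub 2).sub_const u)
      have h3 := (hd (-2 - v - u)).comp v (((hasDerivAt_id v).const_sub (-2)).sub_const u)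
      exact ((h1.sub h2).sub h3).congr_deriv (by ring))
    (fun v _ => hpd v)
    (Continuous.intervalIntegrable (by fun_prop) _ _)
    (Continuous.intervalIntegrable (by fun_prop) _ _)
  rw [ibp]
  have z1 : j (-2 - 1 - u) = 0 := by
    apply hj_supp
    rw [abs_of_neg (by linarith [hu.1])]
    linarith [hu.1]
  have z2 : j (2 - (-1) - u) = 0 := by
    apply hj_supp
    rw [abs_of_pos (by linarith [hu.2])]
    linarith [hu.2]
  have z3 : j (2 - 1 - u) = j (1 - u) := by congr 1; ring
  have z4 : j (-2 - (-1) - u) = j (-1 - u) := by congr 1; ring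
  simp only [z1, z2, z3, z4]
  simp only [sub_self, sub_zero, zero_mul, zero_sub]
  rw [← intervalIntegral.integral_neg]
  congr 1
  ext v
  ring

/-- for every `C¹` density `π : [-1,1] → [0,1]`,
`∫ σ(π) (d/du (J^neum ⋆ π))² ≤ (1/2) ∫ (π')²`. -/
theorem conv_energy_bound
    (j : ℝ → ℝ)
    (hj_smooth : ContDiff ℝ 1 j)
    (hj_nonneg : ∀ u, 0 ≤ j u)
    (hj_even : ∀ u, j (-u) = j u)
    (hj_supp : ∀ u : ℝ, 1 < |u| → j u = 0)
    (hj_int : (∫ u : ℝ, j u) = 1)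
    (π : ℝ → ℝ) (hπ : ContDiff ℝ 1 π)
    (hπ_range : ∀ u ∈ Icc (-1:ℝ) 1, π u ∈ Icc (0:ℝ) 1) :
    ∫ u in (-1:ℝ)..1, sigmaMob (π u) * (deriv (convJ j π) u)^2 ≤
      (1/2) * ∫ v in (-1:ℝ)..1, (deriv π v)^2 := by
  have hc : Continuous j := hj_smooth.continuous
  have hpc : Continuous π := hπ.continuous
  have hpdc : Continuous (deriv π) := hπ.continuous_deriv le_rfl
  have hle : (-1:ℝ) ≤ 1 := by norm_num
  set D : ℝ → ℝ := fun u =>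
    ∫ v in (-1:ℝ)..1, (j (v - u) - j (2 - v - u) - j (-2 - v - u)) * deriv π v with hD
  have hJc : Continuous (Function.uncurry (Jneum j)) := by
    unfold Jneum Function.uncurry; fun_prop
  have hJu : ∀ u, Continuous (Jneum j u) := fun u => by unfold Jneum; fun_prop
  have hDc : Continuous D := by
    apply intervalIntegral.continuous_parametric_intervalIntegral_of_continuous'
    unfold Function.uncurry; fun_prop
  have hFc : Continuous (Function.uncurry fun u v => Jneum j u v * (deriv π v)^2) := by
    unfold Jneum Function.uncurry; fun_prop
  have hBc : Continuous fun u => ∫ v in (-1:ℝ)..1, Jneum j u v * (deriv π v)^2 :=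
    intervalIntegral.continuous_parametric_intervalIntegral_of_continuous' hFc _ _
  -- Cauchy-Schwarz
  have hCS : ∀ u, (D u)^2 ≤ ∫ v in (-1:ℝ)..1, Jneum j u v * (deriv π v)^2 := by
    intro u
    have hm := aux_mass j hc hj_nonneg hj_int u
    have i1 : IntervalIntegrable (fun v => Jneum j u v * (D u)^2) volume (-1) 1 :=
      Continuous.intervalIntegrable (by have := hJu u; fun_prop) _ _
    have i2 : IntervalIntegrable (fun v => Jneum j u v * (deriv π v)^2) volume (-1) 1 :=
      Continuous.intervalIntegrable (by have := hJu u; fun_prop) _ _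
    have h : ∫ v in (-1:ℝ)..1,
        (2 * D u) * ((j (v - u) - j (2 - v - u) - j (-2 - v - u)) * deriv π v) ≤
        ∫ v in (-1:ℝ)..1, (Jneum j u v * (D u)^2 + Jneum j u v * (deriv π v)^2) := by
      apply intervalIntegral.integral_mono_on hle
      · exact Continuous.intervalIntegrable (by fun_prop) _ _
      · exact i1.add i2
      · intro v _
        unfold Jneum
        have a := hj_nonneg (v - u)
        have b := hj_nonneg (2 - v - u)
        have c := hj_nonneg (-2 - v - u)
        have p := mul_nonneg a (sq_nonneg (D u - deriv π v))
        have q := mul_nonneg b (sq_nonneg (D u + deriv π v))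
        have r := mul_nonneg c (sq_nonneg (D u + deriv π v))
        linarith
    rw [intervalIntegral.integral_const_mul, intervalIntegral.integral_add i1 i2,
      intervalIntegral.integral_mul_const] at h
    change 2 * D u * D u ≤ _ at h
    have := mul_le_mul_of_nonneg_right hm (sq_nonneg (D u))
    linarith
  calc ∫ u in (-1:ℝ)..1, sigmaMob (π u) * (deriv (convJ j π) u)^2
      = ∫ u in (-1:ℝ)..1, sigmaMob (π u) * (D u)^2 := by
        apply intervalIntegral.integral_congr
        intro u hu
        rw [uIcc_of_le hle] at hu
        simp only [aux_deriv_s12 j hj_smooth hj_supp π hπ u hu, hD]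
    _ ≤ ∫ u in (-1:ℝ)..1, (1/2) * ∫ v in (-1:ℝ)..1, Jneum j u v * (deriv π v)^2 := by
        apply intervalIntegral.integral_mono_on hle
        · exact Continuous.intervalIntegrable (by unfold sigmaMob; fun_prop) _ _
        · exact Continuous.intervalIntegrable (by fun_prop) _ _
        · intro u _
          have hs : sigmaMob (π u) ≤ 1/2 := by
            unfold sigmaMob; nlinarith [sq_nonneg (2 * π u - 1)]
          have := mul_le_mul_of_nonneg_right hs (sq_nonneg (D u))
          linarith [hCS u]
    _ = (1/2) * ∫ v in (-1:ℝ)..1, ∫ u in (-1:ℝ)..1, Jneum j u v * (deriv π v)^2 := by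
        rw [intervalIntegral.integral_const_mul, intervalIntegral_intervalIntegral_swap]
        refine IntegrableOn.mono_set (t := Icc (-1:ℝ) 1 ×ˢ Icc (-1:ℝ) 1) ?_ ?_
        · exact hFc.continuousOn.integrableOn_compact (isCompact_Icc.prod isCompact_Icc)
        · rw [uIoc_of_le hle]
          exact prod_mono Ioc_subset_Icc_self Ioc_subset_Icc_self
    _ ≤ (1/2) * ∫ v in (-1:ℝ)..1, (deriv π v)^2 := by
        apply mul_le_mul_of_nonneg_left _ (by norm_num)
        have hsym : ∀ u v, Jneum j u v = Jneum j v u := by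
          intro u v
          unfold Jneum
          rw [← hj_even (v - u)]
          congr 1
          · congr 1
            · congr 1; ring
            · congr 1; ring
          · congr 1; ring
        have hin : ∀ v, ∫ u in (-1:ℝ)..1, Jneum j u v * (deriv π v)^2 =
            (∫ u in (-1:ℝ)..1, Jneum j v u) * (deriv π v)^2 := by
          intro v
          rw [intervalIntegral.integral_mul_const]
          simp_rw [fun u => hsym u v]
        simp_rw [hin]
        have hMc : Continuous fun v => ∫ u in (-1:ℝ)..1, Jneum j v u :=
          intervalIntegral.continuous_parametric_intervalIntegral_of_continuous' hJc _ _
        apply intervalIntegral.integral_mono_on hle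
        · exact Continuous.intervalIntegrable (by fun_prop) _ _
        · exact Continuous.intervalIntegrable (by fun_prop) _ _
        · intro v _
          have := mul_le_mul_of_nonneg_right (aux_mass j hc hj_nonneg hj_int v)
            (sq_nonneg (deriv π v))
          linarith

end
end

section
/- For every β ≥ 0, every continuous ρ_1 : [-1,1] → [0,1] and every C^1 function v : [-1,1] → ℝ, ∫_{-1}^{1} v'(u) [ v'(u) - β χ(ρ_1(u)) d/du (J^neum ⋆ v)(u) ] du ≥ (1 - β/4) ∫_{-1}^{1} (v'(u))² du. -/
open MeasureTheory Set

noncomputable section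

/-- Mobility `χ(ρ) = ρ(1-ρ)`. -/
def chi (ρ : ℝ) : ℝ := ρ * (1 - ρ)

def Dk (j : ℝ → ℝ) (u y : ℝ) : ℝ := j (y - u) - j (2 - y - u) - j (-2 - y - u)

lemma deriv_convJ_eq (j : ℝ → ℝ) (hj : ContDiff ℝ 1 j)
    (hj_supp : ∀ u : ℝ, 1 < |u| → j u = 0)
    (v : ℝ → ℝ) (hv : ContDiff ℝ 1 v) (u : ℝ) (hu : u ∈ Icc (-1:ℝ) 1)
    (hj_even : ∀ u, j (-u) = j u) :
    deriv (convJ j v) u = ∫ y in (-1:ℝ)..1, Dk j u y * deriv v y := by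
  have cj : Continuous j := hj.continuous
  have cj' : Continuous (deriv j) := hj.continuous_deriv le_rfl
  have cv : Continuous v := hv.continuous
  have cv' : Continuous (deriv v) := hv.continuous_deriv le_rfl
  have dj : ∀ x, HasDerivAt j (deriv j x) x := fun x =>
    (hj.differentiable one_ne_zero x).hasDerivAt
  have dv : ∀ x, HasDerivAt v (deriv v x) x := fun x =>
    (hv.differentiable one_ne_zero x).hasDerivAt
  let E : ℝ → ℝ → ℝ := fun u y =>
    - deriv j (y - u) - deriv j (2 - y - u) - deriv j (-2 - y - u)
  have cE : Continuous (fun p : ℝ × ℝ => E p.1 p.2 * v p.2) := by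
    dsimp only [E]; fun_prop
  obtain ⟨C, hC⟩ := ((isCompact_Icc (a := u - 1) (b := u + 1)).prod
    (isCompact_Icc (a := (-1:ℝ)) (b := 1))).exists_bound_of_continuousOn cE.continuousOn
  have h1 : HasDerivAt (convJ j v) (∫ y in (-1:ℝ)..1, E u y * v y) u := by
    have hm : ∀ x, Continuous (fun y => Jneum j x y * v y) := by
      intro x; unfold Jneum; fun_prop
    refine (intervalIntegral.hasDerivAt_integral_of_dominated_loc_of_deriv_le
      (F := fun x y => Jneum j x y * v y) (F' := fun x y => E x y * v y)
      (bound := fun _ => C) (Metric.ball_mem_nhds u one_pos)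
      (Filter.Eventually.of_forall fun x => (hm x).aestronglyMeasurable)
      ((hm u).intervalIntegrable _ _)
      (Continuous.aestronglyMeasurable (by dsimp only [E]; fun_prop)) ?_ (by simp) ?_).2
    · refine Filter.Eventually.of_forall fun t ht x hx => ?_
      rw [uIoc_of_le (by norm_num)] at ht
      rw [Metric.mem_ball, Real.dist_eq, abs_lt] at hx
      exact hC (x, t) ⟨⟨by linarith, by linarith⟩, ⟨ht.1.le, ht.2⟩⟩
    · refine Filter.Eventually.of_forall fun t ht x hx => ?_
      refine HasDerivAt.mul_const ?_ _
      have a1 : HasDerivAt (fun x => j (t - x)) (- deriv j (t - x)) x := by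
        exact HasDerivAt.congr_deriv ((dj (t - x)).comp x ((hasDerivAt_id x).const_sub t)) (by simp)
      have a2 : HasDerivAt (fun x => j (2 - t - x)) (- deriv j (2 - t - x)) x := by
        exact HasDerivAt.congr_deriv ((dj (2 - t - x)).comp x ((hasDerivAt_id x).const_sub (2 - t))) (by simp)
      have a3 : HasDerivAt (fun x => j (-2 - t - x)) (- deriv j (-2 - t - x)) x := by
        exact HasDerivAt.congr_deriv ((dj (-2 - t - x)).comp x ((hasDerivAt_id x).const_sub (-2 - t))) (by simp)
      exact ((a1.add a2).add a3).congr_deriv (by dsimp only [E]; ring)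
  rw [h1.deriv]
  have h2 := intervalIntegral.integral_mul_deriv_eq_deriv_mul (a := -1) (b := 1)
    (u := Dk j u) (v := v) (u' := fun y => - E u y) (v' := deriv v) (fun y _ => by
      have a1 : HasDerivAt (fun y => j (y - u)) (deriv j (y - u)) y := by
        exact HasDerivAt.congr_deriv ((dj (y - u)).comp y ((hasDerivAt_id y).sub_const u)) (by simp)
      have a2 : HasDerivAt (fun y => j (2 - y - u)) (- deriv j (2 - y - u)) y := by
        exact HasDerivAt.congr_deriv ((dj (2 - y - u)).comp y (((hasDerivAt_id y).const_sub 2).sub_const u)) (by simp)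
      have a3 : HasDerivAt (fun y => j (-2 - y - u)) (- deriv j (-2 - y - u)) y := by
        exact HasDerivAt.congr_deriv ((dj (-2 - y - u)).comp y (((hasDerivAt_id y).const_sub (-2)).sub_const u)) (by simp)
      exact ((a1.sub a2).sub a3).congr_deriv (by dsimp only [E]; ring))
    (fun y _ => dv y)
    (Continuous.intervalIntegrable (by dsimp only [E]; fun_prop) _ _)
    (cv'.intervalIntegrable _ _)
  have b1 : Dk j u 1 = 0 := by
    unfold Dk
    rw [hj_supp (-2 - 1 - u) (by rw [lt_abs]; right; linarith [hu.1])]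
    norm_num
  have b2 : Dk j u (-1) = 0 := by
    unfold Dk
    rw [hj_supp (2 - -1 - u) (by rw [lt_abs]; left; linarith [hu.2])]
    norm_num
  rw [h2, b1, b2]
  simp

lemma integral_Jneum (j : ℝ → ℝ) (cj : Continuous j)
    (hj_supp : ∀ u : ℝ, 1 < |u| → j u = 0)
    (hj_int : (∫ u : ℝ, j u) = 1) (u : ℝ) (hu : u ∈ Icc (-1:ℝ) 1) :
    ∫ y in (-1:ℝ)..1, Jneum j u y = 1 := by
  have ii : ∀ a b, IntervalIntegrable j volume a b := fun a b => cj.intervalIntegrable a b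
  unfold Jneum
  rw [intervalIntegral.integral_add (Continuous.intervalIntegrable (by fun_prop) _ _)
      (Continuous.intervalIntegrable (by fun_prop) _ _),
    intervalIntegral.integral_add (Continuous.intervalIntegrable (by fun_prop) _ _)
      (Continuous.intervalIntegrable (by fun_prop) _ _)]
  have e1 : ∫ y in (-1:ℝ)..1, j (y - u) = ∫ y in (-1 - u)..(1 - u), j y :=
    intervalIntegral.integral_comp_sub_right j u
  have e2 : ∫ y in (-1:ℝ)..1, j (2 - y - u) = ∫ y in (1 - u)..(3 - u), j y := by
    have := intervalIntegral.integral_comp_sub_left (a := -1) (b := 1) j (2 - u)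
    rw [show (2 - u - 1) = 1 - u by ring, show 2 - u - -1 = 3 - u by ring] at this
    rw [← this]; congr 1; ext y; congr 1; ring
  have e3 : ∫ y in (-1:ℝ)..1, j (-2 - y - u) = ∫ y in (-3 - u)..(-1 - u), j y := by
    have := intervalIntegral.integral_comp_sub_left (a := -1) (b := 1) j (-2 - u)
    rw [show (-2 - u - 1) = -3 - u by ring, show -2 - u - -1 = -1 - u by ring] at this
    rw [← this]; congr 1; ext y; congr 1; ring
  rw [e1, e2, e3, intervalIntegral.integral_add_adjacent_intervals (ii _ _) (ii _ _), add_comm,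
    intervalIntegral.integral_add_adjacent_intervals (ii _ _) (ii _ _), ← hj_int]
  apply intervalIntegral.integral_eq_integral_of_support_subset
  intro x hx
  have : |x| ≤ 1 := by
    by_contra h
    exact hx (hj_supp x (not_le.mp h))
  rw [abs_le] at this
  exact ⟨by linarith [hu.1, hu.2], by linarith [hu.1, hu.2]⟩

/-- coercivity of the nonlocal elliptic operator:
`∫ v' (v' - β χ(ρ₁) (J^neum ⋆ v)') ≥ (1 - β/4) ∫ (v')²`. -/
theorem nonlocal_coercivity
    (j : ℝ → ℝ)
    (hj_smooth : ContDiff ℝ 1 j)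
    (hj_nonneg : ∀ u, 0 ≤ j u)
    (hj_even : ∀ u, j (-u) = j u)
    (hj_supp : ∀ u : ℝ, 1 < |u| → j u = 0)
    (hj_int : (∫ u : ℝ, j u) = 1)
    (β : ℝ) (hβ : 0 ≤ β)
    (ρ₁ : ℝ → ℝ) (hρ₁_cont : ContinuousOn ρ₁ (Icc (-1:ℝ) 1))
    (hρ₁_range : ∀ u ∈ Icc (-1:ℝ) 1, ρ₁ u ∈ Icc (0:ℝ) 1)
    (v : ℝ → ℝ) (hv : ContDiff ℝ 1 v) :
    (1 - β/4) * ∫ u in (-1:ℝ)..1, (deriv v u)^2 ≤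
      ∫ u in (-1:ℝ)..1, deriv v u * (deriv v u - β * chi (ρ₁ u) * deriv (convJ j v) u) := by
  have cj : Continuous j := hj_smooth.continuous
  have cw : Continuous (deriv v) := hv.continuous_deriv le_rfl
  have hd : ∀ u ∈ Icc (-1:ℝ) 1, deriv (convJ j v) u = ∫ y in (-1:ℝ)..1, Dk j u y * deriv v y :=
    fun u hu => deriv_convJ_eq j hj_smooth hj_supp v hv u hu hj_even
  set w := deriv v with hw
  have cD : Continuous (fun u => ∫ y in (-1:ℝ)..1, Dk j u y * w y) := by
    apply intervalIntegral.continuous_parametric_intervalIntegral_of_continuous'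
    simp only [Function.uncurry_def]; unfold Dk; fun_prop
  have cJ2 : Continuous (fun p : ℝ × ℝ => Jneum j p.1 p.2 * w p.2 ^ 2) := by
    unfold Jneum; fun_prop
  have cJ : Continuous (fun u => ∫ y in (-1:ℝ)..1, Jneum j u y * w y ^ 2) := by
    apply intervalIntegral.continuous_parametric_intervalIntegral_of_continuous'
    exact cJ2
  have sym : ∀ u y, Jneum j u y = Jneum j y u := by
    intro u y
    unfold Jneum
    rw [← hj_even (y - u)]
    congr 2 <;> ring_nf
  have swap : ∫ u in (-1:ℝ)..1, ∫ y in (-1:ℝ)..1, Jneum j u y * w y ^ 2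
      = ∫ y in (-1:ℝ)..1, w y ^ 2 := by
    rw [MeasureTheory.intervalIntegral_intervalIntegral_swap]
    · apply intervalIntegral.integral_congr
      intro y hy
      rw [uIcc_of_le (by norm_num)] at hy
      simp only [intervalIntegral.integral_mul_const]
      simp_rw [fun u => sym u y]
      rw [integral_Jneum j cj hj_supp hj_int y hy, one_mul]
    · rw [uIoc_of_le (by norm_num)]
      exact (cJ2.continuousOn.integrableOn_compact
        ((isCompact_Icc (a := (-1:ℝ)) (b := 1)).prod
          (isCompact_Icc (a := (-1:ℝ)) (b := 1)))).mono_set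
        (prod_mono Ioc_subset_Icc_self Ioc_subset_Icc_self)
  have key : ∀ u ∈ Icc (-1:ℝ) 1, |w u * deriv (convJ j v) u| ≤
      w u ^ 2 / 2 + (∫ y in (-1:ℝ)..1, Jneum j u y * w y ^ 2) / 2 := by
    intro u hu
    rw [hd u hu, ← intervalIntegral.integral_const_mul]
    have e : w u ^ 2 / 2 + (∫ y in (-1:ℝ)..1, Jneum j u y * w y ^ 2) / 2 =
        ∫ y in (-1:ℝ)..1, (Jneum j u y * (w u ^ 2 / 2) + Jneum j u y * w y ^ 2 / 2) := by
      rw [intervalIntegral.integral_add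
        (Continuous.intervalIntegrable (by unfold Jneum; fun_prop) _ _)
        (Continuous.intervalIntegrable (by unfold Jneum; fun_prop) _ _),
        intervalIntegral.integral_mul_const, intervalIntegral.integral_div,
        integral_Jneum j cj hj_supp hj_int u hu, one_mul]
    rw [e]
    refine (intervalIntegral.abs_integral_le_integral_abs (by norm_num)).trans ?_
    refine intervalIntegral.integral_mono_on (by norm_num)
      (Continuous.intervalIntegrable (by unfold Dk; fun_prop) _ _)
      (Continuous.intervalIntegrable (by unfold Jneum; fun_prop) _ _) ?_
    intro y _
    have hDJ : |Dk j u y| ≤ Jneum j u y := by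
      unfold Dk Jneum
      rw [abs_le]
      constructor <;> linarith [hj_nonneg (y - u), hj_nonneg (2 - y - u), hj_nonneg (-2 - y - u)]
    have hww : |w u * w y| ≤ w u ^ 2 / 2 + w y ^ 2 / 2 := by
      rw [abs_le]
      constructor <;> nlinarith [sq_nonneg (w u - w y), sq_nonneg (w u + w y)]
    calc |w u * (Dk j u y * w y)| = |Dk j u y| * |w u * w y| := by
          rw [← abs_mul]; congr 1; ring
      _ ≤ Jneum j u y * (w u ^ 2 / 2 + w y ^ 2 / 2) :=
          mul_le_mul hDJ hww (abs_nonneg _) ((abs_nonneg _).trans hDJ)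
      _ = _ := by ring
  have cchi : ContinuousOn (fun u => chi (ρ₁ u)) (Icc (-1:ℝ) 1) := by
    unfold chi; exact hρ₁_cont.mul (continuousOn_const.sub hρ₁_cont)
  have cdc : ContinuousOn (deriv (convJ j v)) (Icc (-1:ℝ) 1) := cD.continuousOn.congr hd
  have hR : IntervalIntegrable
      (fun u => w u * (w u - β * chi (ρ₁ u) * deriv (convJ j v) u)) volume (-1) 1 := by
    apply ContinuousOn.intervalIntegrable
    rw [uIcc_of_le (by norm_num)]
    exact cw.continuousOn.mul (cw.continuousOn.sub ((continuousOn_const.mul cchi).mul cdc))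
  have iw : IntervalIntegrable (fun u => w u ^ 2) volume (-1) 1 :=
    Continuous.intervalIntegrable (by fun_prop) _ _
  have iJ := cJ.intervalIntegrable (μ := volume) (-1) 1
  calc (1 - β/4) * ∫ u in (-1:ℝ)..1, w u ^ 2
      = ∫ u in (-1:ℝ)..1, ((1 - β/8) * w u ^ 2
          - β/8 * ∫ y in (-1:ℝ)..1, Jneum j u y * w y ^ 2) := by
        rw [intervalIntegral.integral_sub (iw.const_mul _) (iJ.const_mul _),
          intervalIntegral.integral_const_mul, intervalIntegral.integral_const_mul, swap]
        ring
    _ ≤ _ := by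
        refine intervalIntegral.integral_mono_on (by norm_num)
          ((iw.const_mul _).sub (iJ.const_mul _)) hR ?_
        intro u hu
        have hk := key u hu
        have hρ := hρ₁_range u hu
        have c0 : 0 ≤ chi (ρ₁ u) := mul_nonneg hρ.1 (by linarith [hρ.2])
        have c1 : chi (ρ₁ u) ≤ 1/4 := by unfold chi; nlinarith [sq_nonneg (ρ₁ u - 1/2)]
        have h3 : chi (ρ₁ u) * (w u * deriv (convJ j v) u) ≤
            1/4 * (w u ^ 2 / 2 + (∫ y in (-1:ℝ)..1, Jneum j u y * w y ^ 2) / 2) :=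
          (mul_le_mul_of_nonneg_left (le_abs_self _) c0).trans
            (mul_le_mul c1 hk (abs_nonneg _) (by norm_num))
        have h4 := mul_le_mul_of_nonneg_left h3 hβ
        linarith

end
end

section
/- For every β ≥ 0 and every T > 0, classical solutions of the nonlocal boundary value problem are unique: if ρ_1, ρ_2 are classical solutions of ∂_t ρ = ∂_u( ∂_u ρ - β χ(ρ) ∂_u (J^neum ⋆ ρ(t,·)) ) on (0,T) × (-1,1) with values in [0,1], with the same boundary values ρ_i(t,-1) = ρ_-, ρ_i(t,1) = ρ_+ for all t ∈ [0,T] and the same initial datum ρ_1(0,·) = ρ_2(0,·), then ρ_1 = ρ_2 on [0,T] × [-1,1]. -/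
open MeasureTheory Set

noncomputable section

/-- A classical solution on `[0,T]` of the nonlocal boundary value problem
`∂_t ρ = ∂_u(∂_u ρ - β χ(ρ) ∂_u (J^neum ⋆ ρ(t,·)))` on `(0,T) × (-1,1)`,
with values in `[0,1]` and boundary values `ρ(t,∓1) = ρ∓`. -/
structure ClassicalSol (j : ℝ → ℝ) (β ρm ρp T : ℝ) (ρ : ℝ → ℝ → ℝ) : Prop where
  cont : ContinuousOn (Function.uncurry ρ) (Icc 0 T ×ˢ Icc (-1:ℝ) 1)
  range : ∀ t ∈ Icc (0:ℝ) T, ∀ u ∈ Icc (-1:ℝ) 1, ρ t u ∈ Icc (0:ℝ) 1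
  bdry_left : ∀ t ∈ Icc (0:ℝ) T, ρ t (-1) = ρm
  bdry_right : ∀ t ∈ Icc (0:ℝ) T, ρ t 1 = ρp
  smooth_t : ∀ u ∈ Ioo (-1:ℝ) 1, ContDiffOn ℝ 1 (fun t => ρ t u) (Ioo 0 T)
  smooth_u : ∀ t ∈ Ioo (0:ℝ) T, ContDiffOn ℝ 2 (fun u => ρ t u) (Ioo (-1:ℝ) 1)
  du_ext : ∀ t ∈ Ioo (0:ℝ) T, ∃ g : ℝ → ℝ, ContinuousOn g (Icc (-1:ℝ) 1) ∧
      ∀ u ∈ Ioo (-1:ℝ) 1, g u = deriv (fun w => ρ t w) u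
  pde : ∀ t ∈ Ioo (0:ℝ) T, ∀ u ∈ Ioo (-1:ℝ) 1,
    deriv (fun s => ρ s u) t =
      deriv (fun w =>
        deriv (fun z => ρ t z) w - β * chi (ρ t w) * deriv (convJ j (fun z => ρ t z)) w) u

lemma second_deriv_max {g g' : ℝ → ℝ} {g'' x0 a b : ℝ} (hx : x0 ∈ Ioo a b)
    (h1 : ∀ x ∈ Ioo a b, HasDerivAt g (g' x) x) (h2 : HasDerivAt g' g'' x0)
    (hmax : ∀ x ∈ Ioo a b, g x ≤ g x0) : g' x0 = 0 ∧ g'' ≤ 0 := by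
  have hn : Ioo a b ∈ nhds x0 := Ioo_mem_nhds hx.1 hx.2
  have hlm : IsLocalMax g x0 := Filter.mem_of_superset hn hmax
  have h0 : g' x0 = 0 := hlm.hasDerivAt_eq_zero (h1 x0 hx)
  refine ⟨h0, ?_⟩
  by_contra hpos
  push Not at hpos
  have hd : deriv g =ᶠ[nhds x0] g' :=
    Filter.mem_of_superset hn (fun x hx => (h1 x hx).deriv)
  have hdd : deriv (deriv g) x0 = g'' := by rw [hd.deriv_eq]; exact h2.deriv
  have hmin : IsLocalMin g x0 := isLocalMin_of_deriv_deriv_pos (by rw [hdd]; exact hpos)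
    (by rw [(h1 x0 hx).deriv, h0]) (h1 x0 hx).continuousAt
  have heq : g =ᶠ[nhds x0] fun _ => g x0 := by
    filter_upwards [hlm, hmin] with x hx hx'
    exact le_antisymm hx hx'
  have : deriv (deriv g) x0 = 0 := by
    rw [heq.deriv.deriv_eq]; simp
  linarith

lemma left_deriv_max {h : ℝ → ℝ} {d s t1 t0 : ℝ} (h0 : t0 ∈ Ioc s t1)
    (hd : HasDerivWithinAt h d (Icc s t1) t0) (hmax : ∀ t ∈ Icc s t1, h t ≤ h t0) : 0 ≤ d := by
  have hd' : HasDerivWithinAt h d (Ioo s t0) t0 :=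
    hd.mono (fun t ht => ⟨ht.1.le, ht.2.le.trans h0.2⟩)
  rw [hasDerivWithinAt_iff_tendsto_slope' (by simp)] at hd'
  have : (nhdsWithin t0 (Ioo s t0)).NeBot := right_nhdsWithin_Ioo_neBot h0.1
  refine ge_of_tendsto hd' ?_
  filter_upwards [self_mem_nhdsWithin] with t ht
  rw [slope_def_field]
  apply div_nonneg_of_nonpos
  · have := hmax t ⟨ht.1.le, ht.2.le.trans h0.2⟩; linarith
  · linarith [ht.2]

theorem doubling (v vt vx vxx B f Φ Φt Φr Φrr : ℝ → ℝ → ℝ) (B0 s t1 : ℝ) (F : ℝ → ℝ)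
    (hc : ContinuousOn (Function.uncurry v) (Icc s t1 ×ˢ Icc (-1:ℝ) 1))
    (hl : ∀ t ∈ Icc s t1, v t (-1) = v s (-1))
    (hr : ∀ t ∈ Icc s t1, v t 1 = v s 1)
    (hvt : ∀ t ∈ Ioc s t1, ∀ x ∈ Ioo (-1:ℝ) 1, HasDerivAt (fun τ => v τ x) (vt t x) t)
    (hvx : ∀ t ∈ Ioc s t1, ∀ x ∈ Ioo (-1:ℝ) 1, HasDerivAt (v t) (vx t x) x)
    (hvxx : ∀ t ∈ Ioc s t1, ∀ x ∈ Ioo (-1:ℝ) 1, HasDerivAt (vx t) (vxx t x) x)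
    (hB : ∀ t ∈ Ioc s t1, ∀ x ∈ Ioo (-1:ℝ) 1, |B t x| ≤ B0)
    (hf : ∀ t ∈ Ioc s t1, ∀ x ∈ Ioo (-1:ℝ) 1, |f t x| ≤ F t)
    (hpde : ∀ t ∈ Ioc s t1, ∀ x ∈ Ioo (-1:ℝ) 1, vt t x = vxx t x - B t x * vx t x + f t x)
    (hΦ : ContinuousOn (Function.uncurry Φ) (Icc s t1 ×ˢ Icc (0:ℝ) 2))
    (hΦt : ∀ t ∈ Ioc s t1, ∀ r > 0, HasDerivAt (fun τ => Φ τ r) (Φt t r) t)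
    (hΦr : ∀ t ∈ Ioc s t1, ∀ r > 0, HasDerivAt (Φ t) (Φr t r) r)
    (hΦrr : ∀ t ∈ Ioc s t1, ∀ r > 0, HasDerivAt (Φr t) (Φrr t r) r)
    (hinit : ∀ x ∈ Icc (-1:ℝ) 1, ∀ y ∈ Icc (-1:ℝ) 1, y ≤ x → v s x - v s y ≤ Φ s (x - y))
    (hdiag : ∀ t ∈ Icc s t1, 0 ≤ Φ t 0)
    (hineq : ∀ t ∈ Ioc s t1, ∀ x ∈ Icc (-1:ℝ) 1, ∀ y ∈ Icc (-1:ℝ) 1, y < x →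
      Φ t (x - y) < v t x - v t y →
      0 ≤ Φr t (x - y) ∧
      2 * (Φrr t (x - y) + B0 * Φr t (x - y) + F t) < Φt t (x - y) ∧
      Φrr t (x - y) + B0 * Φr t (x - y) + F t < Φt t (x - y) ∧
      (x - y = 2 → 0 < Φt t (x - y))) :
    ∀ t ∈ Icc s t1, ∀ x ∈ Icc (-1:ℝ) 1, ∀ y ∈ Icc (-1:ℝ) 1, y ≤ x →
      v t x - v t y ≤ Φ t (x - y) := by
  intro t ht x hx y hy hyx
  by_contra hcon
  push Not at hcon
  let D : Set (ℝ × ℝ × ℝ) := (Icc s t1 ×ˢ (Icc (-1:ℝ) 1 ×ˢ Icc (-1:ℝ) 1)) ∩ {p | p.2.2 ≤ p.2.1}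
  have hD : IsCompact D := by
    apply IsCompact.inter_right
    · exact isCompact_Icc.prod (isCompact_Icc.prod isCompact_Icc)
    · exact isClosed_le (by fun_prop) (by fun_prop)
  let ψ : ℝ × ℝ × ℝ → ℝ := fun p => v p.1 p.2.1 - v p.1 p.2.2 - Φ p.1 (p.2.1 - p.2.2)
  have hψ : ContinuousOn ψ D := by
    have e1 : ContinuousOn (fun p : ℝ × ℝ × ℝ => v p.1 p.2.1) D := by
      have := hc.comp (f := fun p : ℝ × ℝ × ℝ => (p.1, p.2.1)) (s := D) (by fun_prop)
        (fun p hp => ⟨hp.1.1, hp.1.2.1⟩)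
      exact this
    have e2 : ContinuousOn (fun p : ℝ × ℝ × ℝ => v p.1 p.2.2) D := by
      have := hc.comp (f := fun p : ℝ × ℝ × ℝ => (p.1, p.2.2)) (s := D) (by fun_prop)
        (fun p hp => ⟨hp.1.1, hp.1.2.2⟩)
      exact this
    have e3 : ContinuousOn (fun p : ℝ × ℝ × ℝ => Φ p.1 (p.2.1 - p.2.2)) D := by
      have := hΦ.comp (f := fun p : ℝ × ℝ × ℝ => (p.1, p.2.1 - p.2.2)) (s := D) (by fun_prop)
        (fun p hp => ⟨hp.1.1, by
          have h1 := hp.1.2.1.2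
          have h2 := hp.1.2.2.1
          have h3 : p.2.2 ≤ p.2.1 := hp.2
          exact ⟨by linarith, by linarith⟩⟩)
      exact this
    exact (e1.sub e2).sub e3
  obtain ⟨⟨t0, x0, y0⟩, hp, hmax⟩ := hD.exists_isMaxOn ⟨(t, x, y), ⟨ht, hx, hy⟩, hyx⟩ hψ
  have hpos : 0 < ψ (t0, x0, y0) := by
    have := hmax (show (t, x, y) ∈ D from ⟨⟨ht, hx, hy⟩, hyx⟩)
    simp only [ψ, Set.mem_ofPred_eq] at this ⊢
    linarith
  obtain ⟨⟨ht0, hx0, hy0⟩, hyx0⟩ := hp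
  simp only [Set.mem_ofPred_eq] at ht0 hx0 hy0 hyx0
  simp only [ψ] at hpos
  have hmax' : ∀ t ∈ Icc s t1, ∀ x ∈ Icc (-1:ℝ) 1, ∀ y ∈ Icc (-1:ℝ) 1, y ≤ x →
      v t x - v t y - Φ t (x - y) ≤ v t0 x0 - v t0 y0 - Φ t0 (x0 - y0) := by
    intro t ht x hx y hy hyx
    exact hmax (show (t, x, y) ∈ D from ⟨⟨ht, hx, hy⟩, hyx⟩)
  have hne : y0 < x0 := by
    rcases hyx0.lt_or_eq with h | h
    · exact h
    · exfalso; subst h; have := hdiag t0 ht0; simp at hpos; linarith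
  have hts : t0 ∈ Ioc s t1 := by
    refine ⟨?_, ht0.2⟩
    rcases ht0.1.lt_or_eq with h | h
    · exact h
    · exfalso; subst h; have := hinit x0 hx0 y0 hy0 hyx0; linarith
  have hrpos : 0 < x0 - y0 := by linarith
  obtain ⟨i0, i2, i1, i3⟩ := hineq t0 hts x0 hx0 y0 hy0 hne (by linarith)
  set X := Φrr t0 (x0 - y0) + B0 * Φr t0 (x0 - y0) + F t0 with hX
  -- spatial information
  have hxint : x0 ∈ Ioo (-1:ℝ) 1 → vt t0 x0 ≤ X := by
    intro hxi
    have hm : x0 ∈ Ioo y0 1 := ⟨hne, hxi.2⟩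
    obtain ⟨q1, q2⟩ := second_deriv_max (g := fun x => v t0 x - Φ t0 (x - y0))
      (g' := fun x => vx t0 x - Φr t0 (x - y0)) (g'' := vxx t0 x0 - Φrr t0 (x0 - y0)) hm
      (by
        intro x hx
        exact (hvx t0 hts x ⟨by linarith [hx.1, hy0.1], hx.2⟩).sub
          ((hΦr t0 hts (x - y0) (by linarith [hx.1])).comp_sub_const x y0))
      ((hvxx t0 hts x0 hxi).sub ((hΦrr t0 hts (x0 - y0) hrpos).comp_sub_const x0 y0))
      (by
        intro x hx
        have := hmax' t0 ht0 x ⟨by linarith [hx.1, hy0.1], hx.2.le⟩ y0 hy0 hx.1.le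
        linarith)
    rw [hpde t0 hts x0 hxi, show vx t0 x0 = Φr t0 (x0 - y0) by linarith]
    have b1 := abs_le.1 (hB t0 hts x0 hxi)
    have b2 := abs_le.1 (hf t0 hts x0 hxi)
    have := mul_nonneg (by linarith [b1.1] : 0 ≤ B0 + B t0 x0) i0
    rw [hX]; nlinarith [b2.2]
  have hyint : y0 ∈ Ioo (-1:ℝ) 1 → - vt t0 y0 ≤ X := by
    intro hyi
    have hm : y0 ∈ Ioo (-1) x0 := ⟨hyi.1, hne⟩
    obtain ⟨q1, q2⟩ := second_deriv_max (g := fun y => - v t0 y - Φ t0 (x0 - y))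
      (g' := fun y => - vx t0 y - -(Φr t0 (x0 - y))) (g'' := - vxx t0 y0 - Φrr t0 (x0 - y0)) hm
      (by
        intro y hy
        exact (hvx t0 hts y ⟨hy.1, by linarith [hy.2, hx0.2]⟩).neg.sub
          ((hΦr t0 hts (x0 - y) (by linarith [hy.2])).comp_const_sub x0 y))
      (by
        have := (hvxx t0 hts y0 hyi).neg.sub
          (((hΦrr t0 hts (x0 - y0) hrpos).comp_const_sub x0 y0).neg)
        refine this.congr_deriv ?_
        ring)
      (by
        intro y hy
        have := hmax' t0 ht0 x0 hx0 y ⟨hy.1.le, by linarith [hy.2, hx0.2]⟩ hy.2.le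
        linarith)
    rw [hpde t0 hts y0 hyi, show vx t0 y0 = Φr t0 (x0 - y0) by linarith]
    have b1 := abs_le.1 (hB t0 hts y0 hyi)
    have b2 := abs_le.1 (hf t0 hts y0 hyi)
    have := mul_nonneg (by linarith [b1.2] : 0 ≤ B0 - B t0 y0) i0
    rw [hX]; nlinarith [b2.2]
  have key : ∀ a c, HasDerivWithinAt (fun τ => v τ x0) a (Icc s t1) t0 →
      HasDerivWithinAt (fun τ => v τ y0) c (Icc s t1) t0 → Φt t0 (x0 - y0) ≤ a - c := by
    intro a c ha hc'
    have := left_deriv_max (h := fun τ => v τ x0 - v τ y0 - Φ τ (x0 - y0)) hts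
      ((ha.sub hc').sub (hΦt t0 hts (x0 - y0) hrpos).hasDerivWithinAt)
      (fun t ht => hmax' t ht x0 hx0 y0 hy0 hyx0)
    linarith
  have hconst : ∀ z, (∀ t ∈ Icc s t1, v t z = v s z) →
      HasDerivWithinAt (fun τ => v τ z) 0 (Icc s t1) t0 := by
    intro z hz
    exact (hasDerivWithinAt_const t0 (Icc s t1) (v s z)).congr (fun t ht => hz t ht) (hz t0 ht0)
  by_cases hx1 : x0 = 1
  · by_cases hy1 : y0 = -1
    · have := key 0 0 (hconst _ (by rw [hx1]; exact hr)) (hconst _ (by rw [hy1]; exact hl))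
      have := i3 (by rw [hx1, hy1]; norm_num)
      linarith
    · have hyi : y0 ∈ Ioo (-1:ℝ) 1 := ⟨lt_of_le_of_ne hy0.1 (Ne.symm hy1), by linarith [hx0.2]⟩
      have := key 0 _ (hconst _ (by rw [hx1]; exact hr)) (hvt t0 hts y0 hyi).hasDerivWithinAt
      have := hyint hyi
      linarith
  · have hxi : x0 ∈ Ioo (-1:ℝ) 1 := ⟨by linarith [hy0.1], lt_of_le_of_ne hx0.2 hx1⟩
    by_cases hy1 : y0 = -1
    · have := key _ 0 (hvt t0 hts x0 hxi).hasDerivWithinAt (hconst _ (by rw [hy1]; exact hl))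
      have := hxint hxi
      linarith
    · have hyi : y0 ∈ Ioo (-1:ℝ) 1 := ⟨lt_of_le_of_ne hy0.1 (Ne.symm hy1), by linarith [hx0.2]⟩
      have := key _ _ (hvt t0 hts x0 hxi).hasDerivWithinAt (hvt t0 hts y0 hyi).hasDerivWithinAt
      have := hyint hyi
      have := hxint hxi
      linarith

lemma cont_sqrt_exp (s t1 : ℝ) : ContinuousOn (fun p : ℝ × ℝ =>
    Real.sqrt (p.1 - s) * (1 - Real.exp (-(p.2 / Real.sqrt (p.1 - s)))))
    (Icc s t1 ×ˢ Icc (0:ℝ) 2) := by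
  rintro ⟨t, r⟩ ⟨ht, hr⟩
  simp only at ht hr
  rcases ht.1.lt_or_eq with h | h
  · have : Real.sqrt (t - s) ≠ 0 := (Real.sqrt_pos.2 (by linarith)).ne'
    apply ContinuousAt.continuousWithinAt
    fun_prop (disch := assumption)
  · subst h
    have h1 : Filter.Tendsto (fun p : ℝ × ℝ => Real.sqrt (p.1 - s))
        (nhdsWithin (s, r) (Icc s t1 ×ˢ Icc (0:ℝ) 2)) (nhds 0) := by
      have : Continuous (fun p : ℝ × ℝ => Real.sqrt (p.1 - s)) := by fun_prop
      have := (this.tendsto (s, r)).mono_left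
        (nhdsWithin_le_nhds (s := (Icc s t1 ×ˢ Icc (0:ℝ) 2)))
      simpa using this
    unfold ContinuousWithinAt
    simp only [sub_self, Real.sqrt_zero, zero_mul]
    refine squeeze_zero' (g := fun p : ℝ × ℝ => Real.sqrt (p.1 - s)) ?_ ?_ h1
    · filter_upwards [self_mem_nhdsWithin] with p hp
      apply mul_nonneg (Real.sqrt_nonneg _)
      have : Real.exp (-(p.2 / Real.sqrt (p.1 - s))) ≤ 1 := by
        apply Real.exp_le_one_iff.2
        have := hp.2.1
        have : 0 ≤ p.2 / Real.sqrt (p.1 - s) := by positivity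
        linarith
      linarith
    · filter_upwards with p
      have := Real.exp_pos (-(p.2 / Real.sqrt (p.1 - s)))
      nlinarith [Real.sqrt_nonneg (p.1 - s)]

lemma deriv_sqrt_shift {t c : ℝ} (h : 0 < t - c) :
    HasDerivAt (fun τ => Real.sqrt (τ - c)) (1 / (2 * Real.sqrt (t - c))) t := by
  have := ((hasDerivAt_id t).sub_const c).sqrt (by simpa using h.ne')
  simpa using this

lemma exp_div_t {t c r : ℝ} (h : 0 < t - c) :
    HasDerivAt (fun τ => Real.exp (-(r / Real.sqrt (τ - c))))
      (Real.exp (-(r / Real.sqrt (t - c))) * (r / (2 * Real.sqrt (t - c) ^ 3))) t := by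
  have hp := Real.sqrt_pos.2 h
  have := (((hasDerivAt_const t r).div (deriv_sqrt_shift h) hp.ne').neg).exp
  refine this.congr_deriv ?_
  simp only [Pi.neg_apply, Pi.div_apply]
  field_simp
  ring

lemma exp_div_r (r q : ℝ) :
    HasDerivAt (fun r => Real.exp (-(r / q))) (-(Real.exp (-(r / q)) / q)) r := by
  have := (((hasDerivAt_id r).div_const q).neg).exp
  refine this.congr_deriv ?_
  simp only [Pi.neg_apply, id]
  ring

lemma alg_ineq {ε K P a B0 σ Q E2 b θ : ℝ} (hε : 0 < ε) (k1 : 0 ≤ K * P * (1 - a))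
    (k2 : 0 ≤ K * P * (1 / 2 - B0 * σ)) (k3 : 0 ≤ Q * E2 * (1 / 2 - B0 * θ))
    (k4 : 0 ≤ Q * (1 / 4 - E2 * (b - 1))) (k5 : 0 ≤ Q * (1 - E2 * (1 + b)))
    (k6 : 0 ≤ K * P) (k7 : 0 ≤ Q * E2) (hQ : 0 ≤ Q) :
    2 * (-(2 * K * P) - 8 * Q * E2 + B0 * (2 * K * (P * σ) + 8 * (Q * θ) * E2) + Q)
      < ε - K * (P * a) + 4 * Q * (1 - E2 - b * E2) ∧
    -(2 * K * P) - 8 * Q * E2 + B0 * (2 * K * (P * σ) + 8 * (Q * θ) * E2) + Q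
      < ε - K * (P * a) + 4 * Q * (1 - E2 - b * E2) := by
  constructor <;> linarith

set_option maxHeartbeats 1000000 in
theorem lip_est (v vt vx vxx B f : ℝ → ℝ → ℝ) (B0 s t1 K η F : ℝ)
    (hc : ContinuousOn (Function.uncurry v) (Icc s t1 ×ˢ Icc (-1:ℝ) 1))
    (hl : ∀ t ∈ Icc s t1, v t (-1) = v s (-1))
    (hr : ∀ t ∈ Icc s t1, v t 1 = v s 1)
    (hvt : ∀ t ∈ Ioc s t1, ∀ x ∈ Ioo (-1:ℝ) 1, HasDerivAt (fun τ => v τ x) (vt t x) t)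
    (hvx : ∀ t ∈ Ioc s t1, ∀ x ∈ Ioo (-1:ℝ) 1, HasDerivAt (v t) (vx t x) x)
    (hvxx : ∀ t ∈ Ioc s t1, ∀ x ∈ Ioo (-1:ℝ) 1, HasDerivAt (vx t) (vxx t x) x)
    (hB : ∀ t ∈ Ioc s t1, ∀ x ∈ Ioo (-1:ℝ) 1, |B t x| ≤ B0)
    (hf : ∀ t ∈ Ioc s t1, ∀ x ∈ Ioo (-1:ℝ) 1, |f t x| ≤ F / Real.sqrt (t - s))
    (hpde : ∀ t ∈ Ioc s t1, ∀ x ∈ Ioo (-1:ℝ) 1, vt t x = vxx t x - B t x * vx t x + f t x)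
    (hst : s ≤ t1) (hB0 : 0 ≤ B0) (hK : 0 ≤ K) (hη : 0 < η) (hF : 0 ≤ F)
    (hτ : Real.sqrt (t1 - s + η) ≤ 1) (hτB : B0 * Real.sqrt (t1 - s + η) ≤ 1 / 2)
    (hosc : K = 0 ∨ ∀ t ∈ Icc s t1, ∀ x ∈ Icc (-1:ℝ) 1, ∀ y ∈ Icc (-1:ℝ) 1, v t x - v t y ≤ K)
    (hinit : ∀ x ∈ Icc (-1:ℝ) 1, ∀ y ∈ Icc (-1:ℝ) 1, y ≤ x →
      v s x - v s y ≤ K / Real.sqrt η * (x - y)) :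
    ∀ t ∈ Ioc s t1, ∀ x ∈ Icc (-1:ℝ) 1, ∀ y ∈ Icc (-1:ℝ) 1, y ≤ x →
      v t x - v t y ≤ (2 * K / Real.sqrt (t - s + η) + 8 * F) * (x - y) ∧
      (K = 0 → v t x - v t y ≤ 8 * F * Real.sqrt (t - s)) := by
  have hηs : 0 < Real.sqrt η := Real.sqrt_pos.2 hη
  have main : ∀ ε > 0, ∀ t ∈ Icc s t1, ∀ x ∈ Icc (-1:ℝ) 1, ∀ y ∈ Icc (-1:ℝ) 1, y ≤ x →
      v t x - v t y ≤ ε * (t - s) + 2 * K * (1 - Real.exp (-((x - y) / Real.sqrt (t - (s - η)))))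
        + 8 * F * (Real.sqrt (t - s) * (1 - Real.exp (-((x - y) / Real.sqrt (t - s))))) := by
    intro ε hε
    refine doubling v vt vx vxx B f
      (fun t r => ε * (t - s) + 2 * K * (1 - Real.exp (-(r / Real.sqrt (t - (s - η)))))
        + 8 * F * (Real.sqrt (t - s) * (1 - Real.exp (-(r / Real.sqrt (t - s))))))
      (fun t r => ε - K * (Real.exp (-(r / Real.sqrt (t - (s - η)))) * r / Real.sqrt (t - (s - η)) ^ 3)
        + 8 * F * ((1 - Real.exp (-(r / Real.sqrt (t - s)))
          - r / Real.sqrt (t - s) * Real.exp (-(r / Real.sqrt (t - s)))) / (2 * Real.sqrt (t - s))))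
      (fun t r => 2 * K * (Real.exp (-(r / Real.sqrt (t - (s - η)))) / Real.sqrt (t - (s - η)))
        + 8 * F * Real.exp (-(r / Real.sqrt (t - s))))
      (fun t r => -(2 * K * (Real.exp (-(r / Real.sqrt (t - (s - η)))) / Real.sqrt (t - (s - η)) ^ 2))
        - 8 * F * (Real.exp (-(r / Real.sqrt (t - s))) / Real.sqrt (t - s)))
      B0 s t1 (fun t => F / Real.sqrt (t - s)) hc hl hr hvt hvx hvxx hB hf hpde ?_ ?_ ?_ ?_ ?_ ?_ ?_
    · -- continuity
      have h1 : ContinuousOn (fun p : ℝ × ℝ => ε * (p.1 - s) +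
          2 * K * (1 - Real.exp (-(p.2 / Real.sqrt (p.1 - (s - η)))))) (Icc s t1 ×ˢ Icc (0:ℝ) 2) := by
        rintro ⟨t, r⟩ ⟨ht, -⟩
        have : Real.sqrt (t - (s - η)) ≠ 0 := (Real.sqrt_pos.2 (by linarith [ht.1])).ne'
        apply ContinuousAt.continuousWithinAt
        fun_prop (disch := assumption)
      exact h1.add ((cont_sqrt_exp s t1).const_mul (8 * F))
    · intro t ht r hr
      have p1 : 0 < t - (s - η) := by linarith [ht.1]
      have p2 : 0 < t - s := by linarith [ht.1]
      have q1 := Real.sqrt_pos.2 p1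
      have q2 := Real.sqrt_pos.2 p2
      have d := ((((hasDerivAt_id t).sub_const s).const_mul ε).add
        (((exp_div_t (r := r) p1).const_sub 1).const_mul (2 * K))).add
        (((deriv_sqrt_shift p2).mul ((exp_div_t (r := r) p2).const_sub 1)).const_mul (8 * F))
      refine d.congr_deriv ?_
      field_simp
      ring
    · intro t ht r hr
      have d := (((exp_div_r r (Real.sqrt (t - (s - η)))).const_sub 1).const_mul (2 * K)).const_add
        (ε * (t - s))
      have d2 := d.add ((((exp_div_r r (Real.sqrt (t - s))).const_sub 1).const_mul
        (Real.sqrt (t - s))).const_mul (8 * F))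
      refine d2.congr_deriv ?_
      have q2 := Real.sqrt_pos.2 (show 0 < t - s by linarith [ht.1])
      field_simp
    · intro t ht r hr
      have d := ((exp_div_r r (Real.sqrt (t - (s - η)))).div_const
        (Real.sqrt (t - (s - η)))).const_mul (2 * K)
      have d2 := d.add ((exp_div_r r (Real.sqrt (t - s))).const_mul (8 * F))
      refine d2.congr_deriv ?_
      have q1 := Real.sqrt_pos.2 (show 0 < t - (s - η) by linarith [ht.1])
      have q2 := Real.sqrt_pos.2 (show 0 < t - s by linarith [ht.1])
      field_simp
      ring
    · intro x hx y hy hyx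
      have e0 : s - (s - η) = η := by ring
      simp only [sub_self, Real.sqrt_zero, zero_mul, mul_zero, zero_add, add_zero, e0]
      have hi := hinit x hx y hy hyx
      rcases hosc with h0 | hosc
      · subst h0; simpa using hi
      have ho := hosc s ⟨le_refl _, hst⟩ x hx y hy
      · have e1 : K / Real.sqrt η * (x - y) = K * ((x - y) / Real.sqrt η) := by ring
        rw [e1] at hi
        have ha : 0 ≤ (x - y) / Real.sqrt η := div_nonneg (by linarith) hηs.le
        set a := (x - y) / Real.sqrt η
        have hexp : Real.exp (-a) * (1 + a) ≤ 1 := by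
          have := Real.add_one_le_exp a
          have h2 : Real.exp (-a) * Real.exp a = 1 := by rw [← Real.exp_add]; simp
          nlinarith [Real.exp_pos (-a)]
        rcases le_total a 1 with h | h
        · have : a ≤ 2 * (1 - Real.exp (-a)) := by
            have : Real.exp (-a) ≤ 1 / (1 + a) := by
              rw [le_div_iff₀ (by linarith)]; exact hexp
            have h3 : 1 / (1 + a) ≤ 1 - a / 2 := by
              rw [div_le_iff₀ (by linarith)]; nlinarith
            linarith
          nlinarith
        · have : Real.exp (-a) ≤ 1 / 2 := by nlinarith [Real.exp_pos (-a)]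
          nlinarith
    · intro t ht
      have := ht.1
      simp
      nlinarith
    · intro t ht x hx y hy hyx hviol
      have p1 : 0 < t - (s - η) := by linarith [ht.1]
      have p2 : 0 < t - s := by linarith [ht.1]
      have q1 := Real.sqrt_pos.2 p1
      have q2 := Real.sqrt_pos.2 p2
      have m1 : Real.sqrt (t - (s - η)) ≤ Real.sqrt (t1 - s + η) := Real.sqrt_le_sqrt (by linarith [ht.2])
      have m2 : Real.sqrt (t - s) ≤ Real.sqrt (t1 - s + η) := Real.sqrt_le_sqrt (by linarith [ht.2])
      set σ := Real.sqrt (t - (s - η))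
      set θ := Real.sqrt (t - s)
      have hσB : B0 * σ ≤ 1 / 2 := (mul_le_mul_of_nonneg_left m1 hB0).trans hτB
      have hθB : B0 * θ ≤ 1 / 2 := (mul_le_mul_of_nonneg_left m2 hB0).trans hτB
      have hrp : 0 < x - y := by linarith
      set r := x - y with hrdef
      have ha : 0 < r / σ := by positivity
      have hb : 0 < r / θ := by positivity
      have hra : r = r / σ * σ := by field_simp
      have hE := Real.exp_pos (-(r / σ))
      have hE2 := Real.exp_pos (-(r / θ))
      have hEa : Real.exp (-(r / σ)) * (1 + r / σ) ≤ 1 := by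
        have := Real.add_one_le_exp (r / σ)
        have h2 : Real.exp (-(r / σ)) * Real.exp (r / σ) = 1 := by rw [← Real.exp_add]; simp
        nlinarith
      have hEb : Real.exp (-(r / θ)) * (1 + r / θ) ≤ 1 := by
        have := Real.add_one_le_exp (r / θ)
        have h2 : Real.exp (-(r / θ)) * Real.exp (r / θ) = 1 := by rw [← Real.exp_add]; simp
        nlinarith
      have hEb2 : Real.exp (-(r / θ)) * (r / θ - 1) ≤ 1 / 4 := by
        have h1 := Real.add_one_le_exp (r / θ - 2)
        have h2 : Real.exp (-(r / θ)) * Real.exp (r / θ - 2) = Real.exp (-1) * Real.exp (-1) := by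
          rw [← Real.exp_add, ← Real.exp_add]; congr 1; ring
        have h3 : Real.exp (-1) ≤ 1 / 2 := by
          have h5 := Real.add_one_le_exp (1:ℝ)
          have h6 : Real.exp (-1) * Real.exp 1 = 1 := by rw [← Real.exp_add]; simp
          nlinarith [Real.exp_pos (-1)]
        have h4 := Real.exp_pos (-1)
        nlinarith
      set a := r / σ with hadef
      set b := r / θ with hbdef
      set E := Real.exp (-a)
      set E2 := Real.exp (-b)
      have hE2le : E2 ≤ 1 := Real.exp_le_one_iff.2 (by linarith)
      have hreg : K = 0 ∨ a < 1 := by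
        rcases hosc with h0 | hosc
        · exact Or.inl h0
        rcases hK.eq_or_lt with h0 | hKp
        · exact Or.inl h0.symm
        right
        have ho := hosc t ⟨ht.1.le, ht.2⟩ x hx y hy
        have h1 : 0 ≤ 8 * F * (θ * (1 - E2)) :=
          mul_nonneg (by linarith) (mul_nonneg q2.le (by linarith))
        have h2 : 0 < ε * (t - s) := mul_pos hε p2
        have h3 : 2 * K * (1 - E) < K := by linarith
        have h4 : 1 / 2 < E := by nlinarith
        nlinarith
      have hT1 : E * r / σ ^ 3 = E * a / σ ^ 2 := by rw [hadef]; field_simp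
      rw [hT1]
      have hKa : 0 ≤ K * (1 - a) := by
        rcases hreg with h | h
        · rw [h]; simp
        · exact mul_nonneg hK (by linarith)
      set P := E / σ ^ 2 with hP
      have hPp : 0 < P := by positivity
      have hPa : E * a / σ ^ 2 = P * a := by rw [hP]; ring
      have hPs : E / σ = P * σ := by rw [hP]; field_simp
      rw [hPa, hPs]
      have hθi : 0 < 1 / θ := by positivity
      set Q := F / θ with hQ
      have hQ0 : 0 ≤ Q := by positivity
      have hFQ : F = Q * θ := by rw [hQ]; field_simp
      have hs1 : 8 * F * ((1 - E2 - b * E2) / (2 * θ)) = 4 * Q * (1 - E2 - b * E2) := by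
        rw [hFQ]; field_simp; ring
      have hs2 : 8 * F * (E2 / θ) = 8 * Q * E2 := by rw [hQ]; ring
      rw [hs1, hs2, hFQ]
      have k1 : 0 ≤ K * P * (1 - a) := by
        have := mul_nonneg hKa hPp.le
        linarith
      have k2 : 0 ≤ K * P * (1 / 2 - B0 * σ) := by
        have : 0 ≤ 1 / 2 - B0 * σ := by linarith
        positivity
      have k3 : 0 ≤ Q * E2 * (1 / 2 - B0 * θ) := by
        have : 0 ≤ 1 / 2 - B0 * θ := by linarith
        positivity
      have k4 : 0 ≤ Q * (1 / 4 - E2 * (b - 1)) := mul_nonneg hQ0 (by linarith)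
      have k5 : 0 ≤ Q * (1 - E2 * (1 + b)) := mul_nonneg hQ0 (by linarith)
      have k6 : 0 ≤ K * P := by positivity
      have k7 : 0 ≤ Q * E2 := by positivity
      obtain ⟨al1, al2⟩ := alg_ineq hε k1 k2 k3 k4 k5 k6 k7 hQ0
      refine ⟨by positivity, al1, al2, ?_⟩
      intro hr2
      rcases hreg with h | h
      · rw [h]; linarith
      · exfalso
        have : r ≤ a := by
          rw [hadef, le_div_iff₀ q1]
          nlinarith
        linarith
  intro t ht x hx y hy hyx
  have p1 : 0 < t - (s - η) := by linarith [ht.1]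
  have p2 : 0 < t - s := by linarith [ht.1]
  have q1 := Real.sqrt_pos.2 p1
  have q2 := Real.sqrt_pos.2 p2
  have lim : v t x - v t y ≤ 2 * K * (1 - Real.exp (-((x - y) / Real.sqrt (t - (s - η)))))
        + 8 * F * (Real.sqrt (t - s) * (1 - Real.exp (-((x - y) / Real.sqrt (t - s))))) := by
    apply le_of_forall_pos_le_add
    intro ε hε
    have := main (ε / (t - s)) (by positivity) t ⟨ht.1.le, ht.2⟩ x hx y hy hyx
    rw [div_mul_cancel₀ _ p2.ne'] at this
    linarith
  have hG : ∀ a : ℝ, 1 - Real.exp (-a) ≤ a := fun a => by linarith [Real.add_one_le_exp (-a)]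
  constructor
  · have e : t - (s - η) = t - s + η := by ring
    rw [← e]
    have g1 := mul_le_mul_of_nonneg_left (hG ((x - y) / Real.sqrt (t - (s - η))))
      (show 0 ≤ 2 * K by linarith)
    have g2 := mul_le_mul_of_nonneg_left (hG ((x - y) / Real.sqrt (t - s)))
      (show 0 ≤ 8 * F * Real.sqrt (t - s) by positivity)
    have g3 : 8 * F * Real.sqrt (t - s) * ((x - y) / Real.sqrt (t - s)) = 8 * F * (x - y) := by
      field_simp
    rw [g3] at g2
    have g4 : 2 * K * ((x - y) / Real.sqrt (t - (s - η))) = 2 * K / Real.sqrt (t - (s - η)) * (x - y) := by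
      ring
    rw [g4] at g1
    linarith
  · intro h0
    rw [h0] at lim
    have := Real.exp_pos (-((x - y) / Real.sqrt (t - s)))
    have : 0 ≤ 8 * F * Real.sqrt (t - s) := by positivity
    nlinarith

/-- Elementary convolution-type integral. -/
def I0 (k m : ℝ → ℝ) (a e u : ℝ) : ℝ := ∫ v in (-1:ℝ)..1, k (a + e * v - u) * m v

def bfun (j m : ℝ → ℝ) (u : ℝ) : ℝ :=
  -(I0 (deriv j) m 0 1 u) - I0 (deriv j) m 2 (-1) u - I0 (deriv j) m (-2) (-1) u

def bder (j g : ℝ → ℝ) (u : ℝ) : ℝ :=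
  -(I0 (deriv j) g 0 1 u) + I0 (deriv j) g 2 (-1) u + I0 (deriv j) g (-2) (-1) u

lemma I0_integrable {k m : ℝ → ℝ} (hk : Continuous k) (hm : IntervalIntegrable m volume (-1) 1)
    (a e u : ℝ) : IntervalIntegrable (fun v => k (a + e * v - u) * m v) volume (-1) 1 :=
  hm.continuousOn_mul (by fun_prop)

lemma I0_sub {k m n : ℝ → ℝ} (hk : Continuous k) (hm : IntervalIntegrable m volume (-1) 1)
    (hn : IntervalIntegrable n volume (-1) 1) (a e u : ℝ) :
    I0 k m a e u - I0 k n a e u = I0 k (fun v => m v - n v) a e u := by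
  unfold I0
  rw [← intervalIntegral.integral_sub (I0_integrable hk hm a e u) (I0_integrable hk hn a e u)]
  congr 1; ext v; ring

lemma I0_bound {k m : ℝ → ℝ} {C M : ℝ} (hk : ∀ x, |k x| ≤ C)
    (hm : ∀ x ∈ Ioo (-1:ℝ) 1, |m x| ≤ M) (a e u : ℝ) : |I0 k m a e u| ≤ 2 * (C * M) := by
  unfold I0
  have hC : 0 ≤ C := (abs_nonneg _).trans (hk 0)
  rw [intervalIntegral.integral_of_le (by norm_num), integral_Ioc_eq_integral_Ioo]
  have := norm_setIntegral_le_of_norm_le_const (μ := volume) (s := Ioo (-1:ℝ) 1)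
    (f := fun v => k (a + e * v - u) * m v) (C := C * M) (by simp) (by
      intro x hx
      rw [norm_mul]
      exact mul_le_mul (hk _) (hm x hx) (norm_nonneg _) hC)
  rw [Real.norm_eq_abs] at this
  refine this.trans (le_of_eq ?_)
  simp [Measure.real]
  norm_num
  ring

lemma I0_hasDeriv {j m : ℝ → ℝ} {C : ℝ} (hj : ContDiff ℝ 1 j) (hC : ∀ x, |deriv j x| ≤ C)
    (hm : IntervalIntegrable m volume (-1) 1) (a e u : ℝ) :
    HasDerivAt (I0 j m a e) (-(I0 (deriv j) m a e u)) u := by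
  have hjc : Continuous j := hj.continuous
  have hjd : Continuous (deriv j) := hj.continuous_deriv (le_refl _)
  have := (intervalIntegral.hasDerivAt_integral_of_dominated_loc_of_deriv_le (𝕜 := ℝ) (μ := volume)
    (a := -1) (b := 1)
    (F := fun u v => j (a + e * v - u) * m v) (F' := fun u v => -(deriv j (a + e * v - u) * m v))
    (x₀ := u) (s := univ) (bound := fun v => C * |m v|) Filter.univ_mem
    (Filter.Eventually.of_forall fun u => (I0_integrable hjc hm a e u).aestronglyMeasurable_restrict_uIoc)
    (I0_integrable hjc hm a e u)
    ((I0_integrable hjd hm a e u).neg.aestronglyMeasurable_restrict_uIoc)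
    (by
      refine Filter.Eventually.of_forall fun v _ x _ => ?_
      rw [norm_neg, norm_mul]
      exact mul_le_mul_of_nonneg_right (hC _) (norm_nonneg _))
    (hm.abs.const_mul C)
    (by
      refine Filter.Eventually.of_forall fun v _ x _ => ?_
      have h1 := (hj.differentiable (by norm_num) (a + e * v - x)).hasDerivAt
      have h2 := (h1.comp_const_sub (a + e * v) x).mul_const (m v)
      refine h2.congr_deriv ?_
      ring)).2
  unfold I0
  rw [← intervalIntegral.integral_neg]
  exact this

lemma convJ_eq {j m : ℝ → ℝ} (hj : ContDiff ℝ 1 j)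
    (hm : IntervalIntegrable m volume (-1) 1) :
    convJ j m = fun u => I0 j m 0 1 u + I0 j m 2 (-1) u + I0 j m (-2) (-1) u := by
  ext u
  have i := I0_integrable hj.continuous hm
  unfold convJ I0 Jneum
  rw [← intervalIntegral.integral_add (i _ _ u) (i _ _ u),
    ← intervalIntegral.integral_add ((i _ _ u).add (i _ _ u)) (i _ _ u)]
  congr 1; ext v
  rw [show (0:ℝ) + 1 * v - u = v - u by ring, show (2:ℝ) + -1 * v - u = 2 - v - u by ring,
    show (-2:ℝ) + -1 * v - u = -2 - v - u by ring]
  ring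

lemma convJ_deriv {j m : ℝ → ℝ} {C : ℝ} (hj : ContDiff ℝ 1 j) (hC : ∀ x, |deriv j x| ≤ C)
    (hm : IntervalIntegrable m volume (-1) 1) : deriv (convJ j m) = bfun j m := by
  ext u
  rw [convJ_eq hj hm]
  have d := I0_hasDeriv hj hC hm
  have := (((d 0 1 u).add (d 2 (-1) u)).add (d (-2) (-1) u)).deriv
  unfold bfun
  rw [sub_eq_add_neg, sub_eq_add_neg]
  exact this

lemma I0_parts {j m g : ℝ → ℝ} (hj : ContDiff ℝ 1 j) (hm : ContinuousOn m (Icc (-1:ℝ) 1))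
    (hd : ∀ x ∈ Ioo (-1:ℝ) 1, HasDerivAt m (g x) x)
    (hg : IntervalIntegrable g volume (-1) 1) (a e u : ℝ) :
    I0 j g a e u = j (a + e - u) * m 1 - j (a - e - u) * m (-1) - e * I0 (deriv j) m a e u := by
  have hjc : Continuous j := hj.continuous
  have hjd : Continuous (deriv j) := hj.continuous_deriv (le_refl _)
  have := intervalIntegral.integral_mul_deriv_eq_deriv_mul_of_hasDeriv_right (a := -1) (b := 1)
    (u := fun v => j (a + e * v - u)) (v := m) (u' := fun v => e * deriv j (a + e * v - u)) (v' := g)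
    (by fun_prop) (by rwa [uIcc_of_le (by norm_num)])
    (by
      intro v _
      apply HasDerivAt.hasDerivWithinAt
      have h1 := (hj.differentiable (by norm_num) (a + e * v - u)).hasDerivAt
      have h2 : HasDerivAt (fun v => a + e * v - u) e v := by
        simpa using (((hasDerivAt_id v).const_mul e).const_add a).sub_const u
      refine (h1.comp v h2).congr_deriv ?_
      ring)
    (by
      intro v hv
      rw [min_eq_left (by norm_num), max_eq_right (by norm_num)] at hv
      exact (hd v hv).hasDerivWithinAt)
    (Continuous.intervalIntegrable (by fun_prop) _ _) hg
  unfold I0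
  rw [this, ← intervalIntegral.integral_const_mul]
  simp only [mul_assoc, mul_one, mul_neg, ← sub_eq_add_neg]

lemma bfun_parts {j m g : ℝ → ℝ} (hj : ContDiff ℝ 1 j) (hs : ∀ u : ℝ, 1 < |u| → j u = 0)
    (hm : ContinuousOn m (Icc (-1:ℝ) 1))
    (hd : ∀ x ∈ Ioo (-1:ℝ) 1, HasDerivAt m (g x) x)
    (hg : IntervalIntegrable g volume (-1) 1) {u : ℝ} (hu : u ∈ Ioo (-1:ℝ) 1) :
    bfun j m u = I0 j g 0 1 u - I0 j g 2 (-1) u - I0 j g (-2) (-1) u := by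
  rw [I0_parts hj hm hd hg, I0_parts hj hm hd hg, I0_parts hj hm hd hg]
  unfold bfun
  have z1 : j (2 - -1 - u) = 0 := hs _ (by rw [lt_abs]; left; linarith [hu.2])
  have z2 : j (-2 + -1 - u) = 0 := hs _ (by rw [lt_abs]; right; linarith [hu.1])
  rw [z1, z2, show (0:ℝ) + 1 - u = 1 - u by ring, show (0:ℝ) - 1 - u = -1 - u by ring,
    show (2:ℝ) + -1 - u = 1 - u by ring, show (-2:ℝ) - -1 - u = -1 - u by ring]
  ring

lemma bfun_hasDeriv {j m g : ℝ → ℝ} {C : ℝ} (hj : ContDiff ℝ 1 j) (hC : ∀ x, |deriv j x| ≤ C)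
    (hs : ∀ u : ℝ, 1 < |u| → j u = 0)
    (hm : ContinuousOn m (Icc (-1:ℝ) 1))
    (hd : ∀ x ∈ Ioo (-1:ℝ) 1, HasDerivAt m (g x) x)
    (hg : IntervalIntegrable g volume (-1) 1) {u : ℝ} (hu : u ∈ Ioo (-1:ℝ) 1) :
    HasDerivAt (bfun j m) (bder j g u) u := by
  have d := I0_hasDeriv hj hC hg
  have d1 := ((d 0 1 u).sub (d 2 (-1) u)).sub (d (-2) (-1) u)
  have e : bfun j m =ᶠ[nhds u] (fun u => I0 j g 0 1 u - I0 j g 2 (-1) u - I0 j g (-2) (-1) u) :=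
    Filter.mem_of_superset (Ioo_mem_nhds hu.1 hu.2) (fun x hx => bfun_parts hj hs hm hd hg hx)
  refine HasDerivAt.congr_of_eventuallyEq ?_ e
  refine HasDerivAt.congr_deriv d1 ?_
  unfold bder; ring

lemma bfun_bound {j m : ℝ → ℝ} {C M : ℝ} (hC : ∀ x, |deriv j x| ≤ C)
    (hm : ∀ x ∈ Ioo (-1:ℝ) 1, |m x| ≤ M) (u : ℝ) : |bfun j m u| ≤ 6 * C * M := by
  have h := I0_bound hC hm
  have h1 := abs_le.1 (h 0 1 u)
  have h2 := abs_le.1 (h 2 (-1) u)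
  have h3 := abs_le.1 (h (-2) (-1) u)
  unfold bfun
  rw [abs_le]; constructor <;> linarith

lemma bder_bound {j m : ℝ → ℝ} {C M : ℝ} (hC : ∀ x, |deriv j x| ≤ C)
    (hm : ∀ x ∈ Ioo (-1:ℝ) 1, |m x| ≤ M) (u : ℝ) : |bder j m u| ≤ 6 * C * M := by
  have h := I0_bound hC hm
  have h1 := abs_le.1 (h 0 1 u)
  have h2 := abs_le.1 (h 2 (-1) u)
  have h3 := abs_le.1 (h (-2) (-1) u)
  unfold bder
  rw [abs_le]; constructor <;> linarith

lemma bfun_sub {j m n : ℝ → ℝ} (hj : ContDiff ℝ 1 j) (hm : IntervalIntegrable m volume (-1) 1)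
    (hn : IntervalIntegrable n volume (-1) 1) (u : ℝ) :
    bfun j m u - bfun j n u = bfun j (fun v => m v - n v) u := by
  have h := I0_sub (hj.continuous_deriv (le_refl _)) hm hn
  unfold bfun
  rw [← h, ← h, ← h]; ring

lemma bder_sub {j m n : ℝ → ℝ} (hj : ContDiff ℝ 1 j) (hm : IntervalIntegrable m volume (-1) 1)
    (hn : IntervalIntegrable n volume (-1) 1) (u : ℝ) :
    bder j m u - bder j n u = bder j (fun v => m v - n v) u := by
  have h := I0_sub (hj.continuous_deriv (le_refl _)) hm hn
  unfold bder
  rw [← h, ← h, ← h]; ring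

lemma deriv_j_bound {j : ℝ → ℝ} (hj : ContDiff ℝ 1 j) (hs : ∀ u : ℝ, 1 < |u| → j u = 0) :
    ∃ C, 0 ≤ C ∧ ∀ x, |deriv j x| ≤ C := by
  have hjd : Continuous (deriv j) := hj.continuous_deriv (le_refl _)
  obtain ⟨C, hC⟩ := (isCompact_Icc (a := (-1:ℝ)) (b := 1)).exists_bound_of_continuousOn hjd.continuousOn
  have hC0 : 0 ≤ C := (norm_nonneg _).trans (hC 0 (by simp))
  refine ⟨C, hC0, fun x => ?_⟩
  by_cases hx : |x| ≤ 1
  · exact hC x (abs_le.1 hx)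
  · push Not at hx
    have e : j =ᶠ[nhds x] fun _ => 0 :=
      Filter.mem_of_superset ((isOpen_lt continuous_const continuous_abs).mem_nhds hx) hs
    rw [e.deriv_eq]; simpa using hC0

def LipB (ρ : ℝ → ℝ → ℝ) (t l : ℝ) : Prop :=
  ∀ x ∈ Icc (-1:ℝ) 1, ∀ y ∈ Icc (-1:ℝ) 1, y ≤ x → |ρ t x - ρ t y| ≤ l * (x - y)

lemma LipB.mono {ρ : ℝ → ℝ → ℝ} {t l l' : ℝ} (h : LipB ρ t l) (hl : l ≤ l') : LipB ρ t l' :=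
  fun x hx y hy hyx => (h x hx y hy hyx).trans (mul_le_mul_of_nonneg_right hl (by linarith))

lemma LipB.nonneg {ρ : ℝ → ℝ → ℝ} {t l : ℝ} (h : LipB ρ t l) : 0 ≤ l := by
  have := (abs_nonneg _).trans (h 1 (by simp) (-1) (by simp) (by norm_num))
  linarith

lemma LipB.deriv_le {ρ : ℝ → ℝ → ℝ} {t l d x : ℝ} (h : LipB ρ t l) (hx : x ∈ Ioo (-1:ℝ) 1)
    (hd : HasDerivAt (ρ t) d x) : |d| ≤ l := by
  refine hd.le_of_lip' h.nonneg ?_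
  filter_upwards [Ioo_mem_nhds hx.1 hx.2] with y hy
  rw [Real.norm_eq_abs, Real.norm_eq_abs]
  rcases le_total x y with hxy | hxy
  · rw [abs_of_nonneg (by linarith : 0 ≤ y - x)]
    exact h y (Ioo_subset_Icc_self hy) x (Ioo_subset_Icc_self hx) hxy
  · rw [abs_sub_comm, abs_sub_comm y x, abs_of_nonneg (by linarith : 0 ≤ x - y)]
    exact h x (Ioo_subset_Icc_self hx) y (Ioo_subset_Icc_self hy) hxy

section sol
variable {j : ℝ → ℝ} {β ρm ρp T : ℝ} {ρ : ℝ → ℝ → ℝ}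

lemma ClassicalSol.contx (h : ClassicalSol j β ρm ρp T ρ) {t : ℝ} (ht : t ∈ Icc 0 T) :
    ContinuousOn (ρ t) (Icc (-1:ℝ) 1) :=
  h.cont.comp (f := fun x => (t, x)) (by fun_prop) (fun x hx => ⟨ht, hx⟩)

lemma ClassicalSol.intg (h : ClassicalSol j β ρm ρp T ρ) {t : ℝ} (ht : t ∈ Icc 0 T) :
    IntervalIntegrable (ρ t) volume (-1) 1 :=
  ContinuousOn.intervalIntegrable (by rw [uIcc_of_le (by norm_num)]; exact h.contx ht)

lemma ClassicalSol.dt (h : ClassicalSol j β ρm ρp T ρ) {t : ℝ} (ht : t ∈ Ioo 0 T)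
    {x : ℝ} (hx : x ∈ Ioo (-1:ℝ) 1) :
    HasDerivAt (fun τ => ρ τ x) (deriv (fun τ => ρ τ x) t) t :=
  (((h.smooth_t x hx).differentiableOn (by norm_num)).differentiableAt
    (Ioo_mem_nhds ht.1 ht.2)).hasDerivAt

lemma ClassicalSol.dx (h : ClassicalSol j β ρm ρp T ρ) {t : ℝ} (ht : t ∈ Ioo 0 T)
    {x : ℝ} (hx : x ∈ Ioo (-1:ℝ) 1) : HasDerivAt (ρ t) (deriv (ρ t) x) x :=
  (((h.smooth_u t ht).differentiableOn (by norm_num)).differentiableAt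
    (Ioo_mem_nhds hx.1 hx.2)).hasDerivAt

lemma ClassicalSol.dxx (h : ClassicalSol j β ρm ρp T ρ) {t : ℝ} (ht : t ∈ Ioo 0 T)
    {x : ℝ} (hx : x ∈ Ioo (-1:ℝ) 1) : HasDerivAt (deriv (ρ t)) (deriv (deriv (ρ t)) x) x := by
  have h1 : ContDiffOn ℝ 1 (deriv (ρ t)) (Ioo (-1:ℝ) 1) :=
    (h.smooth_u t ht).deriv_of_isOpen isOpen_Ioo (by norm_num)
  exact ((h1.differentiableOn (by norm_num)).differentiableAt
    (Ioo_mem_nhds hx.1 hx.2)).hasDerivAt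

lemma ClassicalSol.dintg (h : ClassicalSol j β ρm ρp T ρ) {t : ℝ} (ht : t ∈ Ioo 0 T) :
    IntervalIntegrable (deriv (ρ t)) volume (-1) 1 := by
  obtain ⟨g, hg, he⟩ := h.du_ext t ht
  have : IntervalIntegrable g volume (-1) 1 :=
    ContinuousOn.intervalIntegrable (by rw [uIcc_of_le (by norm_num)]; exact hg)
  refine this.congr_uIoo ?_
  rw [uIoo_of_le (by norm_num)]
  exact fun x hx => he x hx

lemma ClassicalSol.exists_lip (h : ClassicalSol j β ρm ρp T ρ) {t : ℝ} (ht : t ∈ Ioo 0 T) :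
    ∃ n : ℕ, LipB ρ t n := by
  obtain ⟨g, hg, he⟩ := h.du_ext t ht
  obtain ⟨C, hC⟩ := (isCompact_Icc (a := (-1:ℝ)) (b := 1)).exists_bound_of_continuousOn hg
  obtain ⟨n, hn⟩ := exists_nat_ge C
  refine ⟨n, LipB.mono (l := C) ?_ hn⟩
  have hb : ∀ x ∈ interior (Icc (-1:ℝ) 1), ‖deriv (ρ t) x‖ ≤ C := by
    intro x hx
    rw [interior_Icc] at hx
    have : g x = deriv (ρ t) x := he x hx
    rw [← this]; exact hC x (Ioo_subset_Icc_self hx)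
  have hdf : DifferentiableOn ℝ (ρ t) (interior (Icc (-1:ℝ) 1)) := by
    rw [interior_Icc]
    exact fun x hx => (h.dx ht hx).differentiableAt.differentiableWithinAt
  have hcx := h.contx (Ioo_subset_Icc_self ht)
  intro x hx y hy hyx
  have u1 := (convex_Icc (-1:ℝ) 1).image_sub_le_mul_sub_of_deriv_le hcx hdf
    (fun x hx => (le_abs_self _).trans (hb x hx)) y hy x hx hyx
  have u2 := (convex_Icc (-1:ℝ) 1).mul_sub_le_image_sub_of_le_deriv hcx hdf
    (C := -C) (fun x hx => (abs_le.1 (hb x hx)).1) y hy x hx hyx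
  rw [abs_le]; constructor <;> linarith

lemma ClassicalSol.pde' (h : ClassicalSol j β ρm ρp T ρ) (hj : ContDiff ℝ 1 j)
    (hs : ∀ u : ℝ, 1 < |u| → j u = 0) {C : ℝ} (hC : ∀ x, |deriv j x| ≤ C)
    {t : ℝ} (ht : t ∈ Ioo 0 T) {x : ℝ} (hx : x ∈ Ioo (-1:ℝ) 1) :
    deriv (fun τ => ρ τ x) t = deriv (deriv (ρ t)) x
      - β * (1 - 2 * ρ t x) * bfun j (ρ t) x * deriv (ρ t) x
      + -(β * chi (ρ t x) * bder j (deriv (ρ t)) x) := by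
  have ht' := Ioo_subset_Icc_self ht
  rw [h.pde t ht x hx, convJ_deriv hj hC (h.intg ht')]
  have d1 := h.dxx ht hx
  have d2 := h.dx ht hx
  have d3 := bfun_hasDeriv hj hC hs (h.contx ht') (fun x hx => h.dx ht hx) (h.dintg ht) hx
  have d4 : HasDerivAt (fun w => chi (ρ t w)) ((1 - 2 * ρ t x) * deriv (ρ t) x) x := by
    refine (d2.mul (d2.const_sub 1)).congr_deriv ?_
    ring
  have d5 := (d1.sub ((d4.const_mul β).mul d3)).deriv
  refine Eq.trans d5 ?_
  ring

lemma chi_bound {r : ℝ} (h : r ∈ Icc (0:ℝ) 1) : 0 ≤ chi r ∧ chi r ≤ 1 := by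
  unfold chi
  constructor
  · nlinarith [h.1, h.2]
  · nlinarith [h.1, h.2]

lemma ClassicalSol.B_bound (h : ClassicalSol j β ρm ρp T ρ) (hβ : 0 ≤ β) {C : ℝ}
    (hC : ∀ x, |deriv j x| ≤ C) {t : ℝ} (ht : t ∈ Icc 0 T) {x : ℝ} (hx : x ∈ Ioo (-1:ℝ) 1) :
    |β * (1 - 2 * ρ t x) * bfun j (ρ t) x| ≤ 6 * C * β := by
  have h1 := bfun_bound (M := 1) hC (m := ρ t) (fun y hy => by
    have := h.range t ht y (Ioo_subset_Icc_self hy)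
    rw [abs_le]; constructor <;> linarith [this.1, this.2]) x
  have h2 : |1 - 2 * ρ t x| ≤ 1 := by
    have := h.range t ht x (Ioo_subset_Icc_self hx)
    rw [abs_le]; constructor <;> linarith [this.1, this.2]
  rw [abs_mul, abs_mul, abs_of_nonneg hβ]
  have h3 := mul_le_mul h2 h1 (abs_nonneg _) zero_le_one
  have := mul_le_mul_of_nonneg_left h3 hβ
  linarith

lemma neg_uncurry (v : ℝ → ℝ → ℝ) : Function.uncurry (fun t x => - v t x) =
    fun p => - Function.uncurry v p := by
  ext ⟨a, b⟩; rfl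

/-- symmetric version of `lip_est` -/
theorem lip_est_abs (v vt vx vxx B f : ℝ → ℝ → ℝ) (B0 s t1 K η F : ℝ)
    (hc : ContinuousOn (Function.uncurry v) (Icc s t1 ×ˢ Icc (-1:ℝ) 1))
    (hl : ∀ t ∈ Icc s t1, v t (-1) = v s (-1))
    (hr : ∀ t ∈ Icc s t1, v t 1 = v s 1)
    (hvt : ∀ t ∈ Ioc s t1, ∀ x ∈ Ioo (-1:ℝ) 1, HasDerivAt (fun τ => v τ x) (vt t x) t)
    (hvx : ∀ t ∈ Ioc s t1, ∀ x ∈ Ioo (-1:ℝ) 1, HasDerivAt (v t) (vx t x) x)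
    (hvxx : ∀ t ∈ Ioc s t1, ∀ x ∈ Ioo (-1:ℝ) 1, HasDerivAt (vx t) (vxx t x) x)
    (hB : ∀ t ∈ Ioc s t1, ∀ x ∈ Ioo (-1:ℝ) 1, |B t x| ≤ B0)
    (hf : ∀ t ∈ Ioc s t1, ∀ x ∈ Ioo (-1:ℝ) 1, |f t x| ≤ F / Real.sqrt (t - s))
    (hpde : ∀ t ∈ Ioc s t1, ∀ x ∈ Ioo (-1:ℝ) 1, vt t x = vxx t x - B t x * vx t x + f t x)
    (hst : s ≤ t1) (hB0 : 0 ≤ B0) (hK : 0 ≤ K) (hη : 0 < η) (hF : 0 ≤ F)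
    (hτ : Real.sqrt (t1 - s + η) ≤ 1) (hτB : B0 * Real.sqrt (t1 - s + η) ≤ 1 / 2)
    (hosc : K = 0 ∨ ∀ t ∈ Icc s t1, ∀ x ∈ Icc (-1:ℝ) 1, ∀ y ∈ Icc (-1:ℝ) 1, v t x - v t y ≤ K)
    (hinit : LipB v s (K / Real.sqrt η)) :
    ∀ t ∈ Ioc s t1, LipB v t (2 * K / Real.sqrt (t - s + η) + 8 * F) ∧
      (K = 0 → ∀ x ∈ Icc (-1:ℝ) 1, ∀ y ∈ Icc (-1:ℝ) 1, y ≤ x →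
        |v t x - v t y| ≤ 8 * F * Real.sqrt (t - s)) := by
  have p1 := lip_est v vt vx vxx B f B0 s t1 K η F hc hl hr hvt hvx hvxx hB hf hpde hst hB0 hK hη hF
    hτ hτB hosc (fun x hx y hy hyx => (le_abs_self _).trans (hinit x hx y hy hyx))
  have p2 := lip_est (fun t x => - v t x) (fun t x => - vt t x) (fun t x => - vx t x)
    (fun t x => - vxx t x) B (fun t x => - f t x) B0 s t1 K η F
    (by rw [neg_uncurry]; exact hc.neg)
    (fun t ht => by rw [hl t ht]) (fun t ht => by rw [hr t ht])
    (fun t ht x hx => (hvt t ht x hx).neg) (fun t ht x hx => (hvx t ht x hx).neg)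
    (fun t ht x hx => (hvxx t ht x hx).neg) hB
    (fun t ht x hx => by rw [abs_neg]; exact hf t ht x hx)
    (fun t ht x hx => by rw [hpde t ht x hx]; ring) hst hB0 hK hη hF hτ hτB
    (hosc.imp id (fun h t ht x hx y hy => by have := h t ht y hy x hx; linarith))
    (fun x hx y hy hyx => by
      have := (neg_le_abs _).trans (hinit x hx y hy hyx)
      linarith)
  intro t ht
  constructor
  · intro x hx y hy hyx
    have a1 := (p1 t ht x hx y hy hyx).1
    have a2 := (p2 t ht x hx y hy hyx).1
    rw [abs_le]; constructor <;> linarith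
  · intro h0 x hx y hy hyx
    have a1 := (p1 t ht x hx y hy hyx).2 h0
    have a2 := (p2 t ht x hx y hy hyx).2 h0
    rw [abs_le]; constructor <;> linarith

theorem ClassicalSol.step (h : ClassicalSol j β ρm ρp T ρ) (hj : ContDiff ℝ 1 j)
    (hs : ∀ u : ℝ, 1 < |u| → j u = 0) (hβ : 0 ≤ β) {C : ℝ} (hC : ∀ x, |deriv j x| ≤ C)
    {d : ℝ} (hd0 : 0 < d) (hd1 : d ≤ 1) (hd : 6 * C * β * d ≤ 1 / 32)
    {s t1 η Λ : ℝ} (hs0 : 0 ≤ s) (hst : s ≤ t1) (ht1 : t1 < T) (hη : 0 < η)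
    (hsm : t1 - s + η ≤ d ^ 2)
    (hΛ : ∀ t ∈ Ioc s t1, LipB ρ t (Λ / Real.sqrt (t - s)))
    (hΛ0 : 0 ≤ Λ)
    (hin : LipB ρ s (1 / Real.sqrt η)) :
    ∀ t ∈ Ioc s t1, LipB ρ t (2 / Real.sqrt (t - s + η) + 8 * (6 * C * β * Λ)) := by
  have hC0 : 0 ≤ C := (abs_nonneg _).trans (hC 0)
  have hsq : Real.sqrt (t1 - s + η) ≤ d := by
    rw [← Real.sqrt_sq hd0.le]; exact Real.sqrt_le_sqrt hsm
  have hsub : Icc s t1 ⊆ Icc 0 T := fun t ht => ⟨hs0.trans ht.1, ht.2.trans ht1.le⟩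
  have hsub' : Ioc s t1 ⊆ Ioo 0 T := fun t ht => ⟨hs0.trans_lt ht.1, ht.2.trans_lt ht1⟩
  have hs' : s ∈ Icc s t1 := ⟨le_refl _, hst⟩
  have c0 : 0 ≤ 6 * C * β := by positivity
  have := lip_est_abs ρ (fun t x => deriv (fun τ => ρ τ x) t) (fun t x => deriv (ρ t) x)
    (fun t x => deriv (deriv (ρ t)) x) (fun t x => β * (1 - 2 * ρ t x) * bfun j (ρ t) x)
    (fun t x => -(β * chi (ρ t x) * bder j (deriv (ρ t)) x)) (6 * C * β) s t1 1 η (6 * C * β * Λ)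
    (h.cont.mono (prod_mono hsub (le_refl _)))
    (fun t ht => by rw [h.bdry_left t (hsub ht), h.bdry_left s (hsub hs')])
    (fun t ht => by rw [h.bdry_right t (hsub ht), h.bdry_right s (hsub hs')])
    (fun t ht x hx => h.dt (hsub' ht) hx) (fun t ht x hx => h.dx (hsub' ht) hx)
    (fun t ht x hx => h.dxx (hsub' ht) hx)
    (fun t ht x hx => h.B_bound hβ hC (hsub (Ioc_subset_Icc_self ht)) hx)
    (fun t ht x hx => by
      have b1 := bder_bound hC (m := deriv (ρ t)) (fun y hy => (hΛ t ht).deriv_le hy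
        (h.dx (hsub' ht) hy)) x
      have b2 := chi_bound (h.range t (hsub (Ioc_subset_Icc_self ht)) x (Ioo_subset_Icc_self hx))
      rw [abs_neg, abs_mul, abs_mul, abs_of_nonneg hβ, abs_of_nonneg b2.1]
      have b3 : β * chi (ρ t x) ≤ β := by nlinarith
      have b4 := mul_le_mul b3 b1 (abs_nonneg _) hβ
      refine b4.trans (le_of_eq ?_)
      ring)
    (fun t ht x hx => h.pde' hj hs hC (hsub' ht) hx)
    hst c0 zero_le_one hη (by positivity) (hsq.trans hd1)
    ((mul_le_mul_of_nonneg_left hsq c0).trans (hd.trans (by norm_num)))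
    (Or.inr (fun t ht x hx y hy => by
      have r1 := h.range t (hsub ht) x hx
      have r2 := h.range t (hsub ht) y hy
      linarith [r1.2, r2.1])) hin
  intro t ht
  have := (this t ht).1
  rwa [mul_one] at this

end sol

section reg
variable {j : ℝ → ℝ} {β ρm ρp T : ℝ} {ρ : ℝ → ℝ → ℝ}

lemma exists_eta {d n : ℝ} (hd0 : 0 < d) (hn : 0 ≤ n) :
    ∃ η, 0 < η ∧ η ≤ d ^ 2 / 2 ∧ n ≤ 1 / Real.sqrt η ∧ 1 / Real.sqrt η ≤ 2 / d + n + 1 := by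
  have hp : 0 < 2 / d + n + 1 := by positivity
  refine ⟨(1 / (2 / d + n + 1)) ^ 2, by positivity, ?_, ?_, ?_⟩
  · have h1 : 1 / (2 / d + n + 1) ≤ d / 2 := by
      rw [div_le_iff₀ hp]
      have : d / 2 * (2 / d + n + 1) = 1 + d / 2 * n + d / 2 := by field_simp
      rw [this]
      have : 0 ≤ d / 2 * n := by positivity
      linarith
    have h2 : 0 ≤ 1 / (2 / d + n + 1) := by positivity
    nlinarith
  · rw [Real.sqrt_sq (by positivity), one_div_one_div]
    have : 0 < 2 / d := by positivity
    linarith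
  · rw [Real.sqrt_sq (by positivity), one_div_one_div]

theorem ClassicalSol.reg1 (h : ClassicalSol j β ρm ρp T ρ) (hj : ContDiff ℝ 1 j)
    (hs : ∀ u : ℝ, 1 < |u| → j u = 0) (hβ : 0 ≤ β) {C : ℝ} (hC : ∀ x, |deriv j x| ≤ C)
    {d : ℝ} (hd0 : 0 < d) (hd1 : d ≤ 1) (hd : 6 * C * β * d ≤ 1 / 32)
    {s t1 n : ℝ} (hs0 : 0 ≤ s) (hst : s ≤ t1) (ht1 : t1 < T) (hsm : t1 - s ≤ d ^ 2 / 2)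
    (hb : ∀ t ∈ Icc s t1, LipB ρ t n) :
    ∀ t ∈ Ioc s t1, LipB ρ t (4 / Real.sqrt (t - s)) := by
  have hC0 : 0 ≤ C := (abs_nonneg _).trans (hC 0)
  have hn : 0 ≤ n := (hb s ⟨le_refl _, hst⟩).nonneg
  obtain ⟨η, η0, η1, η2, -⟩ := exists_eta hd0 hn
  have hsq : ∀ t ∈ Ioc s t1, 0 < Real.sqrt (t - s) ∧ Real.sqrt (t - s) ≤ d := by
    intro t ht
    refine ⟨Real.sqrt_pos.2 (by linarith [ht.1]), ?_⟩
    rw [← Real.sqrt_sq hd0.le]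
    exact Real.sqrt_le_sqrt (by nlinarith [ht.2])
  have hit : ∀ k : ℕ, ∀ t ∈ Ioc s t1, LipB ρ t ((4 + n * d * (1 / 2) ^ k) / Real.sqrt (t - s)) := by
    intro k
    induction k with
    | zero =>
      intro t ht
      obtain ⟨q1, q2⟩ := hsq t ht
      refine (hb t (Ioc_subset_Icc_self ht)).mono ?_
      rw [le_div_iff₀ q1, pow_zero, mul_one]
      nlinarith
    | succ k ih =>
      intro t ht
      have := h.step hj hs hβ hC hd0 hd1 hd hs0 hst ht1 η0 (by linarith) ih (by positivity)
        ((hb s ⟨le_refl _, hst⟩).mono η2) t ht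
      refine this.mono ?_
      obtain ⟨q1, q2⟩ := hsq t ht
      set Λ := 4 + n * d * (1 / 2) ^ k with hΛ
      have hΛ0 : 0 ≤ Λ := by positivity
      have e1 : 4 + n * d * (1 / 2) ^ (k + 1) = 2 + Λ / 2 := by rw [hΛ, pow_succ]; ring
      rw [e1, add_div]
      have g1 : 2 / Real.sqrt (t - s + η) ≤ 2 / Real.sqrt (t - s) :=
        div_le_div_of_nonneg_left (by norm_num) q1 (Real.sqrt_le_sqrt (by linarith))
      have g2 : 8 * (6 * C * β * Λ) ≤ Λ / 2 / Real.sqrt (t - s) := by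
        rw [le_div_iff₀ q1]
        have : 6 * C * β * Real.sqrt (t - s) ≤ 1 / 32 :=
          (mul_le_mul_of_nonneg_left q2 (by positivity)).trans hd
        nlinarith
      linarith
  intro t ht x hx y hy hyx
  have hlim : Filter.Tendsto (fun k : ℕ => (4 + n * d * (1 / 2 : ℝ) ^ k) / Real.sqrt (t - s) * (x - y))
      Filter.atTop (nhds ((4 + n * d * 0) / Real.sqrt (t - s) * (x - y))) := by
    have := tendsto_pow_atTop_nhds_zero_of_lt_one (r := (1 / 2 : ℝ)) (by norm_num) (by norm_num)
    exact (((this.const_mul _).const_add _).div_const _).mul_const _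
  rw [mul_zero, add_zero] at hlim
  exact ge_of_tendsto' hlim (fun k => hit k t ht x hx y hy hyx)

def PL (ρ : ℝ → ℝ → ℝ) (t : ℝ) : Prop := ∃ n : ℕ, ∀ᶠ t' in nhds t, LipB ρ t' n

lemma PL_open (ρ : ℝ → ℝ → ℝ) : IsOpen {t | PL ρ t} := by
  rw [isOpen_iff_mem_nhds]
  rintro t ⟨n, hn⟩
  filter_upwards [eventually_eventually_nhds.2 hn] with t' ht'
  exact ⟨n, ht'⟩

lemma PL_compact {a b : ℝ} (h : ∀ t ∈ Icc a b, PL ρ t) : ∃ n : ℕ, ∀ t ∈ Icc a b, LipB ρ t n := by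
  refine (isCompact_Icc (a := a) (b := b)).induction_on
    (p := fun S => ∃ n : ℕ, ∀ t ∈ S, LipB ρ t n) ⟨0, by simp⟩ ?_ ?_ ?_
  · rintro S S' hSS ⟨n, hn⟩
    exact ⟨n, fun t ht => hn t (hSS ht)⟩
  · rintro S S' ⟨n, hn⟩ ⟨m, hm⟩
    refine ⟨max n m, ?_⟩
    rintro t (ht | ht)
    · exact (hn t ht).mono (by exact_mod_cast le_max_left n m)
    · exact (hm t ht).mono (by exact_mod_cast le_max_right n m)
  · intro t ht
    obtain ⟨n, hn⟩ := h t ht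
    exact ⟨{t' | LipB ρ t' n}, nhdsWithin_le_nhds hn, n, fun t' ht' => ht'⟩

theorem ClassicalSol.reg2 (h : ClassicalSol j β ρm ρp T ρ) (hj : ContDiff ℝ 1 j)
    (hs : ∀ u : ℝ, 1 < |u| → j u = 0) (hβ : 0 ≤ β) {C : ℝ} (hC : ∀ x, |deriv j x| ≤ C)
    {d : ℝ} (hd0 : 0 < d) (hd1 : d ≤ 1) (hd : 6 * C * β * d ≤ 1 / 32)
    {s t1 : ℝ} (hs0 : 0 ≤ s) (ht1 : t1 < T) (hsm : t1 - s ≤ d ^ 2 / 2)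
    (hb : ∀ t ∈ Ioc s t1, PL ρ t) :
    ∀ t ∈ Ioc s t1, LipB ρ t (4 / Real.sqrt (t - s)) := by
  intro t ht x hx y hy hyx
  have hp : 0 < Real.sqrt (t - s) := Real.sqrt_pos.2 (by linarith [ht.1])
  have hlim : Filter.Tendsto (fun s' => 4 / Real.sqrt (t - s') * (x - y)) (nhdsWithin s (Ioi s))
      (nhds (4 / Real.sqrt (t - s) * (x - y))) := by
    have : ContinuousAt (fun s' => 4 / Real.sqrt (t - s') * (x - y)) s := by
      have := hp.ne'
      fun_prop (disch := assumption)
    exact this.tendsto.mono_left nhdsWithin_le_nhds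
  refine ge_of_tendsto hlim ?_
  filter_upwards [Ioo_mem_nhdsGT ht.1] with s' hs'
  obtain ⟨n, hn⟩ := PL_compact (a := s') (b := t) (fun u hu => hb u ⟨hs'.1.trans_le hu.1, hu.2.trans ht.2⟩)
  exact h.reg1 hj hs hβ hC hd0 hd1 hd (hs0.trans hs'.1.le) hs'.2.le (ht.2.trans_lt ht1)
    (by linarith [hs'.1, ht.2]) hn t ⟨hs'.2, le_refl _⟩ x hx y hy hyx

theorem ClassicalSol.reg3 (h : ClassicalSol j β ρm ρp T ρ) (hj : ContDiff ℝ 1 j)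
    (hs : ∀ u : ℝ, 1 < |u| → j u = 0) (hβ : 0 ≤ β) {C : ℝ} (hC : ∀ x, |deriv j x| ≤ C)
    {d : ℝ} (hd0 : 0 < d) (hd1 : d ≤ 1) (hd : 6 * C * β * d ≤ 1 / 32)
    {s t1 n : ℝ} (hs0 : 0 ≤ s) (hst : s ≤ t1) (ht1 : t1 < T) (hsm : t1 - s ≤ d ^ 2 / 2)
    (hb : ∀ t ∈ Ioc s t1, PL ρ t) (hn : LipB ρ s n) :
    ∀ t ∈ Ioc s t1, LipB ρ t (2 * (2 / d + n + 1) + 8 * (6 * C * β * 4)) := by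
  intro t ht
  obtain ⟨η, η0, η1, η2, η3⟩ := exists_eta hd0 hn.nonneg
  have := h.step hj hs hβ hC hd0 hd1 hd hs0 hst ht1 η0 (by linarith)
    (h.reg2 hj hs hβ hC hd0 hd1 hd hs0 ht1 hsm hb) (by norm_num) (hn.mono η2) t ht
  refine this.mono ?_
  have g1 : 2 / Real.sqrt (t - s + η) ≤ 2 / Real.sqrt η :=
    div_le_div_of_nonneg_left (by norm_num) (Real.sqrt_pos.2 η0)
      (Real.sqrt_le_sqrt (by linarith [ht.1]))
  have g2 : 2 / Real.sqrt η = 2 * (1 / Real.sqrt η) := by ring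
  linarith

lemma ClassicalSol.contt (h : ClassicalSol j β ρm ρp T ρ) {x : ℝ} (hx : x ∈ Icc (-1:ℝ) 1) :
    ContinuousOn (fun t => ρ t x) (Icc 0 T) :=
  h.cont.comp (f := fun t => (t, x)) (by fun_prop) (fun t ht => ⟨ht, hx⟩)

theorem ClassicalSol.allPL (h : ClassicalSol j β ρm ρp T ρ) (hj : ContDiff ℝ 1 j)
    (hs : ∀ u : ℝ, 1 < |u| → j u = 0) (hβ : 0 ≤ β) {C : ℝ} (hC : ∀ x, |deriv j x| ≤ C)
    {d : ℝ} (hd0 : 0 < d) (hd1 : d ≤ 1) (hd : 6 * C * β * d ≤ 1 / 32) :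
    ∀ t ∈ Ioo 0 T, PL ρ t := by
  by_contra hcon
  push Not at hcon
  let F : Set ℝ := Ioo 0 T ∩ {t | PL ρ t}ᶜ
  have hFne : Nonempty F := by
    obtain ⟨t, ht, ht'⟩ := hcon
    exact ⟨⟨t, ht, ht'⟩⟩
  have hlc : IsLocallyClosed F := ⟨Ioo 0 T, {t | PL ρ t}ᶜ, isOpen_Ioo, (PL_open ρ).isClosed_compl, rfl⟩
  have : LocallyCompactSpace F := hlc.locallyCompactSpace
  have hclosed : ∀ n : ℕ, IsClosed {t : F | LipB ρ t n} := by
    intro n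
    have : {t : F | LipB ρ t n} = ⋂ x ∈ Icc (-1:ℝ) 1, ⋂ y ∈ Icc (-1:ℝ) 1, ⋂ (_ : y ≤ x),
        {t : F | |ρ t x - ρ t y| ≤ n * (x - y)} := by
      ext t
      simp only [LipB, mem_iInter, Set.mem_ofPred_eq]
    rw [this]
    refine isClosed_biInter fun x hx => isClosed_biInter fun y hy => isClosed_iInter fun _ => ?_
    have hcx : ∀ z ∈ Icc (-1:ℝ) 1, Continuous (fun t : F => ρ t z) := fun z hz =>
      (h.contt hz).comp_continuous continuous_subtype_val (fun t => Ioo_subset_Icc_self t.2.1)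
    exact isClosed_le ((hcx x hx).sub (hcx y hy)).abs continuous_const
  have hcover : ⋃ n : ℕ, {t : F | LipB ρ t n} = univ := by
    rw [eq_univ_iff_forall]
    intro t
    obtain ⟨n, hn⟩ := h.exists_lip t.2.1
    exact mem_iUnion.2 ⟨n, hn⟩
  obtain ⟨n, t0, ht0⟩ := nonempty_interior_of_iUnion_of_closed hclosed hcover
  rw [mem_interior_iff_mem_nhds, Metric.mem_nhds_iff] at ht0
  obtain ⟨ε, hε, hball⟩ := ht0
  obtain ⟨t0, ht0F⟩ := t0
  have hA : ∀ t ∈ F, |t - t0| < ε → LipB ρ t n := by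
    intro t ht htt
    exact hball (show (⟨t, ht⟩ : F) ∈ Metric.ball ⟨t0, ht0F⟩ ε by
      rw [Metric.mem_ball, Subtype.dist_eq, Real.dist_eq]; exact htt)
  apply ht0F.2
  have hT0 := ht0F.1
  obtain ⟨e, he0, he⟩ : ∃ e : ℝ, 0 < e ∧ e < ε ∧ e < t0 ∧ e < T - t0 ∧ 2 * e ≤ d ^ 2 / 2 := by
    have : 0 < min (min ε t0) (min (T - t0) (d ^ 2 / 2)) := by
      refine lt_min (lt_min hε hT0.1) (lt_min (by linarith [hT0.2]) (by positivity))
    refine ⟨min (min ε t0) (min (T - t0) (d ^ 2 / 2)) / 2, by linarith, ?_⟩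
    have m1 : min (min ε t0) (min (T - t0) (d ^ 2 / 2)) ≤ ε := (min_le_left _ _).trans (min_le_left _ _)
    have m2 : min (min ε t0) (min (T - t0) (d ^ 2 / 2)) ≤ t0 := (min_le_left _ _).trans (min_le_right _ _)
    have m3 : min (min ε t0) (min (T - t0) (d ^ 2 / 2)) ≤ T - t0 := (min_le_right _ _).trans (min_le_left _ _)
    have m4 : min (min ε t0) (min (T - t0) (d ^ 2 / 2)) ≤ d ^ 2 / 2 := (min_le_right _ _).trans (min_le_right _ _)
    refine ⟨by linarith, by linarith, by linarith, by linarith⟩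
  obtain ⟨e1, e2, e3, e4⟩ := he
  have hC0 : 0 ≤ C := (abs_nonneg _).trans (hC 0)
  set N : ℝ := n + 4 / Real.sqrt (e / 2) + (2 * (2 / d + n + 1) + 8 * (6 * C * β * 4)) with hN
  have w1 : 0 ≤ 4 / Real.sqrt (e / 2) := by positivity
  have w2 : 0 ≤ 2 * (2 / d + n + 1) + 8 * (6 * C * β * 4) := by positivity
  have w3 : (0:ℝ) ≤ n := by positivity
  obtain ⟨N', hN'⟩ := exists_nat_ge N
  refine ⟨N', ?_⟩
  filter_upwards [Ioo_mem_nhds (show t0 - e / 2 < t0 by linarith) (show t0 < t0 + e / 2 by linarith)]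
    with t ht
  have htT : t < T := by linarith [ht.2]
  refine LipB.mono (l := N) ?_ hN'
  by_cases htF : t ∈ F
  · refine (hA t htF ?_).mono (by linarith)
    rw [abs_lt]; constructor <;> linarith [ht.1, ht.2]
  let S : Set ℝ := Icc (t0 - e) t ∩ {t | PL ρ t}ᶜ
  have hScomp : IsCompact S := isCompact_Icc.inter_right (PL_open ρ).isClosed_compl
  have hSF : S ⊆ F := fun u hu => ⟨⟨by linarith [hu.1.1], by linarith [hu.1.2]⟩, hu.2⟩
  rcases S.eq_empty_or_nonempty with hS | hS
  · have := h.reg2 hj hs hβ hC hd0 hd1 hd (s := t0 - e) (t1 := t) (by linarith) htT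
      (by linarith [ht.2]) (by
        intro u hu
        by_contra hnu
        have : u ∈ S := ⟨Ioc_subset_Icc_self hu, hnu⟩
        rw [hS] at this
        exact this) t ⟨by linarith [ht.1], le_refl _⟩
    refine this.mono ?_
    have : 4 / Real.sqrt (t - (t0 - e)) ≤ 4 / Real.sqrt (e / 2) :=
      div_le_div_of_nonneg_left (by norm_num) (Real.sqrt_pos.2 (by linarith))
        (Real.sqrt_le_sqrt (by linarith [ht.1]))
    linarith
  · obtain ⟨α, hαS, hα⟩ := hScomp.exists_isGreatest hS
    have hαt : α < t := by
      rcases hαS.1.2.lt_or_eq with h | h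
      · exact h
      · exact absurd (h ▸ hSF hαS) htF
    have hαl := hαS.1.1
    have := h.reg3 hj hs hβ hC hd0 hd1 hd (s := α) (t1 := t) (n := n) (by linarith) hαt.le htT
      (by linarith [ht.2]) (by
        intro u hu
        by_contra hnu
        have : u ∈ S := ⟨⟨by linarith [hu.1], hu.2⟩, hnu⟩
        have := hα this
        linarith [hu.1])
      (hA α (hSF hαS) (by rw [abs_lt]; constructor <;> linarith [ht.2])) t ⟨hαt, le_refl _⟩
    refine this.mono ?_
    linarith

end reg

section uniq
variable {j : ℝ → ℝ} {β ρm ρp T : ℝ} {ρ₁ ρ₂ : ℝ → ℝ → ℝ}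

lemma f_bound {p q A C b1 b2 g D1 D2 r β : ℝ} (hp : p ∈ Icc (0:ℝ) 1) (hq : q ∈ Icc (0:ℝ) 1)
    (hβ : 0 ≤ β) (hC : 0 ≤ C) (hA : 0 ≤ A) (hpq : |p - q| ≤ A) (hb1 : |b1| ≤ 6 * C * 1)
    (hb : |b1 - b2| ≤ 6 * C * A) (hg : |g| ≤ 4 / r) (hD1 : |D1| ≤ 6 * C * (4 / r))
    (hD : |D1 - D2| ≤ 6 * C * (A / r)) :
    |-(β * (((1 - 2 * p) * b1 - (1 - 2 * q) * b2) * g + (chi p - chi q) * D1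
      + chi q * (D1 - D2)))| ≤ 17 * (6 * C * β) * A / r := by
  have e1 : |(1 - 2 * p) * b1 - (1 - 2 * q) * b2| ≤ 18 * C * A := by
    have : (1 - 2 * p) * b1 - (1 - 2 * q) * b2 = -2 * ((p - q) * b1) + (1 - 2 * q) * (b1 - b2) := by
      ring
    rw [this]
    have k1 : |(p - q) * b1| ≤ A * (6 * C * 1) := by
      rw [abs_mul]; exact mul_le_mul hpq hb1 (abs_nonneg _) hA
    have k2 : |(1 - 2 * q) * (b1 - b2)| ≤ 1 * (6 * C * A) := by
      rw [abs_mul]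
      refine mul_le_mul ?_ hb (abs_nonneg _) zero_le_one
      rw [abs_le]; constructor <;> linarith [hq.1, hq.2]
    rw [abs_le] at *
    constructor <;> linarith [k1.1, k1.2, k2.1, k2.2]
  have e2 : |chi p - chi q| ≤ A := by
    have : chi p - chi q = (p - q) * (1 - p - q) := by unfold chi; ring
    rw [this, abs_mul]
    have : |1 - p - q| ≤ 1 := by
      rw [abs_le]; constructor <;> linarith [hq.1, hq.2, hp.1, hp.2]
    nlinarith [abs_nonneg (p - q), abs_nonneg (1 - p - q)]
  have e3 := chi_bound hq
  have m1 : |((1 - 2 * p) * b1 - (1 - 2 * q) * b2) * g| ≤ 18 * C * A * (4 / r) := by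
    rw [abs_mul]; exact mul_le_mul e1 hg (abs_nonneg _) (by positivity)
  have m2 : |(chi p - chi q) * D1| ≤ A * (6 * C * (4 / r)) := by
    rw [abs_mul]; exact mul_le_mul e2 hD1 (abs_nonneg _) hA
  have m3 : |chi q * (D1 - D2)| ≤ 1 * (6 * C * (A / r)) := by
    rw [abs_mul, abs_of_nonneg e3.1]; exact mul_le_mul e3.2 hD (abs_nonneg _) zero_le_one
  rw [abs_neg, abs_mul, abs_of_nonneg hβ]
  have m4 := (abs_add_three (((1 - 2 * p) * b1 - (1 - 2 * q) * b2) * g) ((chi p - chi q) * D1)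
    (chi q * (D1 - D2))).trans (add_le_add (add_le_add m1 m2) m3)
  refine (mul_le_mul_of_nonneg_left m4 hβ).trans (le_of_eq ?_)
  ring

theorem uniq_contract (h₁ : ClassicalSol j β ρm ρp T ρ₁) (h₂ : ClassicalSol j β ρm ρp T ρ₂)
    (hj : ContDiff ℝ 1 j)
    (hs : ∀ u : ℝ, 1 < |u| → j u = 0) (hβ : 0 ≤ β) {C : ℝ} (hC : ∀ x, |deriv j x| ≤ C)
    {d : ℝ} (hd0 : 0 < d) (hd1 : d ≤ 1) (hd : 6 * C * β * d ≤ 1 / 272)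
    {s t1 A : ℝ} (hs0 : 0 ≤ s) (hst : s ≤ t1) (ht1 : t1 < T) (hsm : t1 - s ≤ d ^ 2 / 2)
    (hin : ∀ x ∈ Icc (-1:ℝ) 1, ρ₁ s x = ρ₂ s x)
    (hL1 : ∀ t ∈ Ioc s t1, LipB ρ₁ t (4 / Real.sqrt (t - s)))
    (hL2 : ∀ t ∈ Ioc s t1, LipB ρ₂ t (4 / Real.sqrt (t - s)))
    (hA0 : 0 ≤ A)
    (hA : ∀ t ∈ Ioc s t1, LipB (fun t x => ρ₁ t x - ρ₂ t x) t (A / Real.sqrt (t - s)) ∧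
      ∀ x ∈ Icc (-1:ℝ) 1, |ρ₁ t x - ρ₂ t x| ≤ A) :
    ∀ t ∈ Ioc s t1, LipB (fun t x => ρ₁ t x - ρ₂ t x) t (A / 2 / Real.sqrt (t - s)) ∧
      ∀ x ∈ Icc (-1:ℝ) 1, |ρ₁ t x - ρ₂ t x| ≤ A / 2 := by
  have hC0 : 0 ≤ C := (abs_nonneg _).trans (hC 0)
  have hsq : Real.sqrt (t1 - s + d ^ 2 / 2) ≤ d := by
    rw [← Real.sqrt_sq hd0.le]; exact Real.sqrt_le_sqrt (by rw [Real.sqrt_sq hd0.le]; linarith)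
  have hsub : Icc s t1 ⊆ Icc 0 T := fun t ht => ⟨hs0.trans ht.1, ht.2.trans ht1.le⟩
  have hsub' : Ioc s t1 ⊆ Ioo 0 T := fun t ht => ⟨hs0.trans_lt ht.1, ht.2.trans_lt ht1⟩
  have hs' : s ∈ Icc s t1 := ⟨le_refl _, hst⟩
  have c0 : 0 ≤ 6 * C * β := by positivity
  have key := lip_est_abs (fun t x => ρ₁ t x - ρ₂ t x)
    (fun t x => deriv (fun τ => ρ₁ τ x) t - deriv (fun τ => ρ₂ τ x) t)
    (fun t x => deriv (ρ₁ t) x - deriv (ρ₂ t) x)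
    (fun t x => deriv (deriv (ρ₁ t)) x - deriv (deriv (ρ₂ t)) x)
    (fun t x => β * (1 - 2 * ρ₁ t x) * bfun j (ρ₁ t) x)
    (fun t x => -(β * (((1 - 2 * ρ₁ t x) * bfun j (ρ₁ t) x - (1 - 2 * ρ₂ t x) * bfun j (ρ₂ t) x)
        * deriv (ρ₂ t) x + (chi (ρ₁ t x) - chi (ρ₂ t x)) * bder j (deriv (ρ₁ t)) x
      + chi (ρ₂ t x) * (bder j (deriv (ρ₁ t)) x - bder j (deriv (ρ₂ t)) x))))
    (6 * C * β) s t1 0 (d ^ 2 / 2) (17 * (6 * C * β) * A)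
    ((h₁.cont.sub h₂.cont).mono (prod_mono hsub (le_refl _)))
    (fun t ht => by
      simp only [h₁.bdry_left t (hsub ht), h₁.bdry_left s (hsub hs'), h₂.bdry_left t (hsub ht),
        h₂.bdry_left s (hsub hs')])
    (fun t ht => by
      simp only [h₁.bdry_right t (hsub ht), h₁.bdry_right s (hsub hs'), h₂.bdry_right t (hsub ht),
        h₂.bdry_right s (hsub hs')])
    (fun t ht x hx => (h₁.dt (hsub' ht) hx).sub (h₂.dt (hsub' ht) hx))
    (fun t ht x hx => (h₁.dx (hsub' ht) hx).sub (h₂.dx (hsub' ht) hx))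
    (fun t ht x hx => (h₁.dxx (hsub' ht) hx).sub (h₂.dxx (hsub' ht) hx))
    (fun t ht x hx => h₁.B_bound hβ hC (hsub (Ioc_subset_Icc_self ht)) hx)
    (fun t ht x hx => by
      have ht' := hsub (Ioc_subset_Icc_self ht)
      refine f_bound (h₁.range t ht' x (Ioo_subset_Icc_self hx))
        (h₂.range t ht' x (Ioo_subset_Icc_self hx)) hβ hC0 hA0
        ((hA t ht).2 x (Ioo_subset_Icc_self hx)) ?_ ?_ ?_ ?_ ?_
      · exact bfun_bound hC (fun y hy => by
          have := h₁.range t ht' y (Ioo_subset_Icc_self hy)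
          rw [abs_le]; constructor <;> linarith [this.1, this.2]) x
      · rw [bfun_sub hj (h₁.intg ht') (h₂.intg ht')]
        exact bfun_bound hC (fun y hy => (hA t ht).2 y (Ioo_subset_Icc_self hy)) x
      · exact (hL2 t ht).deriv_le hx (h₂.dx (hsub' ht) hx)
      · exact bder_bound hC (fun y hy => (hL1 t ht).deriv_le hy (h₁.dx (hsub' ht) hy)) x
      · rw [bder_sub hj (h₁.dintg (hsub' ht)) (h₂.dintg (hsub' ht))]
        exact bder_bound hC (fun y hy => (hA t ht).1.deriv_le hy
          ((h₁.dx (hsub' ht) hy).sub (h₂.dx (hsub' ht) hy))) x)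
    (fun t ht x hx => by
      simp only [h₁.pde' hj hs hC (hsub' ht) hx, h₂.pde' hj hs hC (hsub' ht) hx]
      ring)
    hst c0 le_rfl (by positivity) (by positivity) (hsq.trans hd1)
    ((mul_le_mul_of_nonneg_left hsq c0).trans (hd.trans (by norm_num)))
    (Or.inl rfl) (by
      intro x hx y hy hyx
      simp [hin x hx, hin y hy])
  intro t ht
  obtain ⟨k1, k2⟩ := key t ht
  have q1 : 0 < Real.sqrt (t - s) := Real.sqrt_pos.2 (by linarith [ht.1])
  have q2 : Real.sqrt (t - s) ≤ d := by
    refine le_trans (Real.sqrt_le_sqrt ?_) hsq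
    have := ht.2
    have : 0 < d ^ 2 / 2 := by positivity
    linarith
  have q3 : 8 * (17 * (6 * C * β) * A) * Real.sqrt (t - s) ≤ A / 2 := by
    have : 6 * C * β * Real.sqrt (t - s) ≤ 1 / 272 :=
      (mul_le_mul_of_nonneg_left q2 c0).trans hd
    nlinarith
  constructor
  · refine k1.mono ?_
    rw [le_div_iff₀ q1]
    simpa using q3
  · intro x hx
    have := k2 rfl x hx (-1) (by simp) hx.1
    have ht' := hsub (Ioc_subset_Icc_self ht)
    simp only [h₁.bdry_left t ht', h₂.bdry_left t ht', sub_self, sub_zero] at this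
    exact this.trans q3

theorem uniq_step (h₁ : ClassicalSol j β ρm ρp T ρ₁) (h₂ : ClassicalSol j β ρm ρp T ρ₂)
    (hj : ContDiff ℝ 1 j)
    (hs : ∀ u : ℝ, 1 < |u| → j u = 0) (hβ : 0 ≤ β) {C : ℝ} (hC : ∀ x, |deriv j x| ≤ C)
    {d : ℝ} (hd0 : 0 < d) (hd1 : d ≤ 1) (hd : 6 * C * β * d ≤ 1 / 272)
    {s t1 : ℝ} (hs0 : 0 ≤ s) (hst : s ≤ t1) (ht1 : t1 < T) (hsm : t1 - s ≤ d ^ 2 / 2)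
    (hin : ∀ x ∈ Icc (-1:ℝ) 1, ρ₁ s x = ρ₂ s x) :
    ∀ t ∈ Ioc s t1, ∀ x ∈ Icc (-1:ℝ) 1, ρ₁ t x = ρ₂ t x := by
  have hd' : 6 * C * β * d ≤ 1 / 32 := hd.trans (by norm_num)
  have hsub' : Ioc s t1 ⊆ Ioo 0 T := fun t ht => ⟨hs0.trans_lt ht.1, ht.2.trans_lt ht1⟩
  have hL1 := h₁.reg2 hj hs hβ hC hd0 hd1 hd' hs0 ht1 hsm
    (fun t ht => h₁.allPL hj hs hβ hC hd0 hd1 hd' t (hsub' ht))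
  have hL2 := h₂.reg2 hj hs hβ hC hd0 hd1 hd' hs0 ht1 hsm
    (fun t ht => h₂.allPL hj hs hβ hC hd0 hd1 hd' t (hsub' ht))
  have hit : ∀ k : ℕ, ∀ t ∈ Ioc s t1,
      LipB (fun t x => ρ₁ t x - ρ₂ t x) t (8 * (1 / 2) ^ k / Real.sqrt (t - s)) ∧
      ∀ x ∈ Icc (-1:ℝ) 1, |ρ₁ t x - ρ₂ t x| ≤ 8 * (1 / 2) ^ k := by
    intro k
    induction k with
    | zero =>
      intro t ht
      have ht' := Ioo_subset_Icc_self (hsub' ht)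
      constructor
      · intro x hx y hy hyx
        have a1 := abs_le.1 (hL1 t ht x hx y hy hyx)
        have a2 := abs_le.1 (hL2 t ht x hx y hy hyx)
        have e : 8 * (1 / 2 : ℝ) ^ 0 / Real.sqrt (t - s) * (x - y) =
          2 * (4 / Real.sqrt (t - s) * (x - y)) := by ring
        rw [e, abs_le]
        constructor <;> linarith [a1.1, a1.2, a2.1, a2.2]
      · intro x hx
        have r1 := h₁.range t ht' x hx
        have r2 := h₂.range t ht' x hx
        rw [abs_le]; constructor <;> linarith [r1.1, r1.2, r2.1, r2.2]
    | succ k ih =>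
      have := uniq_contract h₁ h₂ hj hs hβ hC hd0 hd1 hd hs0 hst ht1 hsm hin hL1 hL2
        (by positivity) ih
      have e : 8 * (1 / 2 : ℝ) ^ (k + 1) = 8 * (1 / 2) ^ k / 2 := by rw [pow_succ]; ring
      rw [e]; exact this
  intro t ht x hx
  have hlim : Filter.Tendsto (fun k : ℕ => 8 * (1 / 2 : ℝ) ^ k) Filter.atTop (nhds (8 * 0)) :=
    (tendsto_pow_atTop_nhds_zero_of_lt_one (r := (1 / 2 : ℝ)) (by norm_num) (by norm_num)).const_mul _
  have := ge_of_tendsto' hlim (fun k => (hit k t ht).2 x hx)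
  rw [mul_zero] at this
  exact sub_eq_zero.1 (abs_eq_zero.1 (le_antisymm this (abs_nonneg _)))

theorem uniq_all (h₁ : ClassicalSol j β ρm ρp T ρ₁) (h₂ : ClassicalSol j β ρm ρp T ρ₂)
    (hj : ContDiff ℝ 1 j)
    (hs : ∀ u : ℝ, 1 < |u| → j u = 0) (hβ : 0 ≤ β) (hT : 0 < T)
    (hin : ∀ x ∈ Icc (-1:ℝ) 1, ρ₁ 0 x = ρ₂ 0 x) :
    ∀ t ∈ Icc 0 T, ∀ x ∈ Icc (-1:ℝ) 1, ρ₁ t x = ρ₂ t x := by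
  obtain ⟨C, hC0, hC⟩ := deriv_j_bound hj hs
  have hc0 : 0 ≤ 6 * C * β := by positivity
  set c := 6 * C * β with hc
  obtain ⟨d, hd0, hd1, hd⟩ : ∃ d : ℝ, 0 < d ∧ d ≤ 1 ∧ c * d ≤ 1 / 272 := by
    refine ⟨1 / (272 * (1 + c)), by positivity, ?_, ?_⟩
    · rw [div_le_one (by positivity)]; linarith
    · rw [mul_one_div, div_le_div_iff₀ (by positivity) (by norm_num)]; linarith
  have hind : ∀ k : ℕ, ∀ t, 0 ≤ t → t < T → t ≤ k * (d ^ 2 / 2) →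
      ∀ x ∈ Icc (-1:ℝ) 1, ρ₁ t x = ρ₂ t x := by
    intro k
    induction k with
    | zero =>
      intro t h0 _ hk
      have : t = 0 := by
        apply le_antisymm _ h0
        simpa using hk
      rw [this]; exact hin
    | succ k ih =>
      intro t h0 htT hk
      push_cast at hk
      rcases le_or_gt t (k * (d ^ 2 / 2)) with hle | hlt
      · exact ih t h0 htT hle
      · have p : 0 ≤ k * (d ^ 2 / 2) := by positivity
        exact uniq_step h₁ h₂ hj hs hβ hC hd0 hd1 hd p hlt.le htT (by linarith)
          (ih _ p (hlt.trans htT) le_rfl) t ⟨hlt, le_rfl⟩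
  have hlt : ∀ t ∈ Ico 0 T, ∀ x ∈ Icc (-1:ℝ) 1, ρ₁ t x = ρ₂ t x := by
    intro t ht
    obtain ⟨k, hk⟩ := exists_nat_ge (t / (d ^ 2 / 2))
    rw [div_le_iff₀ (by positivity)] at hk
    exact hind k t ht.1 ht.2 hk
  intro t ht x hx
  have hcl : EqOn (fun t => ρ₁ t x) (fun t => ρ₂ t x) (Icc 0 T) := by
    refine EqOn.of_subset_closure (s := Ico 0 T) (fun t ht => hlt t ht x hx) (h₁.contt hx)
      (h₂.contt hx) Ico_subset_Icc_self ?_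
    rw [closure_Ico hT.ne]
  exact hcl ht

end uniq

/-- for every `β ≥ 0`, classical solutions of the nonlocal boundary value
problem with the same boundary values and the same initial datum coincide. -/
theorem classical_solution_uniqueness
    (j : ℝ → ℝ)
    (hj_smooth : ContDiff ℝ 1 j)
    (hj_nonneg : ∀ u, 0 ≤ j u)
    (hj_even : ∀ u, j (-u) = j u)
    (hj_supp : ∀ u : ℝ, 1 < |u| → j u = 0)
    (hj_int : (∫ u : ℝ, j u) = 1)
    (ρm ρp : ℝ) (hρm : ρm ∈ Ioo (0:ℝ) 1) (hρp : ρp ∈ Ioo (0:ℝ) 1)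
    (β : ℝ) (hβ : 0 ≤ β) (T : ℝ) (hT : 0 < T)
    (ρ₁ ρ₂ : ℝ → ℝ → ℝ)
    (h₁ : ClassicalSol j β ρm ρp T ρ₁) (h₂ : ClassicalSol j β ρm ρp T ρ₂)
    (hinit : ∀ u ∈ Icc (-1:ℝ) 1, ρ₁ 0 u = ρ₂ 0 u) :
    ∀ t ∈ Icc (0:ℝ) T, ∀ u ∈ Icc (-1:ℝ) 1, ρ₁ t u = ρ₂ t u := by
  exact uniq_all h₁ h₂ hj_smooth hj_supp hβ hT hinit

end
end
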